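/- arXiv:1909.10683 — 5 statements merged into one kernel-verified Lean document; each statement's English description precedes it below -/
import Mathlib

section
/- For every real ε ∈ (0,1) there exist a real R > 0 and a constant c > 0 (both depending only on ε) and an integer n₀ such that for every n ≥ n₀ there is a binary code C ⊆ {0,1}ⁿ with |C| ≥ 2^(R·n) with the following property: for all reals γ, δ ≥ 0 with γ + 2δ ≤ 1 − ε, the code C is list-decodable from ⌊δn⌋ deletions and ⌊γn⌋ insertions with list size at most c · 2^(2^(2^(log* n))). -/
/-- The length of a longest common subsequence of `x` and `y`. -/
noncomputable def LCS {α : Type*} (x y : List α) : ℕ :=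
  sSup {n | ∃ u : List α, u.Sublist x ∧ u.Sublist y ∧ u.length = n}

/-- `C` is list-decodable from `D` deletions and `I` insertions with list size `L`. -/
def listDecodable {α : Type*} (C : Finset (List α)) (D I : ℕ) (L : ℝ) : Prop :=
  ∀ y : List α,
    (({x | x ∈ C ∧ ∃ u : List α, u.Sublist x ∧ u.Sublist y ∧
        x.length - u.length ≤ D ∧ y.length - u.length ≤ I} : Set (List α)).ncard : ℝ) ≤ L

/-- `log* n`: the least `k` such that the `k`-fold iterate of `m ↦ ⌈log₂ m⌉` sends `n` to
a value `≤ 1`. -/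
noncomputable def logStar (n : ℕ) : ℕ := sInf {k | (Nat.clog 2)^[k] n ≤ 1}

namespace InsDel

/-! ### Basic facts on LCS -/

theorem LCS_bdd {α : Type*} (x y : List α) :
    BddAbove {n | ∃ u : List α, u.Sublist x ∧ u.Sublist y ∧ u.length = n} := by
  refine ⟨x.length, ?_⟩
  rintro n ⟨u, h1, -, rfl⟩
  exact h1.length_le

theorem le_LCS {α : Type*} {x y u : List α} (h1 : u.Sublist x) (h2 : u.Sublist y) :
    u.length ≤ LCS x y :=
  le_csSup (LCS_bdd x y) ⟨u, h1, h2, rfl⟩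

theorem LCS_spec {α : Type*} (x y : List α) :
    ∃ u : List α, u.Sublist x ∧ u.Sublist y ∧ u.length = LCS x y := by
  have := Nat.sSup_mem (s := {n | ∃ u : List α, u.Sublist x ∧ u.Sublist y ∧ u.length = n})
    ⟨0, [], by simp, by simp, rfl⟩ (LCS_bdd x y)
  exact this

theorem LCS_le_left {α : Type*} (x y : List α) : LCS x y ≤ x.length := by
  obtain ⟨u, h1, h2, h3⟩ := LCS_spec x y
  rw [← h3]; exact h1.length_le

theorem LCS_le_right {α : Type*} (x y : List α) : LCS x y ≤ y.length := by
  obtain ⟨u, h1, h2, h3⟩ := LCS_spec x y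
  rw [← h3]; exact h2.length_le

/-! ### Averages over windows -/

/-- Average of `v` over the length-`w` window containing `i`. -/
noncomputable def avg (v : ℕ → ℝ) (w i : ℕ) : ℝ :=
  (∑ j ∈ Finset.range w, v (w * (i / w) + j)) / w

theorem sum_blocks (f : ℕ → ℝ) (w K : ℕ) :
    ∑ i ∈ Finset.range (w * K), f i
      = ∑ k ∈ Finset.range K, ∑ j ∈ Finset.range w, f (w * k + j) := by
  induction K with
  | zero => simp
  | succ K ih =>
    rw [Nat.mul_succ, Finset.sum_range_add, ih, Finset.sum_range_succ]

theorem sum_avg_mul (v F : ℕ → ℝ) (w K : ℕ) (hw : 0 < w) :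
    ∑ i ∈ Finset.range (w * K), avg v w i * F (i / w)
      = ∑ i ∈ Finset.range (w * K), v i * F (i / w) := by
  rw [sum_blocks, sum_blocks]
  refine Finset.sum_congr rfl fun k _ => ?_
  have hdiv : ∀ j ∈ Finset.range w, (w * k + j) / w = k := by
    intro j hj
    rw [Nat.mul_add_div hw, Nat.div_eq_of_lt (Finset.mem_range.1 hj), add_zero]
  have h1 : ∀ j ∈ Finset.range w, avg v w (w * k + j) * F ((w * k + j) / w)
      = ((∑ j ∈ Finset.range w, v (w * k + j)) / w) * F k := by
    intro j hj
    rw [avg, hdiv j hj]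
  have h2 : ∀ j ∈ Finset.range w, v (w * k + j) * F ((w * k + j) / w)
      = v (w * k + j) * F k := by
    intro j hj
    rw [hdiv j hj]
  rw [Finset.sum_congr rfl h1, Finset.sum_congr rfl h2, Finset.sum_const,
    Finset.card_range, nsmul_eq_mul, ← Finset.sum_mul]
  have : (w : ℝ) ≠ 0 := by positivity
  field_simp

theorem avg_abs_le (v : ℕ → ℝ) (hv : ∀ i, |v i| ≤ 1) (w i : ℕ) : |avg v w i| ≤ 1 := by
  rw [avg, abs_div]
  have h : |∑ j ∈ Finset.range w, v (w * (i / w) + j)| ≤ w := by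
    refine (Finset.abs_sum_le_sum_abs _ _).trans ?_
    refine (Finset.sum_le_sum fun j _ => hv _).trans ?_
    simp
  rw [Nat.abs_cast]
  exact div_le_one_of_le₀ h (by positivity)

theorem avg_congr (v : ℕ → ℝ) (w i j : ℕ) (h : i / w = j / w) : avg v w i = avg v w j := by
  rw [avg, avg, h]

theorem pythagoras (v : ℕ → ℝ) (w d K : ℕ) (hw : 0 < w) (hd : 0 < d) :
    ∑ i ∈ Finset.range (w * d * K), (avg v w i - avg v (w * d) i) ^ 2
      = ∑ i ∈ Finset.range (w * d * K), avg v w i ^ 2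
        - ∑ i ∈ Finset.range (w * d * K), avg v (w * d) i ^ 2 := by
  have hF : ∀ i, avg v (w * d) i
      = (fun x => avg v (w * d) (x * w)) (i / w) := by
    intro i
    apply avg_congr
    rw [← Nat.div_div_eq_div_mul, ← Nat.div_div_eq_div_mul, Nat.mul_div_cancel _ hw]
  have hF2 : ∀ i, avg v (w * d) i
      = (fun x => avg v (w * d) (x * (w * d))) (i / (w * d)) := by
    intro i
    apply avg_congr
    rw [Nat.mul_div_cancel _ (Nat.mul_pos hw hd)]
  have e1 : ∑ i ∈ Finset.range (w * d * K), avg v w i * avg v (w * d) i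
      = ∑ i ∈ Finset.range (w * d * K), v i * avg v (w * d) i := by
    have := sum_avg_mul v (fun x => avg v (w * d) (x * w)) w (d * K) hw
    rw [← mul_assoc] at this
    simpa only [← hF] using this
  have e2 : ∑ i ∈ Finset.range (w * d * K), avg v (w * d) i * avg v (w * d) i
      = ∑ i ∈ Finset.range (w * d * K), v i * avg v (w * d) i := by
    have := sum_avg_mul v (fun x => avg v (w * d) (x * (w * d))) (w * d) K (Nat.mul_pos hw hd)
    simpa only [← hF2] using this
  have : ∀ i, (avg v w i - avg v (w * d) i) ^ 2 = avg v w i ^ 2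
      - 2 * (avg v w i * avg v (w * d) i) + avg v (w * d) i * avg v (w * d) i := fun i => by ring
  simp only [this, Finset.sum_add_distrib, Finset.sum_sub_distrib, ← Finset.mul_sum, e1, e2, pow_two]
  ring

theorem prefix_close (v : ℕ → ℝ) (hv : ∀ i, |v i| ≤ 1) (w j : ℕ) (hw : 0 < w) :
    |∑ i ∈ Finset.range j, (v i - avg v w i)| ≤ 2 * w := by
  have hj : j = w * (j / w) + j % w := (Nat.div_add_mod j w).symm
  have h0 : ∑ i ∈ Finset.range (w * (j / w)), (v i - avg v w i) = 0 := by
    have := sum_avg_mul v (fun _ => 1) w (j / w) hw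
    simp only [mul_one] at this
    rw [Finset.sum_sub_distrib, this, sub_self]
  rw [hj, Finset.sum_range_add, h0, zero_add]
  refine (Finset.abs_sum_le_sum_abs _ _).trans ?_
  have : ∀ i ∈ Finset.range (j % w),
      |v (w * (j / w) + i) - avg v w (w * (j / w) + i)| ≤ 2 := by
    intro i _
    refine (abs_sub _ _).trans ?_
    linarith [hv (w * (j / w) + i), avg_abs_le v hv w (w * (j / w) + i)]
  refine (Finset.sum_le_sum this).trans ?_
  rw [Finset.sum_const, Finset.card_range, nsmul_eq_mul]
  have : ((j % w : ℕ) : ℝ) ≤ w := by exact_mod_cast (Nat.mod_lt j hw).le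
  linarith

theorem interval_close (v : ℕ → ℝ) (hv : ∀ i, |v i| ≤ 1) (w a b : ℕ) (hw : 0 < w) (hab : a ≤ b) :
    |∑ i ∈ Finset.Ico a b, (v i - avg v w i)| ≤ 4 * w := by
  rw [Finset.sum_Ico_eq_sub _ hab]
  refine (abs_sub _ _).trans ?_
  linarith [prefix_close v hv w a hw, prefix_close v hv w b hw]

/-! ### Letters of a word as signs -/

/-- `false ↦ 1`, `true ↦ -1`, out of range `↦ 0`. -/
def sgn (y : List Bool) (i : ℕ) : ℝ :=
  match y[i]? with
  | some false => 1
  | some true => -1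
  | none => 0

theorem sgn_abs (y : List Bool) (i : ℕ) : |sgn y i| ≤ 1 := by
  unfold sgn
  split <;> simp

theorem count_eq (l : List Bool) (y pre post : List Bool) (hy : y = pre ++ (l ++ post)) :
    2 * (l.count false : ℝ)
      = l.length + ∑ i ∈ Finset.Ico pre.length (pre.length + l.length), sgn y i ∧
    2 * (l.count true : ℝ)
      = l.length - ∑ i ∈ Finset.Ico pre.length (pre.length + l.length), sgn y i := by
  induction l generalizing pre with
  | nil => simp
  | cons b l ih =>
    have h := ih (pre ++ [b]) (by simp [hy])
    have hs : sgn y pre.length = if b then -1 else 1 := by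
      unfold sgn
      rw [hy]
      cases b <;> simp
    have e : Finset.Ico (pre ++ [b]).length ((pre ++ [b]).length + l.length)
        = Finset.Ico (pre.length + 1) (pre.length + (b :: l).length) := by
      congr 1
      · simp
      · simp; ring
    rw [e] at h
    rw [Finset.sum_eq_sum_Ico_succ_bot (by simp), hs]
    cases b <;> simp at h ⊢ <;> constructor <;> linarith [h.1, h.2]

theorem sub_false {r : ℕ} {u l : List Bool} (h1 : u.Sublist (List.replicate r false))
    (h2 : u.Sublist l) : u.length ≤ l.count false := by
  obtain ⟨n, hn, rfl⟩ := List.sublist_replicate_iff.1 h1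
  have := h2.count_le false
  simpa using this

theorem sub_true {r : ℕ} {u l : List Bool} (h1 : u.Sublist (List.replicate r true))
    (h2 : u.Sublist l) : u.length ≤ l.count true := by
  obtain ⟨n, hn, rfl⟩ := List.sublist_replicate_iff.1 h1
  have := h2.count_le true
  simpa using this

/-! ### Local inequality -/

theorem local_ineq (A B r t t' d d' p : ℝ) (hr : 0 ≤ r) (ht : 0 ≤ t)
    (ht' : 0 ≤ t') (hd : 0 ≤ d) (hd' : 0 ≤ d') (hp0 : 0 ≤ p) (hp1 : p ≤ 1)
    (hAr : A ≤ r) (hBr : B ≤ r) (hA : A ≤ p * t + d) (hB : B ≤ (1 - p) * t' + d') :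
    3 * (A + B) ≤ 2 * r + t + t' + 3 * d + 3 * d' := by
  have key : ∀ (A t d p : ℝ), 0 ≤ t → 0 ≤ d → 0 ≤ p → A ≤ r → A ≤ p * t + d →
      (p ≤ 1 / 3 → 3 * A ≤ t + 3 * d) ∧
      (1 / 3 ≤ p → 3 * A ≤ (3 - 1 / p) * r + t + 3 * d) := by
    intro A t d p ht hd hp hAr hA
    constructor
    · intro h
      nlinarith
    · intro h
      have hp : 0 < p := by linarith
      set θ := 1 / p with hθ
      have hθp : θ * p = 1 := by rw [hθ]; field_simp
      have hθ0 : 0 ≤ θ := by positivity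
      have hθ3 : θ ≤ 3 := by
        rw [hθ, div_le_iff₀ hp]; linarith
      have a1 : (3 - θ) * A ≤ (3 - θ) * r := mul_le_mul_of_nonneg_left hAr (by linarith)
      have a2 : θ * A ≤ θ * (p * t + d) := mul_le_mul_of_nonneg_left hA hθ0
      have a3 : θ * (p * t + d) = t + θ * d := by rw [mul_add, ← mul_assoc, hθp, one_mul]
      have a4 : θ * d ≤ 3 * d := mul_le_mul_of_nonneg_right hθ3 hd
      linarith
  have k1 := key A t d p ht hd hp0 hAr hA
  have k2 := key B t' d' (1 - p) ht' hd' (by linarith) hBr hB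
  rcases le_total p (1 / 3) with h | h
  · have b1 := k1.1 h
    have b2 := k2.2 (by linarith)
    have : (1 : ℝ) ≤ 1 / (1 - p) := by
      rw [le_div_iff₀ (by linarith)]; linarith
    nlinarith
  · rcases le_total (1 - p) (1 / 3) with h' | h'
    · have b1 := k1.2 h
      have b2 := k2.1 h'
      have : (1 : ℝ) ≤ 1 / p := by
        rw [le_div_iff₀ (by linarith)]; linarith
      nlinarith
    · have b1 := k1.2 h
      have b2 := k2.2 h'
      have : (4 : ℝ) ≤ 1 / p + 1 / (1 - p) := by
        rw [div_add_div _ _ (by linarith) (by linarith), le_div_iff₀ (by nlinarith)]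
        nlinarith [sq_nonneg (2 * p - 1)]
      nlinarith

/-! ### The matching bound for the Bukh-Ma words -/

/-- `(0^r 1^r)^k`. -/
def bm (r : ℕ) : ℕ → List Bool
  | 0 => []
  | k + 1 => (List.replicate r false ++ List.replicate r true) ++ bm r k

theorem bm_length (r k : ℕ) : (bm r k).length = 2 * r * k := by
  induction k with
  | zero => simp [bm]
  | succ k ih => simp [bm, ih]; ring

/-- One pair of runs. -/
theorem pair_bound (y pre l₁ l₂ post α β : List Bool) (r w W : ℕ) (hw : 0 < w)
    (hy : y = pre ++ (l₁ ++ (l₂ ++ post)))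
    (hα : α.Sublist (List.replicate r false)) (hα' : α.Sublist l₁)
    (hβ : β.Sublist (List.replicate r true)) (hβ' : β.Sublist l₂) :
    3 * ((α.length : ℝ) + β.length) ≤ 2 * r + (l₁.length + l₂.length) + 12 * w
      + 3 / 2 * ∑ i ∈ Finset.Ico pre.length (pre.length + l₁.length + l₂.length),
          |avg (sgn y) w i - avg (sgn y) W i|
      + 4 * r * (((pre.length + l₁.length + l₂.length) / W : ℕ) - ((pre.length / W : ℕ) : ℝ)) := by
  set a := pre.length with ha
  set b := a + l₁.length with hb
  set c := b + l₂.length with hc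
  have hab : a ≤ b := by omega
  have hbc : b ≤ c := by omega
  set v := sgn y with hv
  have hv1 : ∀ i, |v i| ≤ 1 := sgn_abs y
  have hA : (α.length : ℝ) ≤ l₁.count false := by exact_mod_cast sub_false hα hα'
  have hB : (β.length : ℝ) ≤ l₂.count true := by exact_mod_cast sub_true hβ hβ'
  have hAr : (α.length : ℝ) ≤ r := by
    have := hα.length_le; simp at this; exact_mod_cast this
  have hBr : (β.length : ℝ) ≤ r := by
    have := hβ.length_le; simp at this; exact_mod_cast this
  have c1 := (count_eq l₁ y pre (l₂ ++ post) hy).1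
  have c2 := (count_eq l₂ y (pre ++ l₁) post (by simp [hy])).2
  rw [List.length_append] at c2
  rw [← ha, ← hb] at c1 c2
  rw [← hc] at c2
  rw [← hv] at c1 c2
  set f : ℕ → ℝ := fun i => |avg v w i - avg v W i| with hf
  have hf0 : ∀ i, 0 ≤ f i := fun i => abs_nonneg _
  have hsum : ∑ i ∈ Finset.Ico a c, f i = ∑ i ∈ Finset.Ico a b, f i + ∑ i ∈ Finset.Ico b c, f i :=
    (Finset.sum_Ico_consecutive f hab hbc).symm
  have hD1 : 0 ≤ ∑ i ∈ Finset.Ico a b, f i := Finset.sum_nonneg fun i _ => hf0 i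
  have hD2 : 0 ≤ ∑ i ∈ Finset.Ico b c, f i := Finset.sum_nonneg fun i _ => hf0 i
  have hmono : a / W ≤ c / W := Nat.div_le_div_right (by omega)
  have hr0 : (0 : ℝ) ≤ r := by positivity
  have hw0 : (0 : ℝ) ≤ w := by positivity
  have hl1 : (0 : ℝ) ≤ l₁.length := by positivity
  have hl2 : (0 : ℝ) ≤ l₂.length := by positivity
  rcases hmono.lt_or_eq with hlt | heq
  · have : (1 : ℝ) ≤ ((c / W : ℕ) : ℝ) - ((a / W : ℕ) : ℝ) := by
      have : ((a / W : ℕ) : ℝ) + 1 ≤ ((c / W : ℕ) : ℝ) := by exact_mod_cast hlt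
      linarith
    nlinarith
  · rw [heq, sub_self, mul_zero, add_zero]
    set μ := avg v W a with hμ
    have hμ1 := abs_le.1 (avg_abs_le v hv1 W a)
    have hconst : ∀ i, a ≤ i → i < c → avg v W i = μ := by
      intro i h1 h2
      apply avg_congr
      have e1 : a / W ≤ i / W := Nat.div_le_div_right h1
      have e2 : i / W ≤ c / W := Nat.div_le_div_right h2.le
      omega
    have dev : ∀ x z, a ≤ x → x ≤ z → z ≤ c →
        |∑ i ∈ Finset.Ico x z, v i - μ * ((z : ℝ) - x)| ≤ 4 * w + ∑ i ∈ Finset.Ico x z, f i := by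
      intro x z hx hxz hz
      have h1 := interval_close v hv1 w x z hw hxz
      have h2 : |∑ i ∈ Finset.Ico x z, (avg v w i - avg v W i)| ≤ ∑ i ∈ Finset.Ico x z, f i :=
        Finset.abs_sum_le_sum_abs _ _
      have h3 : ∑ i ∈ Finset.Ico x z, avg v W i = μ * ((z : ℝ) - x) := by
        rw [Finset.sum_congr rfl (fun i hi => hconst i (hx.trans (Finset.mem_Ico.1 hi).1)
          ((Finset.mem_Ico.1 hi).2.trans_le hz)), Finset.sum_const, Nat.card_Ico, nsmul_eq_mul,
          Nat.cast_sub hxz, mul_comm]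
      rw [← h3]
      have h4 : ∑ i ∈ Finset.Ico x z, v i - ∑ i ∈ Finset.Ico x z, avg v W i
          = ∑ i ∈ Finset.Ico x z, (v i - avg v w i)
            + ∑ i ∈ Finset.Ico x z, (avg v w i - avg v W i) := by
        simp only [Finset.sum_sub_distrib]; ring
      rw [h4]
      exact (abs_add_le _ _).trans (add_le_add h1 h2)
    have d1 := (abs_le.1 (dev a b le_rfl hab hbc)).2
    have d2 := (abs_le.1 (dev b c hab hbc le_rfl)).1
    have e1 : (b : ℝ) - a = l₁.length := by rw [hb]; push_cast; ring
    have e2 : (c : ℝ) - b = l₂.length := by rw [hc]; push_cast; ring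
    rw [e1] at d1
    rw [e2] at d2
    have := local_ineq α.length β.length r l₁.length l₂.length
      ((4 * w + ∑ i ∈ Finset.Ico a b, f i) / 2) ((4 * w + ∑ i ∈ Finset.Ico b c, f i) / 2)
      ((1 + μ) / 2) hr0 hl1 hl2 (by linarith) (by linarith) (by linarith [hμ1.1])
      (by linarith [hμ1.2]) hAr hBr (by linarith) (by linarith)
    rw [hsum]
    linarith

theorem bm_bound (r w W : ℕ) (hw : 0 < w) (y : List Bool) (k : ℕ) :
    ∀ (pre l u : List Bool), y = pre ++ l → u.Sublist (bm r k) → u.Sublist l →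
    3 * (u.length : ℝ) ≤ 2 * r * k + l.length + 12 * w * k
      + 3 / 2 * ∑ i ∈ Finset.Ico pre.length y.length, |avg (sgn y) w i - avg (sgn y) W i|
      + 4 * r * ((y.length / W : ℕ) - ((pre.length / W : ℕ) : ℝ)) := by
  induction k with
  | zero =>
    intro pre l u hy hu hl
    simp only [bm, List.sublist_nil] at hu
    subst hu
    have h1 : 0 ≤ ∑ i ∈ Finset.Ico pre.length y.length, |avg (sgn y) w i - avg (sgn y) W i| :=
      Finset.sum_nonneg fun i _ => abs_nonneg _
    have h2 : ((pre.length / W : ℕ) : ℝ) ≤ (y.length / W : ℕ) := by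
      exact_mod_cast Nat.div_le_div_right (by rw [hy]; simp)
    have h3 : (0 : ℝ) ≤ 4 * r * ((y.length / W : ℕ) - ((pre.length / W : ℕ) : ℝ)) :=
      mul_nonneg (by positivity) (by linarith)
    have h4 : (0 : ℝ) ≤ l.length := by positivity
    simp only [List.length_nil, Nat.cast_zero, mul_zero]
    linarith
  | succ k ih =>
    intro pre l u hy hu hl
    rw [bm] at hu
    obtain ⟨u₁, u₂, rfl, hu1, hu2⟩ := List.sublist_append_iff.1 hu
    obtain ⟨α, β, rfl, hα, hβ⟩ := List.sublist_append_iff.1 hu1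
    obtain ⟨l₁₂, l₃, rfl, hl12, hl3⟩ := List.append_sublist_iff.1 hl
    obtain ⟨l₁, l₂, rfl, hl1, hl2⟩ := List.append_sublist_iff.1 hl12
    have s1 := pair_bound y pre l₁ l₂ l₃ α β r w W hw (by simp [hy]) hα hl1 hβ hl2
    have s2 := ih (pre ++ (l₁ ++ l₂)) l₃ u₂ (by simp [hy]) hu2 hl3
    have hlen : (pre ++ (l₁ ++ l₂)).length = pre.length + l₁.length + l₂.length := by
      simp; ring
    rw [hlen] at s2
    have hsum := Finset.sum_Ico_consecutive (fun i => |avg (sgn y) w i - avg (sgn y) W i|)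
      (show pre.length ≤ pre.length + l₁.length + l₂.length by omega)
      (show pre.length + l₁.length + l₂.length ≤ y.length by rw [hy]; simp; omega)
    rw [← hsum]
    simp only [List.length_append, Nat.cast_add, Nat.cast_one]
    linarith

/-- Any scale on which the word is matched well has a large energy increment. -/
theorem scale_bound (h m c w k K : ℕ) (hh : 1 ≤ h) (hc : c = 56 * h) (hw : 0 < w)
    (hm : m = 2 * (w * c) * k) (hK : 2 * m = w * (c * c) * K) (y : List Bool)
    (hy : y.length ≤ 2 * m)
    (hout : (m : ℝ) + y.length + m / h < 3 * (LCS (bm (w * c) k) y : ℝ)) :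
    (m : ℝ) ≤ 18 * h ^ 2 * ∑ i ∈ Finset.range (2 * m),
      (avg (sgn y) w i - avg (sgn y) (w * (c * c)) i) ^ 2 := by
  obtain ⟨u, hu1, hu2, hu3⟩ := LCS_spec (bm (w * c) k) y
  have hb := bm_bound (w * c) w (w * (c * c)) hw y k [] y u (by simp) hu1 hu2
  rw [hu3] at hb
  set W := w * (c * c) with hW
  set f : ℕ → ℝ := fun i => avg (sgn y) w i - avg (sgn y) W i with hf
  have hc0 : 0 < c := by omega
  have hW0 : 0 < W := by positivity
  have hhR : (1 : ℝ) ≤ h := by exact_mod_cast hh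
  have hcR : (c : ℝ) = 56 * h := by rw [hc]; push_cast; ring
  have hmR : (m : ℝ) = 2 * (w * c) * k := by rw [hm]; push_cast; ring
  have s1 : ∑ i ∈ Finset.Ico ([] : List Bool).length y.length, |f i|
      ≤ ∑ i ∈ Finset.range (2 * m), |f i| := by
    apply Finset.sum_le_sum_of_subset_of_nonneg
    · intro i hi
      simp at hi ⊢
      omega
    · intros; exact abs_nonneg _
  have s2 : ∑ i ∈ Finset.range (2 * m), |f i|
      ≤ ∑ i ∈ Finset.range (2 * m), (1 / (12 * (h : ℝ)) + 3 * h * f i ^ 2) := by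
    apply Finset.sum_le_sum
    intro i _
    have : 1 / (12 * (h : ℝ)) + 3 * h * f i ^ 2 - |f i|
        = 3 * h * (|f i| - 1 / (6 * h)) ^ 2 := by
      rw [← sq_abs (f i)]
      field_simp
      ring
    have h2 : 0 ≤ 3 * (h : ℝ) * (|f i| - 1 / (6 * h)) ^ 2 := by positivity
    linarith
  rw [Finset.sum_add_distrib, Finset.sum_const, Finset.card_range, nsmul_eq_mul,
    ← Finset.mul_sum] at s2
  have hdiv : ((y.length / W : ℕ) : ℝ) ≤ K := by
    have : y.length / W ≤ K := by
      apply Nat.div_le_of_le_mul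
      rw [← hK]; exact hy
    exact_mod_cast this
  have hKR : 2 * (m : ℝ) = w * (c * c) * K := by exact_mod_cast hK
  have t1 : 4 * ((w * c : ℕ) : ℝ) * (((y.length / W : ℕ) : ℝ)
      - (([] : List Bool).length / W : ℕ)) ≤ m / (7 * h) := by
    have : 4 * ((w * c : ℕ) : ℝ) * (((y.length / W : ℕ) : ℝ)
      - (([] : List Bool).length / W : ℕ)) ≤ 4 * (w * c) * K := by
      simp only [List.length_nil, Nat.zero_div, Nat.cast_zero, sub_zero, Nat.cast_mul]
      gcongr
    refine this.trans ?_
    rw [le_div_iff₀ (by positivity)]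
    have : 4 * ((w : ℝ) * c) * K * (7 * h) = w * (c * c) * K / 2 := by rw [hcR]; ring
    rw [this, ← hKR]; linarith
  have t2 : 12 * (w : ℝ) * k ≤ m / (9 * h) := by
    rw [le_div_iff₀ (by positivity), hmR, hcR]
    have : (0 : ℝ) ≤ w * k * h := by positivity
    nlinarith
  have t3 : 2 * ((w * c : ℕ) : ℝ) * k = m := by rw [hmR]; push_cast; ring
  rw [t3] at hb
  set S := ∑ i ∈ Finset.range (2 * m), f i ^ 2 with hS
  set T := ∑ i ∈ Finset.Ico ([] : List Bool).length y.length, |f i| with hT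
  set x := (m : ℝ) / h with hx
  have g1 : (m : ℝ) / (7 * h) = x / 7 := by rw [hx]; field_simp
  have g2 : (m : ℝ) / (9 * h) = x / 9 := by rw [hx]; field_simp
  have g3 : ((2 * m : ℕ) : ℝ) * (1 / (12 * h)) = x / 6 := by
    rw [hx]; push_cast; field_simp; ring
  have g4 : (m : ℝ) = x * h := by rw [hx]; field_simp
  rw [g1] at t1
  rw [g2] at t2
  rw [g3] at s2
  have hfin : x / 4 ≤ 9 / 2 * h * S := by
    have hm0 : (0 : ℝ) ≤ x := by positivity
    linarith
  rw [g4]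
  nlinarith

theorem inner_code (h q e : ℕ) (hh : 1 ≤ h) (he : 1 ≤ e) :
    ∃ g : ℕ, 0 < g ∧ ∃ B : Fin q → List Bool, (∀ a, (B a).length = h * e * g) ∧
      ∀ y : List Bool,
        (Finset.univ.filter fun a => h * e * g + y.length + e * g < 3 * LCS (B a) y).card
          ≤ 36 * h ^ 2 := by
  set c := 56 * h with hc
  have hc0 : 0 < c := by omega
  set g := 2 * c ^ (2 * q) with hg
  have hg0 : 0 < g := by positivity
  set m := h * e * g with hm
  have hm0 : 0 < m := by positivity
  set k : ℕ → ℕ := fun a => h * e * c ^ (2 * (q - 1 - a) + 1) with hk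
  have hmk : ∀ a < q, m = 2 * (c ^ (2 * a) * c) * k a := by
    intro a ha
    have : 2 * q = 2 * a + 1 + (2 * (q - 1 - a) + 1) := by omega
    simp only [hm, hg, hk]
    rw [this, pow_add c (2 * a + 1), pow_succ c (2 * a)]
    ring
  refine ⟨g, hg0, fun a => bm (c ^ (2 * (a : ℕ)) * c) (k a), ?_, ?_⟩
  · intro a
    rw [bm_length, ← hmk a a.2]
  intro y
  set F := Finset.univ.filter fun a : Fin q =>
    m + y.length + e * g < 3 * LCS (bm (c ^ (2 * (a : ℕ)) * c) (k a)) y with hF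
  by_cases hy : y.length ≤ 2 * m
  swap
  · have : F = ∅ := by
      rw [hF, Finset.filter_eq_empty_iff]
      intro a _ hlt
      have := LCS_le_left (bm (c ^ (2 * (a : ℕ)) * c) (k a)) y
      rw [bm_length, ← hmk a a.2] at this
      omega
    rw [this]; simp
  set E : ℕ → ℝ := fun a => ∑ i ∈ Finset.range (2 * m), avg (sgn y) (c ^ (2 * a)) i ^ 2 with hE
  set Δ : ℕ → ℝ := fun a => ∑ i ∈ Finset.range (2 * m),
      (avg (sgn y) (c ^ (2 * a)) i - avg (sgn y) (c ^ (2 * a) * (c * c)) i) ^ 2 with hΔ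
  have hKe : ∀ a < q, 2 * m = c ^ (2 * a) * (c * c) * (4 * h * e * c ^ (2 * (q - 1 - a))) := by
    intro a ha
    have : 2 * q = 2 * a + 2 + (2 * (q - 1 - a)) := by omega
    simp only [hm, hg]
    rw [this, pow_add c (2 * a + 2), pow_add c (2 * a)]
    ring
  have hΔE : ∀ a < q, Δ a = E a - E (a + 1) := by
    intro a ha
    have := pythagoras (sgn y) (c ^ (2 * a)) (c * c) (4 * h * e * c ^ (2 * (q - 1 - a)))
      (by positivity) (by positivity)
    rw [← hKe a ha] at this
    simp only [hΔ, hE]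
    rw [this, show 2 * (a + 1) = 2 * a + 2 by ring, pow_add c (2 * a) 2, pow_two c]
  have hΔ0 : ∀ a, 0 ≤ Δ a := fun a => Finset.sum_nonneg fun i _ => sq_nonneg _
  have htot : ∑ a : Fin q, Δ a ≤ 2 * m := by
    rw [Fin.sum_univ_eq_sum_range]
    rw [Finset.sum_congr rfl (fun a ha => hΔE a (Finset.mem_range.1 ha)),
      Finset.sum_range_sub']
    have h1 : 0 ≤ E q := Finset.sum_nonneg fun i _ => sq_nonneg _
    have h2 : E 0 ≤ 2 * m := by
      have : ∀ i ∈ Finset.range (2 * m), avg (sgn y) (c ^ (2 * 0)) i ^ 2 ≤ 1 := by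
        intro i _
        rw [← sq_abs]
        exact pow_le_one₀ (abs_nonneg _) (avg_abs_le _ (sgn_abs y) _ _)
      refine (Finset.sum_le_sum this).trans ?_
      simp
    linarith
  have hout : ∀ a ∈ F, (m : ℝ) ≤ 18 * h ^ 2 * Δ a := by
    intro a ha
    have ha' := (Finset.mem_filter.1 ha).2
    refine scale_bound h m c (c ^ (2 * (a : ℕ))) (k a) _ hh hc (by positivity) (hmk a a.2)
      (hKe a a.2) y hy ?_
    have e1 : (m : ℝ) / h = e * g := by
      rw [hm]; push_cast
      have : (h : ℝ) ≠ 0 := by positivity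
      field_simp
    rw [e1]
    exact_mod_cast ha'
  have hcard : (F.card : ℝ) * m ≤ 36 * h ^ 2 * m := by
    calc (F.card : ℝ) * m = ∑ a ∈ F, (m : ℝ) := by simp
      _ ≤ ∑ a ∈ F, 18 * h ^ 2 * Δ a := Finset.sum_le_sum hout
      _ = 18 * h ^ 2 * ∑ a ∈ F, Δ a := by rw [Finset.mul_sum]
      _ ≤ 18 * h ^ 2 * ∑ a : Fin q, Δ a := by
          exact mul_le_mul_of_nonneg_left (Finset.sum_le_sum_of_subset_of_nonneg
            (Finset.subset_univ _) (fun a _ _ => hΔ0 a)) (by positivity)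
      _ ≤ 18 * h ^ 2 * (2 * m) := by gcongr
      _ = 36 * h ^ 2 * m := by ring
  have hmR : (0 : ℝ) < m := by exact_mod_cast hm0
  have := le_of_mul_le_mul_right hcard hmR
  exact_mod_cast this

/-! ### The concatenated code -/

/-- Encoding of an outer word. -/
def enc {q N : ℕ} (B : Fin q → List Bool) (x : Fin N → Fin q) : List Bool :=
  (List.ofFn fun i => B (x i)).flatten

theorem enc_length {q N m : ℕ} (B : Fin q → List Bool) (hB : ∀ a, (B a).length = m)
    (x : Fin N → Fin q) : (enc B x).length = m * N := by
  induction N with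
  | zero => simp [enc]
  | succ N ih =>
    have := ih (fun i => x i.succ)
    simp only [enc] at this ⊢
    rw [List.ofFn_succ, List.flatten_cons, List.length_append, this, hB]
    ring

theorem enc_cons {q N : ℕ} (B : Fin q → List Bool) (a : Fin q) (x : Fin N → Fin q) :
    enc B (Fin.cons a x : Fin (N + 1) → Fin q) = B a ++ enc B x := by
  simp [enc, List.ofFn_succ]

theorem LCS_append {α : Type*} (b z y : List α) (g : ℕ) (hg : 0 < g) :
    ∃ k ∈ Finset.range (y.length / g + 1),
      LCS (b ++ z) y ≤ LCS b (y.take (k * g)) + g + LCS z (y.drop (k * g)) := by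
  obtain ⟨u, h1, h2, h3⟩ := LCS_spec (b ++ z) y
  obtain ⟨u₁, u₂, rfl, hu1, hu2⟩ := List.sublist_append_iff.1 h1
  obtain ⟨y₁, y₂, rfl, hy1, hy2⟩ := List.append_sublist_iff.1 h2
  set t := y₁.length / g * g with ht
  have htle : t ≤ y₁.length := Nat.div_mul_le_self _ _
  have htg : y₁.length - t ≤ g := by
    have := Nat.div_add_mod y₁.length g
    have h' := Nat.mod_lt y₁.length hg
    rw [mul_comm] at this
    omega
  refine ⟨y₁.length / g, ?_, ?_⟩
  · rw [Finset.mem_range, Nat.lt_succ_iff]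
    exact Nat.div_le_div_right (by simp)
  · rw [← h3, List.length_append, ← ht, List.take_append_of_le_length htle,
      List.drop_append_of_le_length htle]
    have a2 : u₂.length ≤ LCS z (y₁.drop t ++ y₂) :=
      le_LCS hu2 (hy2.trans (List.sublist_append_right _ _))
    have a1 : u₁.length ≤ LCS b (y₁.take t) + g := by
      rw [← List.take_append_drop t y₁] at hy1
      obtain ⟨p, r, rfl, hp, hr⟩ := List.sublist_append_iff.1 hy1
      have b1 : p.length ≤ LCS b (y₁.take t) :=
        le_LCS ((List.sublist_append_left p r).trans hu1) hp
      have b2 := hr.length_le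
      rw [List.length_drop] at b2
      rw [List.length_append]
      omega
    omega

/-- Weights used for the sum over splitting points. -/
noncomputable def phi (s q : ℕ) (D : ℝ) (k : ℕ) : ℝ :=
  if k < 2 * s then D else q * (1 / 2 : ℝ) ^ (k - 2 * s)

theorem phi_nonneg (s q : ℕ) (D : ℝ) (hD : 0 ≤ D) (k : ℕ) : 0 ≤ phi s q D k := by
  unfold phi; split_ifs <;> positivity

theorem phi_sum (s q : ℕ) (D : ℝ) (hD : 0 ≤ D) (T : ℕ) :
    ∑ k ∈ Finset.range T, phi s q D k ≤ 2 * s * D + 2 * q := by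
  have h1 : ∑ k ∈ Finset.range T, phi s q D k ≤ ∑ k ∈ Finset.range (2 * s + T), phi s q D k := by
    apply Finset.sum_le_sum_of_subset_of_nonneg
    · intro i hi; simp at hi ⊢; omega
    · intro i _ _; exact phi_nonneg s q D hD i
  refine h1.trans ?_
  rw [Finset.sum_range_add]
  have h2 : ∑ k ∈ Finset.range (2 * s), phi s q D k = 2 * s * D := by
    have : ∀ k ∈ Finset.range (2 * s), phi s q D k = D := by
      intro k hk
      rw [phi, if_pos (Finset.mem_range.1 hk)]
    rw [Finset.sum_congr rfl this, Finset.sum_const, Finset.card_range, nsmul_eq_mul]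
    push_cast; ring
  have h3 : ∑ k ∈ Finset.range T, phi s q D (2 * s + k)
      = q * ∑ k ∈ Finset.range T, (1 / 2 : ℝ) ^ k := by
    rw [Finset.mul_sum]
    refine Finset.sum_congr rfl fun k _ => ?_
    rw [phi, if_neg (by omega), Nat.add_sub_cancel_left]
  have h4 : ∑ k ∈ Finset.range T, (1 / 2 : ℝ) ^ k ≤ 2 := sum_geometric_two_le T
  rw [h2, h3]
  have : (q : ℝ) * ∑ k ∈ Finset.range T, (1 / 2 : ℝ) ^ k ≤ q * 2 :=
    mul_le_mul_of_nonneg_left h4 (by positivity)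
  linarith

theorem single_moment {q s e g l : ℕ} (B : Fin q → List Bool)
    (hB : ∀ a, (B a).length = s * g)
    (hlist : ∀ y : List Bool,
      (Finset.univ.filter fun a => s * g + y.length + e * g < 3 * LCS (B a) y).card ≤ l)
    (β : ℝ) (hβ1 : 1 ≤ β) (hβ : β ^ g = 2) (k : ℕ) (y : List Bool) (hy : y.length = k * g) :
    ∑ a, β ^ (3 * LCS (B a) y)
      ≤ phi s q (l * 2 ^ s + q * 2 ^ e) k * β ^ (s * g + k * g) := by
  have hβ0 : 0 < β := by linarith
  have hpow : ∀ j, β ^ (j * g) = 2 ^ j := by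
    intro j; rw [mul_comm, pow_mul, hβ]
  unfold phi
  split_ifs with hk
  · have hb : ∀ a, β ^ (3 * LCS (B a) y) ≤
        ((if s * g + y.length + e * g < 3 * LCS (B a) y then (2 : ℝ) ^ s else 0) + 2 ^ e)
          * β ^ (s * g + k * g) := by
      intro a
      split_ifs with hlt
      · have h1 := LCS_le_left (B a) y
        have h2 := LCS_le_right (B a) y
        rw [hB] at h1
        have : β ^ (3 * LCS (B a) y) ≤ β ^ (s * g + (s * g + k * g)) :=
          pow_le_pow_right₀ hβ1 (by omega)
        rw [pow_add _ (s * g), hpow s] at this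
        have h3 : 0 ≤ 2 ^ e * β ^ (s * g + k * g) := by positivity
        linarith
      · have : β ^ (3 * LCS (B a) y) ≤ β ^ (e * g + (s * g + k * g)) :=
          pow_le_pow_right₀ hβ1 (by omega)
        rw [pow_add _ (e * g), hpow e] at this
        linarith
    refine (Finset.sum_le_sum fun a _ => hb a).trans ?_
    rw [← Finset.sum_mul]
    apply mul_le_mul_of_nonneg_right _ (by positivity)
    rw [Finset.sum_add_distrib, ← Finset.sum_filter, Finset.sum_const, Finset.sum_const,
      nsmul_eq_mul, nsmul_eq_mul, Finset.card_univ, Fintype.card_fin]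
    have : (((Finset.univ.filter fun a => s * g + y.length + e * g < 3 * LCS (B a) y).card : ℕ) : ℝ)
        ≤ l := by exact_mod_cast hlist y
    gcongr
  · have hk' : 2 * s ≤ k := by omega
    have hb : ∀ a, β ^ (3 * LCS (B a) y) ≤ (1 / 2 : ℝ) ^ (k - 2 * s) * β ^ (s * g + k * g) := by
      intro a
      have h1 := LCS_le_left (B a) y
      rw [hB] at h1
      have h2 : β ^ (3 * LCS (B a) y) ≤ β ^ (3 * (s * g)) :=
        pow_le_pow_right₀ hβ1 (by omega)
      refine h2.trans (le_of_eq ?_)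
      have : s * g + k * g = (k - 2 * s) * g + 3 * (s * g) := by
        obtain ⟨d, rfl⟩ := Nat.exists_eq_add_of_le hk'
        rw [Nat.add_sub_cancel_left]; ring
      rw [this, pow_add _ ((k - 2 * s) * g), hpow]
      rw [← mul_assoc ((1 / 2 : ℝ) ^ (k - 2 * s)), ← mul_pow]
      norm_num
    refine (Finset.sum_le_sum fun a _ => hb a).trans ?_
    rw [Finset.sum_const, Finset.card_univ, Fintype.card_fin, nsmul_eq_mul, mul_assoc]

theorem moment {q s e g l : ℕ} (hg : 0 < g) (B : Fin q → List Bool)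
    (hB : ∀ a, (B a).length = s * g)
    (hlist : ∀ y : List Bool,
      (Finset.univ.filter fun a => s * g + y.length + e * g < 3 * LCS (B a) y).card ≤ l)
    (β : ℝ) (hβ1 : 1 ≤ β) (hβ : β ^ g = 2) (N : ℕ) : ∀ (y : List Bool),
    ∑ x : Fin N → Fin q, β ^ (3 * LCS (enc B x) y)
      ≤ (8 * (2 * s * (l * 2 ^ s + q * 2 ^ e) + 2 * q)) ^ N * β ^ (s * g * N + y.length) := by
  have hβ0 : 0 < β := by linarith
  induction N with
  | zero =>
    intro y
    have : ∀ x : Fin 0 → Fin q, LCS (enc B x) y = 0 := by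
      intro x
      have := LCS_le_left (enc B x) y
      rw [enc_length B hB] at this
      omega
    simp [this]
    exact one_le_pow₀ hβ1
  | succ N ih =>
    intro y
    set A : ℝ := 8 * (2 * s * (l * 2 ^ s + q * 2 ^ e) + 2 * q) with hA
    have hA0 : 0 ≤ A := by positivity
    set D : ℝ := l * 2 ^ s + q * 2 ^ e with hD
    have hD0 : 0 ≤ D := by positivity
    set R := Finset.range (y.length / g + 1) with hR
    have hRle : ∀ k ∈ R, k * g ≤ y.length := by
      intro k hk
      rw [hR, Finset.mem_range, Nat.lt_succ_iff] at hk
      exact (Nat.mul_le_mul_right g hk).trans (Nat.div_mul_le_self _ _)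
    rw [← (Fin.consEquiv (fun _ : Fin (N + 1) => Fin q)).sum_comp, Fintype.sum_prod_type]
    have step : ∀ (a : Fin q) (x : Fin N → Fin q),
        β ^ (3 * LCS (enc B (Fin.cons a x : Fin (N + 1) → Fin q)) y)
        ≤ ∑ k ∈ R, 8 * (β ^ (3 * LCS (B a) (y.take (k * g)))
            * β ^ (3 * LCS (enc B x) (y.drop (k * g)))) := by
      intro a x
      rw [enc_cons]
      obtain ⟨k, hk, hle⟩ := LCS_append (B a) (enc B x) y g hg
      have h1 : β ^ (3 * LCS (B a ++ enc B x) y) ≤ β ^ (g * 3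
          + (3 * LCS (B a) (y.take (k * g)) + 3 * LCS (enc B x) (y.drop (k * g)))) :=
        pow_le_pow_right₀ hβ1 (by omega)
      rw [pow_add, pow_add, pow_mul β g, hβ] at h1
      refine h1.trans ?_
      have h2 := Finset.single_le_sum (s := R) (f := fun k =>
        8 * (β ^ (3 * LCS (B a) (y.take (k * g)))
            * β ^ (3 * LCS (enc B x) (y.drop (k * g))))) (fun i _ => by positivity) hk
      refine le_trans (le_of_eq ?_) h2
      norm_num
    calc ∑ a : Fin q, ∑ x : Fin N → Fin q,
          β ^ (3 * LCS (enc B (Fin.cons a x : Fin (N + 1) → Fin q)) y)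
        ≤ ∑ a : Fin q, ∑ x : Fin N → Fin q, ∑ k ∈ R,
          8 * (β ^ (3 * LCS (B a) (y.take (k * g)))
            * β ^ (3 * LCS (enc B x) (y.drop (k * g)))) :=
          Finset.sum_le_sum fun a _ => Finset.sum_le_sum fun x _ => step a x
      _ = ∑ k ∈ R, 8 * ((∑ a : Fin q, β ^ (3 * LCS (B a) (y.take (k * g))))
            * ∑ x : Fin N → Fin q, β ^ (3 * LCS (enc B x) (y.drop (k * g)))) := by
          rw [Finset.sum_congr rfl (fun a _ => Finset.sum_comm), Finset.sum_comm]
          refine Finset.sum_congr rfl fun k _ => ?_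
          rw [Finset.sum_mul_sum, Finset.mul_sum]
          refine Finset.sum_congr rfl fun a _ => ?_
          rw [Finset.mul_sum]
      _ ≤ ∑ k ∈ R, 8 * (phi s q D k * (A ^ N * β ^ (s * g * (N + 1) + y.length))) := by
          refine Finset.sum_le_sum fun k hk => ?_
          have h1 := single_moment B hB hlist β hβ1 hβ k (y.take (k * g))
            (by rw [List.length_take]; exact min_eq_left (hRle k hk))
          have h2 := ih (y.drop (k * g))
          have h3 : phi s q D k * (A ^ N * β ^ (s * g * (N + 1) + y.length))
              = (phi s q D k * β ^ (s * g + k * g))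
                * (A ^ N * β ^ (s * g * N + (y.drop (k * g)).length)) := by
            have : s * g * (N + 1) + y.length
                = (s * g + k * g) + (s * g * N + (y.drop (k * g)).length) := by
              rw [List.length_drop]
              have := hRle k hk
              have e1 : s * g * (N + 1) = s * g * N + s * g := by ring
              omega
            rw [this, pow_add β (s * g + k * g)]
            ring
          rw [h3]
          apply mul_le_mul_of_nonneg_left _ (by norm_num)
          exact mul_le_mul h1 h2 (Finset.sum_nonneg fun _ _ => by positivity)
            (mul_nonneg (phi_nonneg s q D hD0 k) (by positivity))
      _ = 8 * (∑ k ∈ R, phi s q D k) * (A ^ N * β ^ (s * g * (N + 1) + y.length)) := by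
          rw [← Finset.mul_sum, ← Finset.sum_mul]; ring
      _ ≤ A * (A ^ N * β ^ (s * g * (N + 1) + y.length)) := by
          apply mul_le_mul_of_nonneg_right _ (by positivity)
          have := phi_sum s q D hD0 (y.length / g + 1)
          rw [hA]
          linarith
      _ = A ^ (N + 1) * β ^ (s * g * (N + 1) + y.length) := by ring

/-- For every `y`, few outer words are close to `y`. -/
theorem few_close {q s e g l : ℕ} (hg : 0 < g) (B : Fin q → List Bool)
    (hB : ∀ a, (B a).length = s * g)
    (hlist : ∀ y : List Bool,
      (Finset.univ.filter fun a => s * g + y.length + e * g < 3 * LCS (B a) y).card ≤ l)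
    (hq : 16 * (2 * s * (l * 2 ^ s + q * 2 ^ e) + 2 * q) ≤ q * 4 ^ e)
    (N : ℕ) (y : List Bool) :
    (Finset.univ.filter fun x : Fin N → Fin q =>
      s * g * N + y.length + 2 * e * g * N ≤ 3 * LCS (enc B x) y).card * 2 ^ N ≤ q ^ N := by
  set β : ℝ := (2 : ℝ) ^ ((1 : ℝ) / g) with hβd
  have hβ1 : 1 ≤ β := Real.one_le_rpow (by norm_num) (by positivity)
  have hβ0 : 0 < β := by linarith
  have hβ : β ^ g = 2 := by
    rw [hβd, one_div]
    exact Real.rpow_inv_natCast_pow (by norm_num) hg.ne'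
  have hm := moment hg B hB hlist β hβ1 hβ N y
  set A : ℝ := 8 * (2 * s * (l * 2 ^ s + q * 2 ^ e) + 2 * q) with hA
  set F := Finset.univ.filter fun x : Fin N → Fin q =>
      s * g * N + y.length + 2 * e * g * N ≤ 3 * LCS (enc B x) y with hF
  have h1 : (F.card : ℝ) * β ^ (s * g * N + y.length + 2 * e * g * N)
      ≤ A ^ N * β ^ (s * g * N + y.length) := by
    refine le_trans ?_ hm
    calc (F.card : ℝ) * β ^ (s * g * N + y.length + 2 * e * g * N)
        = ∑ x ∈ F, β ^ (s * g * N + y.length + 2 * e * g * N) := by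
          rw [Finset.sum_const, nsmul_eq_mul]
      _ ≤ ∑ x ∈ F, β ^ (3 * LCS (enc B x) y) :=
          Finset.sum_le_sum fun x hx => pow_le_pow_right₀ hβ1 (Finset.mem_filter.1 hx).2
      _ ≤ _ := Finset.sum_le_sum_of_subset_of_nonneg (Finset.subset_univ _)
          fun _ _ _ => by positivity
  rw [pow_add, mul_comm (β ^ _) (β ^ _), ← mul_assoc] at h1
  have h2 := le_of_mul_le_mul_right h1 (by positivity)
  have h3 : β ^ (2 * e * g * N) = (4 ^ e) ^ N := by
    rw [show 2 * e * g * N = g * (2 * e * N) by ring, pow_mul, hβ, mul_assoc, pow_mul, pow_mul]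
    norm_num
  rw [h3] at h2
  have h4 : A * 2 ≤ q * 4 ^ e := by
    have : ((16 * (2 * s * (l * 2 ^ s + q * 2 ^ e) + 2 * q) : ℕ) : ℝ) ≤ ((q * 4 ^ e : ℕ) : ℝ) := by
      exact_mod_cast hq
    push_cast at this
    rw [hA]; linarith
  have hA0 : 0 ≤ A := by positivity
  have h5 : (F.card : ℝ) * 2 ^ N * (4 ^ e) ^ N ≤ q ^ N * (4 ^ e) ^ N := by
    calc (F.card : ℝ) * 2 ^ N * (4 ^ e) ^ N = (F.card : ℝ) * (4 ^ e) ^ N * 2 ^ N := by ring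
      _ ≤ A ^ N * 2 ^ N := by gcongr
      _ = (A * 2) ^ N := (mul_pow A 2 N).symm
      _ ≤ (q * 4 ^ e) ^ N := by gcongr
      _ = _ := by rw [mul_pow]
  have h6 := le_of_mul_le_mul_right h5 (by positivity)
  exact_mod_cast h6

/-! ### Greedy choice of the code -/

theorem greedy {Ω ι : Type*} [Fintype Ω] [DecidableEq Ω] [Fintype ι] (S : ι → Finset Ω)
    (K : ℕ) (P : ℕ) (hP : 0 < P) (hS : ∀ i, (S i).card * P ≤ Fintype.card Ω) (M : ℕ)
    (hM : 2 * M ≤ Fintype.card Ω) (hΩ : 0 < Fintype.card Ω) :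
    ∃ C : Finset Ω, C.card = M ∧
      ∑ i, (K : ℝ) ^ (C ∩ S i).card ≤ Fintype.card ι * (1 + 2 * K / P) ^ M := by
  induction M with
  | zero => exact ⟨∅, rfl, by simp⟩
  | succ M ih =>
    obtain ⟨C, hC, hsum⟩ := ih (by omega)
    set x : ℝ := 2 * K / P with hx
    have hPR : (0 : ℝ) < P := by exact_mod_cast hP
    set T := Cᶜ with hT
    have hTc : T.card = Fintype.card Ω - M := by rw [hT, Finset.card_compl, hC]
    have hTpos : 0 < T.card := by omega
    have hT2 : Fintype.card Ω ≤ 2 * T.card := by omega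
    have hne : T.Nonempty := Finset.card_pos.1 hTpos
    have key : ∑ z ∈ T, ∑ i, (K : ℝ) ^ (insert z C ∩ S i).card
        ≤ ∑ z ∈ T, (Fintype.card ι * (1 + x) ^ (M + 1)) := by
      rw [Finset.sum_comm, Finset.sum_const, nsmul_eq_mul]
      have hi : ∀ i, ∑ z ∈ T, (K : ℝ) ^ (insert z C ∩ S i).card
          ≤ (K : ℝ) ^ (C ∩ S i).card * (T.card * (1 + x)) := by
        intro i
        have hz : ∀ z ∈ T, (K : ℝ) ^ (insert z C ∩ S i).card
            ≤ (K : ℝ) ^ (C ∩ S i).card * (1 + if z ∈ S i then (K : ℝ) else 0) := by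
          intro z hz
          have hzC : z ∉ C := by simpa [hT] using hz
          have hK0 : (0 : ℝ) ≤ (K : ℝ) ^ (C ∩ S i).card := by positivity
          split_ifs with hzS
          · rw [Finset.insert_inter_of_mem hzS,
              Finset.card_insert_of_notMem (by simp [hzC]), pow_succ]
            nlinarith
          · rw [Finset.insert_inter_of_notMem hzS]
            simp
        refine (Finset.sum_le_sum hz).trans ?_
        rw [← Finset.mul_sum]
        apply mul_le_mul_of_nonneg_left _ (by positivity)
        rw [Finset.sum_add_distrib, ← Finset.sum_filter, Finset.sum_const, Finset.sum_const,
          nsmul_eq_mul, nsmul_eq_mul, mul_one, mul_add, mul_one]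
        have h1 : ((T.filter (· ∈ S i)).card : ℝ) ≤ (S i).card := by
          exact_mod_cast Finset.card_le_card fun z hz => (Finset.mem_filter.1 hz).2
        have h2 : ((S i).card : ℝ) * P ≤ 2 * T.card := by
          exact_mod_cast (hS i).trans hT2
        have h3 : ((S i).card : ℝ) ≤ 2 * T.card / P := by
          rw [le_div_iff₀ hPR]; exact h2
        have h4 : ((T.filter (· ∈ S i)).card : ℝ) * K ≤ 2 * T.card / P * K :=
          mul_le_mul_of_nonneg_right (h1.trans h3) (by positivity)
        have h5 : 2 * (T.card : ℝ) / P * K = T.card * x := by rw [hx]; ring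
        linarith
      refine (Finset.sum_le_sum fun i _ => hi i).trans ?_
      rw [← Finset.sum_mul]
      have hx0 : 0 ≤ x := by positivity
      calc (∑ i, (K : ℝ) ^ (C ∩ S i).card) * (T.card * (1 + x))
          ≤ (Fintype.card ι * (1 + x) ^ M) * (T.card * (1 + x)) :=
            mul_le_mul_of_nonneg_right hsum (by positivity)
        _ = _ := by ring
    obtain ⟨z, hz, hle⟩ := Finset.exists_le_of_sum_le hne key
    refine ⟨insert z C, ?_, hle⟩
    rw [Finset.card_insert_of_notMem (by simpa [hT] using hz), hC]

end InsDel

set_option maxHeartbeats 2000000 in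
open InsDel in
theorem stmt0 :
    ∀ ε : ℝ, ε ∈ Set.Ioo (0 : ℝ) 1 →
      ∃ R : ℝ, 0 < R ∧ ∃ c : ℝ, 0 < c ∧ ∃ n₀ : ℕ, ∀ n : ℕ, n₀ ≤ n →
        ∃ C : Finset (List Bool),
          (∀ x ∈ C, x.length = n) ∧
          (2 : ℝ) ^ (R * n) ≤ (C.card : ℝ) ∧
          ∀ γ δ : ℝ, 0 ≤ γ → 0 ≤ δ → γ + 2 * δ ≤ 1 - ε →
            listDecodable C ⌊δ * n⌋₊ ⌊γ * n⌋₊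
              (c * (2 : ℝ) ^ (2 ^ (2 ^ logStar n))) := by
  rintro ε ⟨hε0, hε1⟩
  -- parameters
  obtain ⟨h, hh⟩ := exists_nat_ge (4 / ε)
  have hhε : 4 ≤ h * ε := by rwa [div_le_iff₀ hε0] at hh
  have hh4 : 4 ≤ h := by
    have : (4 : ℝ) ≤ h := by nlinarith [(Nat.cast_nonneg h : (0 : ℝ) ≤ h)]
    exact_mod_cast this
  obtain ⟨e, he1, he⟩ : ∃ e : ℕ, 1 ≤ e ∧ 65 * (h * e) ≤ 2 ^ e := by
    refine ⟨2 * (130 * h), by omega, ?_⟩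
    have h1 : 130 * h < 2 ^ (130 * h) := Nat.lt_two_pow_self
    calc 65 * (h * (2 * (130 * h))) = (130 * h) * (130 * h) := by ring
      _ ≤ 2 ^ (130 * h) * 2 ^ (130 * h) := Nat.mul_le_mul h1.le h1.le
      _ = 2 ^ (2 * (130 * h)) := by rw [← pow_add]; congr 1; ring
  set s := h * e with hs
  have hs1 : 1 ≤ s := Nat.mul_pos (by omega) he1
  set l := 36 * h ^ 2 with hl
  have hl1 : 1 ≤ l := by
    have : 0 < h ^ 2 := by positivity
    omega
  set q := 64 * s * l * 2 ^ s with hq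
  have hq2 : 2 ≤ q := by
    have : 0 < s * l * 2 ^ s := by positivity
    have e1 : q = 64 * (s * l * 2 ^ s) := by rw [hq]; ring
    omega
  have hqe : 16 * (2 * s * (l * 2 ^ s + q * 2 ^ e) + 2 * q) ≤ q * 4 ^ e := by
    have e1 : 16 * (2 * s * (l * 2 ^ s + q * 2 ^ e) + 2 * q)
        = 32 * s * l * 2 ^ s + q * (32 * s * 2 ^ e + 32) := by ring
    have e2 : 32 * s * l * 2 ^ s ≤ q * 1 := by
      rw [hq, mul_one]
      gcongr
      norm_num
    have e3 : 1 + (32 * s * 2 ^ e + 32) ≤ 4 ^ e := by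
      have e4 : 4 ^ e = 2 ^ e * 2 ^ e := by rw [← mul_pow]; norm_num
      have e5 : 1 ≤ 2 ^ e := Nat.one_le_two_pow
      rw [e4]
      calc 1 + (32 * s * 2 ^ e + 32) ≤ 65 * s * 2 ^ e := by nlinarith
        _ ≤ 2 ^ e * 2 ^ e := by rw [mul_comm] at he; gcongr; linarith
    rw [e1]
    calc 32 * s * l * 2 ^ s + q * (32 * s * 2 ^ e + 32)
        ≤ q * 1 + q * (32 * s * 2 ^ e + 32) := by gcongr
      _ = q * (1 + (32 * s * 2 ^ e + 32)) := by ring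
      _ ≤ q * 4 ^ e := by gcongr
  obtain ⟨g, hg, B, hB, hlist⟩ := inner_code h q e (by omega) he1
  rw [← hs] at hB
  have hfew := fun N y => few_close hg B hB (by simpa only [← hs] using hlist) hqe N y
  set m := s * g with hm
  have hm0 : 0 < m := by positivity
  have hmR : (0 : ℝ) < m := by exact_mod_cast hm0
  refine ⟨1 / (16 * m), by positivity, 34 * m, by positivity, m * (272 * m + 2 * h + 8), ?_⟩
  intro n hn
  set N := n / m with hN
  set ρ := n % m with hρ
  have hnN : n = m * N + ρ := (Nat.div_add_mod n m).symm
  have hρm : ρ < m := Nat.mod_lt _ hm0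
  have hNge : 272 * m + 2 * h + 8 ≤ N := by
    rw [hN, Nat.le_div_iff_mul_le hm0, mul_comm]; exact hn
  set κ := N / 4 with hκ
  have hκ1 : 68 * m ≤ κ := by omega
  have hκ2 : N ≤ 4 * κ + 3 := by omega
  have hnκ : n ≤ 8 * m * κ := by
    have : n ≤ m * (N + 1) := by rw [hnN]; nlinarith
    have h2 : m * (N + 1) ≤ m * (8 * κ) := Nat.mul_le_mul_left m (by omega)
    calc n ≤ m * (8 * κ) := this.trans h2
      _ = _ := by ring
  -- the greedy code
  set Y : Fin (2 * n + 1) × (Fin (2 * n) → Bool) → List Bool :=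
    fun i => (List.ofFn i.2).take i.1 with hY
  set S : Fin (2 * n + 1) × (Fin (2 * n) → Bool) → Finset (Fin N → Fin q) := fun i =>
    Finset.univ.filter fun x : Fin N → Fin q =>
      m * N + (Y i).length + 2 * e * g * N ≤ 3 * LCS (enc B x) (Y i) with hS
  have hcardΩ : Fintype.card (Fin N → Fin q) = q ^ N := by simp
  have hqN : 2 ^ N ≤ q ^ N := Nat.pow_le_pow_left hq2 N
  obtain ⟨C, hC, hCsum⟩ := greedy S (2 ^ κ) (2 ^ N) (by positivity)
    (by intro i; rw [hcardΩ]; exact hfew N (Y i)) (2 ^ κ)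
    (by
      rw [hcardΩ]
      refine le_trans ?_ hqN
      rw [← pow_succ']
      exact Nat.pow_le_pow_right (by norm_num) (by omega))
    (by rw [hcardΩ]; positivity)
  have hCsmall : ∀ i, (C ∩ S i).card ≤ 34 * m := by
    intro i
    have h1 : ((2 ^ κ : ℕ) : ℝ) ^ (C ∩ S i).card
        ≤ ∑ i, ((2 ^ κ : ℕ) : ℝ) ^ (C ∩ S i).card :=
      Finset.single_le_sum (f := fun i => ((2 ^ κ : ℕ) : ℝ) ^ (C ∩ S i).card)
        (fun j _ => by positivity) (Finset.mem_univ i)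
    have h2 : (1 + 2 * ((2 ^ κ : ℕ) : ℝ) / ((2 ^ N : ℕ) : ℝ)) ^ (2 ^ κ) ≤ 4 := by
      set x : ℝ := 2 * ((2 ^ κ : ℕ) : ℝ) / ((2 ^ N : ℕ) : ℝ) with hx
      have hx0 : 0 ≤ x := by positivity
      have hx1 : ((2 ^ κ : ℕ) : ℝ) * x ≤ 1 := by
        rw [hx, mul_div_assoc', div_le_one (by positivity)]
        have : 2 ^ κ * (2 * 2 ^ κ) ≤ 2 ^ N := by
          rw [← pow_succ', ← pow_add]
          exact Nat.pow_le_pow_right (by norm_num) (by omega)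
        exact_mod_cast this
      calc (1 + x) ^ (2 ^ κ) ≤ (Real.exp x) ^ (2 ^ κ) := by
            gcongr
            linarith [Real.add_one_le_exp x]
        _ = Real.exp (((2 ^ κ : ℕ) : ℝ) * x) := by rw [Real.exp_nat_mul]
        _ ≤ Real.exp 1 := Real.exp_le_exp.2 hx1
        _ ≤ 4 := by linarith [Real.exp_one_lt_d9]
    have h3 : ((Fintype.card (Fin (2 * n + 1) × (Fin (2 * n) → Bool)) : ℕ) : ℝ)
        ≤ ((2 ^ (4 * n) : ℕ) : ℝ) := by
      have : 2 * n + 1 ≤ 2 ^ (2 * n) := Nat.lt_two_pow_self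
      have h4 : Fintype.card (Fin (2 * n + 1) × (Fin (2 * n) → Bool))
          = (2 * n + 1) * 2 ^ (2 * n) := by simp
      rw [h4]
      have h5 : (2 * n + 1) * 2 ^ (2 * n) ≤ 2 ^ (4 * n) := by
        rw [show 4 * n = 2 * n + 2 * n by ring, pow_add]
        gcongr
      exact_mod_cast h5
    have h4 : ((2 ^ κ : ℕ) : ℝ) ^ (C ∩ S i).card ≤ ((2 ^ (4 * n) : ℕ) : ℝ) * 4 := by
      refine h1.trans (hCsum.trans ?_)
      exact mul_le_mul h3 h2 (by positivity) (by positivity)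
    have h5 : 2 ^ (κ * (C ∩ S i).card) ≤ 2 ^ (4 * n + 2) := by
      rw [pow_mul, pow_add]
      exact_mod_cast h4
    have h6 : κ * (C ∩ S i).card ≤ 4 * n + 2 := (Nat.pow_le_pow_iff_right (by norm_num)).1 h5
    have h7 : κ * (C ∩ S i).card ≤ κ * (34 * m) := by
      have : 1 ≤ m * κ := Nat.mul_pos hm0 (by omega)
      nlinarith
    exact Nat.le_of_mul_le_mul_left h7 (by omega)
  have hYsurj : ∀ y : List Bool, y.length ≤ 2 * n → ∃ i, Y i = y := by
    intro y hy
    refine ⟨(⟨y.length, by omega⟩, fun j => y.getD j false), ?_⟩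
    simp only [hY]
    apply List.ext_getElem
    · simp [hy]
    · intro j h1 h2
      simp [h2]
  set ψ : (Fin N → Fin q) → List Bool := fun x => enc B x ++ List.replicate ρ false with hψ
  have hψlen : ∀ x, (ψ x).length = n := by
    intro x
    rw [hψ]; simp only [List.length_append, List.length_replicate]
    rw [enc_length B hB, ← hnN]
  have hX : m * N = h * (e * g * N) := by rw [hm, hs]; ring
  refine ⟨C.image ψ, ?_, ?_, ?_⟩
  · intro x hx
    obtain ⟨z, -, rfl⟩ := Finset.mem_image.1 hx
    exact hψlen z
  · have hfib : C.card ≤ 34 * m * (C.image ψ).card := by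
      apply Finset.card_le_mul_card_image
      intro b hb
      obtain ⟨z, -, rfl⟩ := Finset.mem_image.1 hb
      obtain ⟨i, hi⟩ := hYsurj (ψ z) (by rw [hψlen]; omega)
      refine le_trans (Finset.card_le_card ?_) (hCsmall i)
      intro x hx
      rw [Finset.mem_filter] at hx
      rw [Finset.mem_inter]
      refine ⟨hx.1, ?_⟩
      simp only [hS, Finset.mem_filter, Finset.mem_univ, true_and]
      rw [hi, hψlen, ← hx.2]
      have h1 : m * N ≤ LCS (enc B x) (ψ x) := by
        rw [← enc_length B hB x]
        exact le_LCS (List.Sublist.refl _) (List.sublist_append_left _ _)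
      have h2 : 4 * (e * g * N) ≤ m * N := by
        rw [hX]; exact Nat.mul_le_mul_right _ hh4
      have h3 : m * 2 ≤ m * N := Nat.mul_le_mul_left m (by omega)
      have h4 : 2 * e * g * N = 2 * (e * g * N) := by ring
      omega
    rw [hC] at hfib
    have hfibR : (2 : ℝ) ^ κ ≤ 34 * m * ((C.image ψ).card : ℝ) := by exact_mod_cast hfib
    set R' := (2 : ℝ) ^ ((κ : ℝ) / 2) with hR'
    have hR'2 : R' * R' = (2 : ℝ) ^ κ := by
      rw [hR', ← Real.rpow_add (by norm_num), add_halves, Real.rpow_natCast]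
    have hR'1 : 34 * (m : ℝ) ≤ R' := by
      have a1 : (34 * m : ℕ) < 2 ^ (34 * m) := Nat.lt_two_pow_self
      have a2 : ((34 * m : ℕ) : ℝ) ≤ (2 : ℝ) ^ (34 * m) := by exact_mod_cast a1.le
      have a3 : (2 : ℝ) ^ (34 * m) ≤ R' := by
        rw [hR', ← Real.rpow_natCast]
        apply Real.rpow_le_rpow_of_exponent_le (by norm_num)
        have : (68 * m : ℝ) ≤ κ := by exact_mod_cast hκ1
        push_cast
        linarith
      push_cast at a2
      linarith
    have hR'0 : 0 < R' := by positivity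
    have b1 : (2 : ℝ) ^ (1 / (16 * (m : ℝ)) * n) ≤ R' := by
      apply Real.rpow_le_rpow_of_exponent_le (by norm_num)
      have : (n : ℝ) ≤ 8 * m * κ := by exact_mod_cast hnκ
      rw [one_div_mul_eq_div, div_le_iff₀ (by positivity)]
      linarith
    refine b1.trans ?_
    have b2 : 34 * (m : ℝ) * R' ≤ 34 * m * ((C.image ψ).card : ℝ) := by
      refine le_trans ?_ hfibR
      rw [← hR'2]
      gcongr
    exact le_of_mul_le_mul_left b2 (by positivity)
  · intro γ δ hγ hδ hγδ y
    have hLpos : (34 * (m : ℝ)) ≤ 34 * m * (2 : ℝ) ^ (2 ^ (2 ^ logStar n)) :=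
      le_mul_of_one_le_right (by positivity) (one_le_pow₀ (by norm_num))
    refine le_trans ?_ hLpos
    set Z : Set (List Bool) := {x | x ∈ C.image ψ ∧ ∃ u : List Bool, u.Sublist x ∧ u.Sublist y ∧
        x.length - u.length ≤ ⌊δ * n⌋₊ ∧ y.length - u.length ≤ ⌊γ * n⌋₊} with hZ
    have hmain : ∀ x ∈ C, ψ x ∈ Z → y.length ≤ 2 * n ∧
        m * N + y.length + 2 * e * g * N ≤ 3 * LCS (enc B x) y := by
      rintro x hx ⟨-, u, hu1, hu2, hu3, hu4⟩
      have l1 := hu1.length_le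
      have l2 := hu2.length_le
      rw [hψlen] at hu3 l1
      have hn0 : (0 : ℝ) ≤ n := by positivity
      have f1 : ((n - u.length : ℕ) : ℝ) ≤ δ * n :=
        (Nat.cast_le.2 hu3).trans (Nat.floor_le (by positivity))
      have f2 : ((y.length - u.length : ℕ) : ℝ) ≤ γ * n :=
        (Nat.cast_le.2 hu4).trans (Nat.floor_le (by positivity))
      rw [Nat.cast_sub l1] at f1
      rw [Nat.cast_sub l2] at f2
      have f3 : (1 + ε) * n + y.length ≤ 3 * (u.length : ℝ) := by nlinarith
      have l1R : (u.length : ℝ) ≤ n := by exact_mod_cast l1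
      constructor
      · have : (y.length : ℝ) ≤ 2 * n := by nlinarith
        exact_mod_cast this
      · simp only [hψ] at hu1
        obtain ⟨u₁, u₂, rfl, h1, h2⟩ := List.sublist_append_iff.1 hu1
        have k1 : u₁.length ≤ LCS (enc B x) y :=
          le_LCS h1 ((List.sublist_append_left _ _).trans hu2)
        have k2 := h2.length_le
        rw [List.length_replicate] at k2
        have k3 : ((u₁ ++ u₂).length : ℝ) ≤ LCS (enc B x) y + m := by
          have : (u₁ ++ u₂).length ≤ LCS (enc B x) y + m := by
            rw [List.length_append]; omega
          exact_mod_cast this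
        have k4 : (m : ℝ) * N ≤ n := by
          have : m * N ≤ n := by omega
          exact_mod_cast this
        have hXR : (m : ℝ) * N = h * (e * g * N) := by exact_mod_cast hX
        set X : ℝ := e * g * N with hXd
        have hX0 : 0 ≤ X := by positivity
        have k5 : 4 * X ≤ ε * (m * N) := by
          rw [hXR]; nlinarith
        have k6 : 3 * (m : ℝ) ≤ ε / 2 * (m * N) := by
          have c1 : (2 * h : ℝ) ≤ N := by
            have : 2 * h ≤ N := by omega
            exact_mod_cast this
          have c2 : 3 ≤ ε / 2 * N := by nlinarith
          nlinarith
        have k7 : ε * ((m : ℝ) * N) ≤ ε * n := mul_le_mul_of_nonneg_left k4 hε0.le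
        have : (m : ℝ) * N + y.length + 2 * X ≤ 3 * (LCS (enc B x) y : ℝ) := by linarith
        have h' : ((m * N + y.length + 2 * e * g * N : ℕ) : ℝ)
            ≤ ((3 * LCS (enc B x) y : ℕ) : ℝ) := by
          push_cast
          rw [hXd] at this
          linarith
        exact_mod_cast h'
    by_cases hy : y.length ≤ 2 * n
    · obtain ⟨i, hi⟩ := hYsurj y hy
      have hsub : Z ⊆ ((C ∩ S i).image ψ : Finset (List Bool)) := by
        intro z hz
        obtain ⟨x, hx, rfl⟩ := Finset.mem_image.1 hz.1
        rw [Finset.mem_coe, Finset.mem_image]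
        refine ⟨x, ?_, rfl⟩
        rw [Finset.mem_inter]
        refine ⟨hx, ?_⟩
        simp only [hS, Finset.mem_filter, Finset.mem_univ, true_and]
        rw [hi]
        exact (hmain x hx hz).2
      have h1 := Set.ncard_le_ncard hsub (Finset.finite_toSet _)
      rw [Set.ncard_coe_finset] at h1
      have h2 := h1.trans (Finset.card_image_le.trans (hCsmall i))
      exact_mod_cast h2
    · have : Z = ∅ := by
        rw [Set.eq_empty_iff_forall_notMem]
        intro z hz
        obtain ⟨x, hx, rfl⟩ := Finset.mem_image.1 hz.1
        exact hy (hmain x hx hz).1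
      rw [this]
      simp
end

section
/- For every integer q ≥ 2 and every real ε ∈ (0,1) there exist a real R > 0 and a constant c > 0 (both depending only on ε and q) and an integer n₀ such that for every n ≥ n₀ there is a q-ary code C ⊆ (Fin q)ⁿ with |C| ≥ 2^(R·n) with the following property: for all reals γ, δ ≥ 0 such that there exists an integer z with 1 ≤ z ≤ q−1 and γ + 2zδ ≤ (1−ε)·((2q−1)z − z²)/q (i.e., (γ,δ) lies in the scaled feasibility region (1−ε)·F_q), the code C is list-decodable from ⌊δn⌋ deletions and ⌊γn⌋ insertions with list size at most c · 2^(2^(2^(log* n))). -/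
section Basics
variable {α : Type*}

lemma lcs_bdd (x y : List α) :
    BddAbove {n | ∃ u : List α, u.Sublist x ∧ u.Sublist y ∧ u.length = n} := by
  refine ⟨x.length, ?_⟩
  rintro n ⟨u, hx, _, rfl⟩
  exact hx.length_le

lemma le_LCS {u x y : List α} (hx : u.Sublist x) (hy : u.Sublist y) : u.length ≤ LCS x y :=
  le_csSup (lcs_bdd x y) ⟨u, hx, hy, rfl⟩

lemma exists_LCS (x y : List α) :
    ∃ u : List α, u.Sublist x ∧ u.Sublist y ∧ u.length = LCS x y :=
  Nat.sSup_mem (s := {n | ∃ u : List α, u.Sublist x ∧ u.Sublist y ∧ u.length = n})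
    ⟨0, [], by simp, by simp, rfl⟩ (lcs_bdd x y)

lemma LCS_le_left (x y : List α) : LCS x y ≤ x.length := by
  obtain ⟨u, hx, hy, h⟩ := exists_LCS x y
  rw [← h]; exact hx.length_le

lemma LCS_le_right (x y : List α) : LCS x y ≤ y.length := by
  obtain ⟨u, hx, hy, h⟩ := exists_LCS x y
  rw [← h]; exact hy.length_le

lemma LCS_mono_right {x y y' : List α} (h : y.Sublist y') : LCS x y ≤ LCS x y' := by
  obtain ⟨u, hx, hy, hu⟩ := exists_LCS x y
  rw [← hu]; exact le_LCS hx (hy.trans h)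

lemma LCS_append (x1 x2 y : List α) :
    ∃ i ≤ y.length, LCS (x1 ++ x2) y ≤ LCS x1 (y.take i) + LCS x2 (y.drop i) := by
  obtain ⟨u, hx, hy, hu⟩ := exists_LCS (x1 ++ x2) y
  obtain ⟨u1, u2, rfl, h1, h2⟩ := List.sublist_append_iff.1 hx
  obtain ⟨y1, y2, rfl, g1, g2⟩ := List.append_sublist_iff.1 hy
  refine ⟨y1.length, by simp, ?_⟩
  rw [← hu]
  simp only [List.take_left', List.drop_left', List.length_append]
  exact add_le_add (le_LCS h1 g1) (le_LCS h2 g2)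

/-- indicator that position `t` of `v` carries symbol `a` -/
noncomputable def ind [DecidableEq α] (v : List α) (a : α) (t : ℕ) : ℝ :=
  if v[t]? = some a then 1 else 0

lemma ind_nonneg [DecidableEq α] (v : List α) (a : α) (t : ℕ) : 0 ≤ ind v a t := by
  unfold ind; split_ifs <;> simp

lemma ind_le_one [DecidableEq α] (v : List α) (a : α) (t : ℕ) : ind v a t ≤ 1 := by
  unfold ind; split_ifs <;> simp

lemma count_eq_sum_ind [DecidableEq α] (v : List α) (a : α) :
    (v.count a : ℝ) = ∑ t ∈ Finset.range v.length, ind v a t := by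
  induction v with
  | nil => simp
  | cons b v ih =>
    rw [List.length_cons, Finset.sum_range_succ', List.count_cons]
    have : ∀ t, ind (b :: v) a (t+1) = ind v a t := fun t => by simp [ind]
    simp only [this, ← ih]
    push_cast
    simp [ind]

lemma LCS_replicate [DecidableEq α] (r : ℕ) (a : α) (v : List α) :
    (LCS (List.replicate r a) v : ℝ) ≤ min (r : ℝ) (∑ t ∈ Finset.range v.length, ind v a t) := by
  obtain ⟨u, hx, hy, hu⟩ := exists_LCS (List.replicate r a) v
  rw [← count_eq_sum_ind, ← hu]
  obtain ⟨n, hn, rfl⟩ := List.sublist_replicate_iff.1 hx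
  apply le_min
  · simpa using hn
  · have := hy.count_le a
    simpa using this

lemma LCS_replicate_drop [DecidableEq α] (r : ℕ) (a : α) (v : List α) (i : ℕ) :
    (LCS (List.replicate r a) (v.drop i) : ℝ) ≤
      min (r : ℝ) (∑ t ∈ Finset.Ico i v.length, ind v a t) := by
  refine (LCS_replicate r a _).trans ?_
  rw [Finset.sum_Ico_eq_sum_range]
  simp [ind]

end Basics

section Runs
set_option linter.unusedSectionVars false
variable {q : ℕ} [NeZero q]

/-- `J` cyclic runs of length `r` -/
def runs (q : ℕ) [NeZero q] (r : ℕ) : ℕ → List (Fin q)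
  | 0 => []
  | J + 1 => runs q r J ++ List.replicate r (Fin.ofNat q J)

lemma runs_length (r J : ℕ) : (runs q r J).length = r * J := by
  induction J with
  | zero => simp [runs]
  | succ J ih => simp [runs, ih, mul_add]

lemma runs_get (r J i : ℕ) (h : i < r * J) : (runs q r J)[i]? = some (Fin.ofNat q (i / r)) := by
  induction J with
  | zero => simp at h
  | succ J ih =>
    rw [runs]
    by_cases hi : i < r * J
    · rw [List.getElem?_append_left (by rw [runs_length]; exact hi), ih hi]
    · push Not at hi
      rw [List.getElem?_append_right (by rw [runs_length]; exact hi), runs_length]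
      rw [List.getElem?_replicate, if_pos (by rw [mul_add] at h; omega)]
      congr 2
      symm
      apply Nat.div_eq_of_lt_le
      · rw [mul_comm]; exact hi
      · rw [mul_comm]; exact h

lemma runs_split (r J : ℕ) : ∀ v : List (Fin q),
    ∃ b : ℕ → ℕ, Monotone b ∧ b 0 = 0 ∧ (∀ j, b j ≤ v.length) ∧
      (LCS (runs q r J) v : ℝ) ≤ ∑ j ∈ Finset.range J,
        min (r : ℝ) (∑ t ∈ Finset.Ico (b j) (b (j+1)), ind v (Fin.ofNat q j) t) := by
  induction J with
  | zero =>
    intro v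
    refine ⟨fun _ => 0, monotone_const, rfl, by simp, ?_⟩
    have := LCS_le_left (runs q r 0) v
    simp [runs] at this ⊢
    exact this
  | succ J ih =>
    intro v
    obtain ⟨i, hi, h⟩ := LCS_append (runs q r J) (List.replicate r (Fin.ofNat q J)) v
    obtain ⟨b, hb, hb0, hbl, hb2⟩ := ih (v.take i)
    have hbi : ∀ j, b j ≤ i := fun j => (hbl j).trans (by simp)
    refine ⟨fun j => if j ≤ J then b j else v.length, ?_, ?_, ?_, ?_⟩
    · intro j j' hjj
      dsimp only
      split_ifs with h1 h2 h2
      · exact hb hjj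
      · exact (hbi j).trans hi
      · omega
      · exact le_rfl
    · simp [hb0]
    · intro j
      dsimp only
      split_ifs
      · exact (hbi j).trans hi
      · exact le_rfl
    · rw [Finset.sum_range_succ, runs]
      have h' : (LCS (runs q r J ++ List.replicate r (Fin.ofNat q J)) v : ℝ) ≤
        LCS (runs q r J) (v.take i) + LCS (List.replicate r (Fin.ofNat q J)) (v.drop i) := by
        exact_mod_cast h
      refine h'.trans (add_le_add (hb2.trans ?_) ((LCS_replicate_drop _ _ _ _).trans ?_))
      · apply Finset.sum_le_sum
        intro j hj
        have hj := Finset.mem_range.1 hj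
        beta_reduce
        rw [if_pos hj.le, if_pos (by omega)]
        apply min_le_min le_rfl
        apply Finset.sum_le_sum
        intro t ht
        have := Finset.mem_Ico.1 ht
        have h3 := hbi (j+1)
        have h4 : (v.take i)[t]? = v[t]? := by
          rw [List.getElem?_take, if_pos (by omega)]
        unfold ind
        rw [h4]
      · apply min_le_min le_rfl
        beta_reduce
        rw [if_pos le_rfl, if_neg (by omega)]
        apply Finset.sum_le_sum_of_subset_of_nonneg
        · exact Finset.Ico_subset_Ico (hbi J) le_rfl
        · intros; exact ind_nonneg _ _ _

end Runs

section Averaging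

/-- average of `g` over the `w`-th piece of length `M` -/
noncomputable def avgp (M : ℕ) (g : ℕ → ℝ) (w : ℕ) : ℝ :=
  (∑ i ∈ Finset.range M, g (M * w + i)) / M

lemma sum_range_blocks (M W : ℕ) (h : ℕ → ℝ) :
    ∑ t ∈ Finset.range (M * W), h t =
      ∑ w ∈ Finset.range W, ∑ i ∈ Finset.range M, h (M * w + i) := by
  induction W with
  | zero => simp
  | succ W ih => rw [mul_add, mul_one, Finset.sum_range_add, ih, Finset.sum_range_succ]

lemma sum_avgp_mul (M W : ℕ) (hM : 0 < M) (g h : ℕ → ℝ) :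
    ∑ t ∈ Finset.range (M * W), avgp M g (t / M) * h (t / M) =
      ∑ t ∈ Finset.range (M * W), g t * h (t / M) := by
  rw [sum_range_blocks, sum_range_blocks]
  apply Finset.sum_congr rfl
  intro w _
  have hd : ∀ i ∈ Finset.range M, (M * w + i) / M = w := by
    intro i hi
    rw [Nat.mul_add_div hM, Nat.div_eq_of_lt (Finset.mem_range.1 hi), add_zero]
  have e1 : ∑ i ∈ Finset.range M, avgp M g ((M * w + i) / M) * h ((M * w + i) / M) =
      ∑ i ∈ Finset.range M, avgp M g w * h w :=
    Finset.sum_congr rfl (fun i hi => by rw [hd i hi])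
  have e2 : ∑ i ∈ Finset.range M, g (M * w + i) * h ((M * w + i) / M) =
      ∑ i ∈ Finset.range M, g (M * w + i) * h w :=
    Finset.sum_congr rfl (fun i hi => by rw [hd i hi])
  rw [e1, e2, Finset.sum_const, avgp]
  have : (M : ℝ) ≠ 0 := by positivity
  rw [Finset.card_range, nsmul_eq_mul, ← Finset.sum_mul]
  field_simp

lemma sum_avgp (M W : ℕ) (hM : 0 < M) (g : ℕ → ℝ) :
    ∑ t ∈ Finset.range (M * W), avgp M g (t / M) = ∑ t ∈ Finset.range (M * W), g t := by
  simpa using sum_avgp_mul M W hM g (fun _ => 1)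

lemma avgp_nonneg (M : ℕ) (g : ℕ → ℝ) (h0 : ∀ t, 0 ≤ g t) (w : ℕ) : 0 ≤ avgp M g w := by
  unfold avgp
  exact div_nonneg (Finset.sum_nonneg fun _ _ => h0 _) (by positivity)

lemma avgp_le_one (M : ℕ) (g : ℕ → ℝ) (h1 : ∀ t, g t ≤ 1) (w : ℕ) : avgp M g w ≤ 1 := by
  unfold avgp
  apply div_le_one_of_le₀ _ (by positivity)
  refine (Finset.sum_le_sum fun i _ => h1 _).trans ?_
  simp

lemma prefix_bound (M : ℕ) (hM : 0 < M) (g : ℕ → ℝ) (h0 : ∀ t, 0 ≤ g t) (h1 : ∀ t, g t ≤ 1)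
    (b : ℕ) : |∑ t ∈ Finset.range b, (g t - avgp M g (t / M))| ≤ M := by
  have hb : b = M * (b / M) + b % M := (Nat.div_add_mod b M).symm
  rw [hb, Finset.sum_range_add, Finset.sum_sub_distrib, sum_avgp M _ hM, sub_self, zero_add]
  refine (Finset.abs_sum_le_sum_abs _ _).trans ?_
  refine (Finset.sum_le_sum (g := fun _ => (1:ℝ)) ?_).trans ?_
  · intro t _
    have a1 := h0 (M * (b / M) + t)
    have a2 := h1 (M * (b / M) + t)
    have a3 := avgp_nonneg M g h0 ((M * (b / M) + t) / M)
    have a4 := avgp_le_one M g h1 ((M * (b / M) + t) / M)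
    rw [abs_le]; constructor <;> linarith
  · simp
    exact (Nat.mod_lt b hM).le

lemma interval_bound (M : ℕ) (hM : 0 < M) (g : ℕ → ℝ) (h0 : ∀ t, 0 ≤ g t) (h1 : ∀ t, g t ≤ 1)
    (b c : ℕ) (hbc : b ≤ c) : |∑ t ∈ Finset.Ico b c, (g t - avgp M g (t / M))| ≤ 2 * M := by
  rw [Finset.sum_Ico_eq_sub _ hbc]
  have h := prefix_bound M hM g h0 h1 b
  have h' := prefix_bound M hM g h0 h1 c
  rw [abs_le] at *
  constructor <;> linarith

lemma pythagoras (M N W : ℕ) (hM : 0 < M) (hN : 0 < N) (g : ℕ → ℝ) :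
    ∑ t ∈ Finset.range (M * N * W), (avgp M g (t / M) - avgp (M * N) g (t / (M * N))) ^ 2 =
      ∑ t ∈ Finset.range (M * N * W), (avgp M g (t / M)) ^ 2 -
      ∑ t ∈ Finset.range (M * N * W), (avgp (M * N) g (t / (M * N))) ^ 2 := by
  have e1 := sum_avgp_mul (M * N) W (Nat.mul_pos hM hN) g (avgp (M * N) g)
  have e2 := sum_avgp_mul M (N * W) hM g (fun w => avgp (M * N) g (w / N))
  simp only [Nat.div_div_eq_div_mul, ← mul_assoc] at e2
  have e3 : ∀ t, (avgp M g (t / M) - avgp (M * N) g (t / (M * N))) ^ 2 =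
      avgp M g (t / M) ^ 2 - 2 * (avgp M g (t / M) * avgp (M * N) g (t / (M * N)))
      + avgp (M * N) g (t / (M * N)) * avgp (M * N) g (t / (M * N)) := fun t => by ring
  have e4 : ∀ t, (avgp (M * N) g (t / (M * N))) ^ 2 =
     avgp (M * N) g (t / (M * N)) * avgp (M * N) g (t / (M * N)) := fun t => by ring
  simp only [e3, e4, Finset.sum_add_distrib, Finset.sum_sub_distrib, ← Finset.mul_sum]
  rw [e2, e1]; ring

lemma energy_zero (g : ℕ → ℝ) (h0 : ∀ t, 0 ≤ g t) (h1 : ∀ t, g t ≤ 1) (t : ℕ) :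
    (avgp 1 g (t / 1)) ^ 2 ≤ g t := by
  have : avgp 1 g (t / 1) = g t := by simp [avgp]
  rw [this]; nlinarith [h0 t, h1 t]

end Averaging

section Period

lemma period_real (q z : ℕ) (p s : Fin q → ℝ) (r : ℝ) (hr : 0 ≤ r) (hp : ∀ a, 0 ≤ p a)
    (hs : ∀ a, 0 ≤ s a) (hp1 : ∑ a, p a ≤ 1) :
    r * (2 * z * q - z ^ 2 - z) ≤
      ∑ a, (s a + 2 * z * r - (1 + 2 * z) * min r (p a * s a)) := by
  classical
  set A : Finset (Fin q) := Finset.univ.filter (fun a => 1 < p a * (1 + 2 * z)) with hA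
  set κ : ℝ := (A.card : ℝ) with hκ
  have hz : (0:ℝ) ≤ z := by positivity
  have key : ∀ a, (if a ∈ A then r * (2 * κ - κ ^ 2 * p a - (1 + 2 * z)) else 0) + 2 * z * r ≤
      s a + 2 * z * r - (1 + 2 * z) * min r (p a * s a) := by
    intro a
    set m := min r (p a * s a) with hm
    have m1 : m ≤ r := min_le_left _ _
    have m2 : m ≤ p a * s a := min_le_right _ _
    split_ifs with h
    · have h : 1 < p a * (1 + 2 * z) := by simpa [hA] using h
      have pp : 0 < p a := by
        by_contra hc
        have : p a = 0 := le_antisymm (not_lt.1 hc) (hp a)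
        rw [this] at h; linarith
      have e1 : m / p a ≤ s a := by rw [div_le_iff₀ pp]; linarith
      have e2 : 2 * κ - κ ^ 2 * p a ≤ 1 / p a := by
        rw [le_div_iff₀ pp]; nlinarith [sq_nonneg (κ * p a - 1)]
      have e3 : 1 / p a - (1 + 2 * z) < 0 := by
        rw [sub_neg, div_lt_iff₀ pp]; linarith
      have e4 : r * (1 / p a - (1 + 2 * z)) ≤ m * (1 / p a - (1 + 2 * z)) :=
        mul_le_mul_of_nonpos_right m1 e3.le
      have e5 : r * (2 * κ - κ ^ 2 * p a - (1 + 2 * z)) ≤ r * (1 / p a - (1 + 2 * z)) :=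
        mul_le_mul_of_nonneg_left (by linarith) hr
      have e6 : m * (1 / p a - (1 + 2 * z)) = m / p a - (1 + 2 * z) * m := by ring
      linarith
    · have h : p a * (1 + 2 * z) ≤ 1 := by simpa [hA] using h
      have : (1 + 2 * (z:ℝ)) * m ≤ (1 + 2 * z) * (p a * s a) :=
        mul_le_mul_of_nonneg_left m2 (by positivity)
      have := mul_le_mul_of_nonneg_right h (hs a)
      linarith
  refine le_trans ?_ (Finset.sum_le_sum fun a _ => key a)
  rw [Finset.sum_add_distrib, Finset.sum_ite_mem, Finset.univ_inter, ← Finset.mul_sum]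
  simp only [Finset.sum_sub_distrib, Finset.sum_const, ← Finset.mul_sum, Finset.card_univ,
    Fintype.card_fin, nsmul_eq_mul]
  rw [← hκ]
  have hpA : ∑ a ∈ A, p a ≤ 1 :=
    (Finset.sum_le_sum_of_subset_of_nonneg (Finset.subset_univ _) fun a _ _ => hp a).trans hp1
  have hprodnn : (0:ℝ) ≤ (κ - z) * (κ - z - 1) := by
    rw [hκ]
    rcases le_or_gt A.card z with h | h
    · have : (A.card : ℝ) ≤ z := by exact_mod_cast h
      nlinarith
    · have : (z : ℝ) + 1 ≤ A.card := by exact_mod_cast h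
      nlinarith
  have h2 : κ ^ 2 * ∑ a ∈ A, p a ≤ κ ^ 2 := mul_le_of_le_one_right (sq_nonneg _) hpA
  have h3 : -(z:ℝ) ^ 2 - z ≤ κ * (2 * κ) - κ ^ 2 * ∑ a ∈ A, p a - κ * (1 + 2 * z) := by
    nlinarith
  have := mul_le_mul_of_nonneg_left h3 hr
  linarith

end Period

section Inner
set_option linter.unusedSectionVars false
variable {q : ℕ} [NeZero q]

lemma sum_segments (b : ℕ → ℕ) (hb : Monotone b) (D : ℕ → ℝ) (J : ℕ) :
    ∑ j ∈ Finset.range J, ∑ t ∈ Finset.Ico (b j) (b (j+1)), D t =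
      ∑ t ∈ Finset.Ico (b 0) (b J), D t := by
  induction J with
  | zero => simp
  | succ J ih =>
    rw [Finset.sum_range_succ, ih, Finset.sum_Ico_consecutive _ (hb (Nat.zero_le _)) (hb (by omega))]

lemma sum_ind_le_one (v : List (Fin q)) (t : ℕ) : ∑ a, ind v a t ≤ 1 := by
  unfold ind
  rcases h : v[t]? with _ | c
  · simp
  · simp

lemma sum_avgp_ind (v : List (Fin q)) (M w : ℕ) : ∑ a, avgp M (ind v a) w ≤ 1 := by
  unfold avgp
  rw [← Finset.sum_div, Finset.sum_comm]
  apply div_le_one_of_le₀ _ (by positivity)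
  refine (Finset.sum_le_sum fun i _ => sum_ind_le_one v _).trans ?_
  simp

/-- local deviation between two averaging scales -/
noncomputable def devi (v : List (Fin q)) (M M' : ℕ) (t : ℕ) : ℝ :=
  ∑ a, |avgp M (ind v a) (t / M) - avgp M' (ind v a) (t / M')|

lemma devi_nonneg (v : List (Fin q)) (M M' : ℕ) (t : ℕ) : 0 ≤ devi v M M' t :=
  Finset.sum_nonneg fun _ _ => abs_nonneg _

lemma segment_bound (v : List (Fin q)) (M M' : ℕ) (hM : 0 < M) (a : Fin q) (b c w : ℕ)
    (hbc : b ≤ c) (hw : ∀ t, b ≤ t → t < c → t / M' = w) :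
    |∑ t ∈ Finset.Ico b c, ind v a t - avgp M' (ind v a) w * ((c : ℝ) - b)| ≤
      2 * M + ∑ t ∈ Finset.Ico b c, devi v M M' t := by
  have e1 : avgp M' (ind v a) w * ((c : ℝ) - b) =
      ∑ t ∈ Finset.Ico b c, avgp M' (ind v a) (t / M') := by
    rw [Finset.sum_congr rfl (g := fun _ => avgp M' (ind v a) w)
      (fun t ht => by rw [hw t (Finset.mem_Ico.1 ht).1 (Finset.mem_Ico.1 ht).2])]
    simp [Nat.cast_sub hbc, mul_comm]
  have e2 : ∑ t ∈ Finset.Ico b c, ind v a t - avgp M' (ind v a) w * ((c : ℝ) - b) =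
      ∑ t ∈ Finset.Ico b c, (ind v a t - avgp M (ind v a) (t / M)) +
      ∑ t ∈ Finset.Ico b c, (avgp M (ind v a) (t / M) - avgp M' (ind v a) (t / M')) := by
    rw [e1, Finset.sum_sub_distrib, Finset.sum_sub_distrib]; ring
  rw [e2]
  refine (abs_add_le _ _).trans (add_le_add
    (interval_bound M hM _ (ind_nonneg v a) (ind_le_one v a) b c hbc) ?_)
  refine (Finset.abs_sum_le_sum_abs _ _).trans (Finset.sum_le_sum fun t _ => ?_)
  exact Finset.single_le_sum (f := fun a =>
    |avgp M (ind v a) (t / M) - avgp M' (ind v a) (t / M')|) (fun _ _ => abs_nonneg _)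
    (Finset.mem_univ a)

lemma period_bound (v : List (Fin q)) (z M M' r : ℕ) (hM : 0 < M) (hz : z + 1 ≤ q)
    (b : ℕ → ℕ) (hb : Monotone b) :
    (r : ℝ) * (2 * z * q - z ^ 2 - z)
      - (1 + 2 * z) * (2 * M * q + ∑ t ∈ Finset.Ico (b 0) (b q), devi v M M' t)
      - r * (2 * z * q - z ^ 2 - z) * (((b q / M' : ℕ) : ℝ) - ((b 0 / M' : ℕ) : ℝ)) ≤
    ∑ a : Fin q, ((((b (a + 1) : ℕ) : ℝ) - b a) + 2 * z * r -
      (1 + 2 * z) * min (r : ℝ) (∑ t ∈ Finset.Ico (b a) (b (a+1)), ind v a t)) := by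
  have hz0 : (0:ℝ) ≤ z := by positivity
  have hzq : (z:ℝ) + 1 ≤ q := by exact_mod_cast hz
  have hτ : (0:ℝ) ≤ r * (2 * z * q - z ^ 2 - z) := by
    apply mul_nonneg (by positivity)
    nlinarith
  have hdev : 0 ≤ ∑ t ∈ Finset.Ico (b 0) (b q), devi v M M' t :=
    Finset.sum_nonneg fun t _ => devi_nonneg v M M' t
  have hb0q : b 0 ≤ b q := hb (Nat.zero_le _)
  have hdiv : b 0 / M' ≤ b q / M' := Nat.div_le_div_right hb0q
  have hs : ∀ a : Fin q, (0:ℝ) ≤ ((b (a+1) : ℕ) : ℝ) - b a := fun a => by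
    have : (b a : ℝ) ≤ b (a+1) := by exact_mod_cast hb (Nat.le_succ _)
    linarith
  rcases hdiv.eq_or_lt with h | h
  · -- the whole period lies in a single coarse piece
    set w := b 0 / M' with hw
    have hwt : ∀ a : Fin q, ∀ t, b a ≤ t → t < b (a+1) → t / M' = w := by
      intro a t h1 h2
      apply le_antisymm
      · rw [h]
        exact Nat.div_le_div_right (h2.le.trans (hb a.2))
      · exact Nat.div_le_div_right ((hb (Nat.zero_le _)).trans h1)
    have main := period_real q z (fun a => avgp M' (ind v a) w)
      (fun a => ((b (a+1) : ℕ) : ℝ) - b a) r (by positivity)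
      (fun a => avgp_nonneg _ _ (ind_nonneg v a) _) hs (sum_avgp_ind v M' w)
    have hseg := sum_segments b hb (devi v M M') q
    rw [Finset.sum_range] at hseg
    rw [← hseg, ← h, sub_self, mul_zero, sub_zero]
    have : (2 * (M:ℝ) * q) = ∑ a : Fin q, 2 * (M:ℝ) := by simp; ring
    rw [this, ← Finset.sum_add_distrib, Finset.mul_sum]
    rw [sub_le_iff_le_add, ← Finset.sum_add_distrib]
    refine main.trans (Finset.sum_le_sum fun a _ => ?_)
    have hsb := segment_bound v M M' hM a (b a) (b (a+1)) w (hb (Nat.le_succ _)) (hwt a)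
    set cnt := ∑ t ∈ Finset.Ico (b a) (b (a+1)), ind v a t
    set ps := avgp M' (ind v a) w * (((b (a+1) : ℕ) : ℝ) - b a)
    have hmin : min (r:ℝ) cnt ≤ min (r:ℝ) ps + |cnt - ps| := by
      have := le_abs_self (cnt - ps)
      have := abs_nonneg (cnt - ps)
      rcases min_choice (r:ℝ) ps with h | h <;> rw [h]
      · have := min_le_left (r:ℝ) cnt; linarith
      · have := min_le_right (r:ℝ) cnt; linarith
    have := mul_le_mul_of_nonneg_left (hmin.trans (add_le_add le_rfl hsb))
      (by positivity : (0:ℝ) ≤ 1 + 2 * z)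
    linarith
  · have h1 : (1:ℝ) ≤ ((b q / M' : ℕ) : ℝ) - ((b 0 / M' : ℕ) : ℝ) := by
      have : ((b 0 / M' : ℕ) : ℝ) + 1 ≤ ((b q / M' : ℕ) : ℝ) := by exact_mod_cast h
      linarith
    have h2 := mul_le_mul_of_nonneg_left h1 hτ
    have h3 : 0 ≤ (1 + 2 * (z:ℝ)) *
        (2 * M * q + ∑ t ∈ Finset.Ico (b 0) (b q), devi v M M' t) := by positivity
    refine le_trans (by linarith) (Finset.sum_nonneg (fun a _ => ?_))
    set cnt := ∑ t ∈ Finset.Ico (b a) (b (a+1)), ind v a t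
    have c1 : cnt ≤ ((b (a+1) : ℕ) : ℝ) - b a := by
      refine (Finset.sum_le_sum fun t _ => ind_le_one v a t).trans ?_
      simp [Nat.cast_sub (hb (Nat.le_succ (a:ℕ)))]
    have c2 := min_le_left (r:ℝ) cnt
    have c3 := min_le_right (r:ℝ) cnt
    have := mul_le_mul_of_nonneg_left c2 (by positivity : (0:ℝ) ≤ 2 * z)
    linarith

lemma inner_scale (v : List (Fin q)) (z M M' r I : ℕ) (hM : 0 < M) (hz : z + 1 ≤ q) :
    (r : ℝ) * (2 * z * q - z ^ 2 - z) * I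
      - (1 + 2 * z) * (2 * M * q * I + ∑ t ∈ Finset.range v.length, devi v M M' t)
      - r * (2 * z * q - z ^ 2 - z) * (v.length / M') ≤
    v.length + 2 * z * (r * q * I) - (1 + 2 * z) * LCS (runs q r (q * I)) v := by
  obtain ⟨b, hb, hb0, hbl, hlcs⟩ := runs_split r (q * I) v
  have hz0 : (0:ℝ) ≤ z := by positivity
  have hzq : (z:ℝ) + 1 ≤ q := by exact_mod_cast hz
  have hτ : (0:ℝ) ≤ r * (2 * z * q - z ^ 2 - z) := by
    apply mul_nonneg (by positivity)
    nlinarith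
  rw [sum_range_blocks q I (fun j => min (r : ℝ)
    (∑ t ∈ Finset.Ico (b j) (b (j+1)), ind v (Fin.ofNat q j) t))] at hlcs
  have hper : ∀ i ∈ Finset.range I, _ := fun i _ =>
    period_bound v z M M' r hM hz (fun j => b (q * i + j)) (fun j j' h => hb (by omega))
  have hsum := Finset.sum_le_sum hper
  have hofn : ∀ i (a : Fin q), Fin.ofNat q (q * i + a) = a := by
    intro i a
    ext
    simp [Fin.ofNat, Nat.mod_eq_of_lt a.2]
  have htel1 : ∑ i ∈ Finset.range I, ∑ a : Fin q,
      (((b (q * i + (a + 1)) : ℕ) : ℝ) - b (q * i + a)) = b (q * I) := by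
    have h1 : ∀ i, ∑ a : Fin q, (((b (q * i + (a + 1)) : ℕ) : ℝ) - b (q * i + a)) =
      (b (q * (i+1)) : ℝ) - b (q * i) := by
      intro i
      have := Finset.sum_range_sub (fun j => (b (q * i + j) : ℝ)) q
      rw [Finset.sum_range] at this
      simpa [mul_add] using this
    simp only [h1]
    rw [Finset.sum_range_sub (fun i => (b (q * i) : ℝ))]
    simp [hb0]
  have htel2 : ∑ i ∈ Finset.range I,
      (((b (q * i + q) / M' : ℕ) : ℝ) - ((b (q * i + 0) / M' : ℕ) : ℝ)) ≤ v.length / M' := by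
    have := Finset.sum_range_sub (fun i => ((b (q * i) / M' : ℕ) : ℝ)) I
    simp only [mul_add, mul_one, add_zero] at this ⊢
    rw [this]
    simp only [mul_zero, hb0, Nat.zero_div, Nat.cast_zero, sub_zero]
    refine Nat.cast_div_le.trans ?_
    gcongr
    exact hbl _
  have htel3 : ∑ i ∈ Finset.range I,
      ∑ t ∈ Finset.Ico (b (q * i + 0)) (b (q * i + q)), devi v M M' t ≤
      ∑ t ∈ Finset.range v.length, devi v M M' t := by
    have := sum_segments (fun i => b (q * i)) (fun i i' h => hb (Nat.mul_le_mul_left _ h))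
      (devi v M M') I
    simp only [mul_add, mul_one, add_zero] at this ⊢
    rw [this]
    apply Finset.sum_le_sum_of_subset_of_nonneg
    · intro t ht
      have := Finset.mem_Ico.1 ht
      exact Finset.mem_range.2 (this.2.trans_le (hbl _))
    · intros; exact devi_nonneg _ _ _ _
  have hl2 : (LCS (runs q r (q * I)) v : ℝ) ≤ ∑ i ∈ Finset.range I, ∑ a : Fin q,
      min (r:ℝ) (∑ t ∈ Finset.Ico (b (q * i + a)) (b (q * i + (a+1))), ind v a t) := by
    refine hlcs.trans (le_of_eq ?_)
    apply Finset.sum_congr rfl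
    intro i _
    rw [Finset.sum_range]
    apply Finset.sum_congr rfl
    intro a _
    rw [hofn, add_assoc]
  simp only [Finset.sum_sub_distrib, Finset.sum_add_distrib, ← Finset.mul_sum,
    Finset.sum_const, Finset.card_range, Finset.card_univ, Fintype.card_fin, nsmul_eq_mul]
    at hsum htel1 htel2 htel3 hl2
  have hbv : (b (q * I) : ℝ) ≤ v.length := by exact_mod_cast hbl _
  have k1 := mul_le_mul_of_nonneg_left hl2 (by positivity : (0:ℝ) ≤ 1 + 2 * z)
  have k2 := mul_le_mul_of_nonneg_left htel3 (by positivity : (0:ℝ) ≤ 1 + 2 * z)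
  have k3 := mul_le_mul_of_nonneg_left htel2 hτ
  linarith

end Inner

section Bad
set_option linter.unusedSectionVars false
variable {q : ℕ} [NeZero q]

/-- weighted edit cost -/
noncomputable def cost {α : Type*} (z : ℕ) (x y : List α) : ℝ :=
  y.length + 2 * z * x.length - (1 + 2 * z) * LCS x y

lemma cost_nonneg {α : Type*} (z : ℕ) (x y : List α) : 0 ≤ cost z x y := by
  unfold cost
  have h1 : (LCS x y : ℝ) ≤ x.length := by exact_mod_cast LCS_le_left x y
  have h2 : (LCS x y : ℝ) ≤ y.length := by exact_mod_cast LCS_le_right x y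
  have := mul_le_mul_of_nonneg_left h1 (by positivity : (0:ℝ) ≤ 2 * z)
  linarith

lemma cost_ge {α : Type*} (z : ℕ) (x y : List α) : (y.length : ℝ) - x.length ≤ cost z x y := by
  unfold cost
  have h1 : (LCS x y : ℝ) ≤ x.length := by exact_mod_cast LCS_le_left x y
  have := mul_le_mul_of_nonneg_left h1 (by positivity : (0:ℝ) ≤ 2 * z)
  linarith

/-- energy of `v` at scale `M` -/
noncomputable def energy (v : List (Fin q)) (M X : ℕ) : ℝ :=
  ∑ a, ∑ t ∈ Finset.range X, (avgp M (ind v a) (t / M)) ^ 2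

lemma energy_nonneg' (v : List (Fin q)) (M X : ℕ) : 0 ≤ energy v M X :=
  Finset.sum_nonneg fun _ _ => Finset.sum_nonneg fun _ _ => sq_nonneg _

lemma energy_one (v : List (Fin q)) (X : ℕ) : energy v 1 X ≤ X := by
  unfold energy
  rw [Finset.sum_comm]
  have : ∀ t ∈ Finset.range X, ∑ a, (avgp 1 (ind v a) (t / 1)) ^ 2 ≤ (1:ℝ) := fun t _ =>
    (Finset.sum_le_sum fun a _ => energy_zero (ind v a) (ind_nonneg v a) (ind_le_one v a) t).trans
      (sum_ind_le_one v t)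
  refine (Finset.sum_le_sum this).trans ?_
  simp

lemma energy_step (v : List (Fin q)) (M N W : ℕ) (hM : 0 < M) (hN : 0 < N)
    (hv : v.length ≤ M * N * W) :
    (∑ t ∈ Finset.range v.length, devi v M (M * N) t) ^ 2 ≤
      ((M * N * W : ℕ) : ℝ) * q * (energy v M (M * N * W) - energy v (M * N) (M * N * W)) := by
  set X := M * N * W with hX
  have h1 : ∑ t ∈ Finset.range v.length, devi v M (M * N) t ≤
      ∑ t ∈ Finset.range X, devi v M (M * N) t := by
    apply Finset.sum_le_sum_of_subset_of_nonneg
    · exact Finset.range_subset_range.2 hv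
    · intros; exact devi_nonneg _ _ _ _
  have h0 : 0 ≤ ∑ t ∈ Finset.range v.length, devi v M (M * N) t :=
    Finset.sum_nonneg fun t _ => devi_nonneg _ _ _ _
  have h2 : (∑ t ∈ Finset.range X, devi v M (M * N) t) ^ 2 ≤
      X * ∑ t ∈ Finset.range X, (devi v M (M * N) t) ^ 2 := by
    simpa using sq_sum_le_card_mul_sum_sq (s := Finset.range X) (f := devi v M (M * N))
  have h3 : ∀ t, (devi v M (M * N) t) ^ 2 ≤
      q * ∑ a, (avgp M (ind v a) (t / M) - avgp (M * N) (ind v a) (t / (M * N))) ^ 2 := by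
    intro t
    have := sq_sum_le_card_mul_sum_sq (s := (Finset.univ : Finset (Fin q)))
      (f := fun a => |avgp M (ind v a) (t / M) - avgp (M * N) (ind v a) (t / (M * N))|)
    simpa [sq_abs, devi] using this
  have h4 : ∑ t ∈ Finset.range X, (devi v M (M * N) t) ^ 2 ≤
      q * (energy v M X - energy v (M * N) X) := by
    refine (Finset.sum_le_sum fun t _ => h3 t).trans (le_of_eq ?_)
    rw [← Finset.mul_sum, Finset.sum_comm]
    congr 1
    unfold energy
    rw [← Finset.sum_sub_distrib]
    exact Finset.sum_congr rfl fun a _ => pythagoras M N W hM hN (ind v a)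
  calc _ ≤ (∑ t ∈ Finset.range X, devi v M (M * N) t) ^ 2 := by gcongr
    _ ≤ _ := h2
    _ ≤ X * (q * (energy v M X - energy v (M * N) X)) := by gcongr
    _ = _ := by ring

/-- The inner code words. -/
def word (q : ℕ) [NeZero q] (N K k : ℕ) : List (Fin q) :=
  runs q (N ^ (2 * k + 1)) (q * N ^ (2 * K - (2 * k + 1)))

lemma word_length (N K k : ℕ) (hk : k < K) : (word q N K k).length = q * N ^ (2 * K) := by
  rw [word, runs_length]
  have : 2 * K = (2 * k + 1) + (2 * K - (2 * k + 1)) := by omega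
  conv_rhs => rw [this, pow_add]
  ring

lemma word_inj (N K k k' : ℕ) (hN : 2 ≤ N) (hq : 2 ≤ q) (h : k < k') (_hk : k' < K) :
    word q N K k ≠ word q N K k' := by
  intro he
  have e := congrArg (fun l => l[N ^ (2 * k + 1)]?) he
  have hN0 : 0 < N := by omega
  have hlt : N ^ (2 * k + 1) < N ^ (2 * k' + 1) := Nat.pow_lt_pow_right (by omega) (by omega)
  simp only [word] at e
  rw [runs_get, runs_get, Nat.div_self (by positivity), Nat.div_eq_of_lt hlt] at e
  · have := congrArg (Option.map Fin.val) e
    simp [Fin.ofNat, Nat.mod_eq_of_lt (show 1 < q by omega)] at this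
  · refine hlt.trans_le (Nat.le_mul_of_pos_right _ (by positivity))
  · have h1 : 0 < N ^ (2 * K - (2 * k + 1)) := by positivity
    have h2 : 0 < N ^ (2 * k + 1) := by positivity
    have h3 : 2 ≤ q * N ^ (2 * K - (2 * k + 1)) := by nlinarith
    nlinarith

lemma bad_step (v : List (Fin q)) (z N K W : ℕ) (ε : ℝ) (hε : 0 < ε) (hN : 2 ≤ N)
    (hz1 : 1 ≤ z) (hz : z + 1 ≤ q) (hv : v.length ≤ N ^ (2 * K) * W)
    (hNε : 4 * (q:ℝ) ^ 2 + 2 * q ^ 2 * W ≤ N * (ε / 2)) (k : ℕ) (hk : k < K)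
    (hbad : cost z (word q N K k) v < (1 - ε) * ((2 * z * q - z ^ 2 - z) * N ^ (2 * K))) :
    (ε / (4 * q)) ^ 2 * (N:ℝ) ^ (2 * K) ≤ W * q *
      (energy v (N ^ (2 * k)) (N ^ (2 * K) * W) - energy v (N ^ (2 * (k + 1))) (N ^ (2 * K) * W)) := by
  have hN0 : 0 < N := by omega
  have hNr : (0:ℝ) < N := by exact_mod_cast hN0
  have hzr : (1:ℝ) ≤ z := by exact_mod_cast hz1
  have hzq : (z:ℝ) + 1 ≤ q := by exact_mod_cast hz
  have hq0 : (0:ℝ) < q := by linarith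
  set τ : ℝ := 2 * z * q - z ^ 2 - z with hτ
  have hτ1 : 1 ≤ τ := by nlinarith
  have hτ2 : τ ≤ 2 * q ^ 2 := by nlinarith
  set U : ℝ := (N:ℝ) ^ (2 * K) with hU
  have hU0 : 0 < U := by positivity
  have key := inner_scale v z (N ^ (2 * k)) (N ^ (2 * k) * N ^ 2) (N ^ (2 * k + 1))
    (N ^ (2 * K - (2 * k + 1))) (by positivity) hz
  have hcost : cost z (word q N K k) v = v.length +
      2 * z * (((N ^ (2 * k + 1) : ℕ) : ℝ) * q * ((N ^ (2 * K - (2 * k + 1)) : ℕ) : ℝ)) -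
      (1 + 2 * z) * LCS (runs q (N ^ (2 * k + 1)) (q * N ^ (2 * K - (2 * k + 1)))) v := by
    rw [cost, word, runs_length]; push_cast; ring
  rw [← hcost] at key
  have hUr : U = (N:ℝ) ^ (2 * k + 1) * N ^ (2 * K - (2 * k + 1)) := by
    rw [hU, ← pow_add]; congr 1; omega
  set S := ∑ t ∈ Finset.range v.length, devi v (N ^ (2 * k)) (N ^ (2 * k) * N ^ 2) t with hS
  have e1 : ((N ^ (2 * k + 1) : ℕ) : ℝ) * τ * ((N ^ (2 * K - (2 * k + 1)) : ℕ) : ℝ) = τ * U := by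
    rw [hUr]; push_cast; ring
  have e2 : 2 * ((N ^ (2 * k) : ℕ) : ℝ) * q * ((N ^ (2 * K - (2 * k + 1)) : ℕ) : ℝ)
      = 2 * q * U / N := by
    rw [hUr]; push_cast; field_simp; ring
  have e3 : ((N ^ (2 * k + 1) : ℕ) : ℝ) * τ * (v.length / ((N ^ (2 * k) * N ^ 2 : ℕ) : ℝ))
      = τ * (v.length / N) := by
    push_cast; field_simp; ring
  rw [e1, e2, e3] at key
  have hvr : (v.length : ℝ) ≤ U * W := by rw [hU]; exact_mod_cast hv
  have hvN : (v.length : ℝ) / N ≤ U * W / N := by gcongr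
  have hk3 := mul_le_mul_of_nonneg_left hvN (by linarith : (0:ℝ) ≤ τ)
  have hz2q : 1 + 2 * (z:ℝ) ≤ 2 * q := by linarith
  have hS0 : 0 ≤ S := Finset.sum_nonneg fun t _ => devi_nonneg _ _ _ _
  have f1 : (1 + 2 * (z:ℝ)) * (2 * q * U / N + S) ≤ 2 * q * (2 * q * U / N + S) :=
    mul_le_mul_of_nonneg_right hz2q (by positivity)
  have f2 : τ * (U * W / N) ≤ 2 * q ^ 2 * (U * W / N) :=
    mul_le_mul_of_nonneg_right hτ2 (by positivity)
  have f3 : (4 * (q:ℝ) ^ 2 + 2 * q ^ 2 * W) * (U / N) ≤ N * (ε / 2) * (U / N) :=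
    mul_le_mul_of_nonneg_right hNε (by positivity)
  have f4 : (N:ℝ) * (ε / 2) * (U / N) = ε / 2 * U := by field_simp
  have f5 : ε * U ≤ ε * (τ * U) := by
    apply mul_le_mul_of_nonneg_left _ hε.le
    nlinarith
  have f6 : (4 * (q:ℝ) ^ 2 + 2 * q ^ 2 * W) * (U / N) =
    2 * q * (2 * q * U / N) + 2 * q ^ 2 * (U * W / N) := by ring
  have hSge : ε / (4 * q) * U ≤ S := by
    have : ε / 2 * U ≤ 2 * q * S := by
      have : (1 - ε) * (τ * U) = τ * U - ε * (τ * U) := by ring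
      linarith
    rw [div_mul_eq_mul_div, div_le_iff₀ (by positivity)]
    linarith
  have hX : N ^ (2 * K) * W = N ^ (2 * k) * N ^ 2 * (N ^ (2 * K - (2 * k + 2)) * W) := by
    rw [← mul_assoc, ← pow_add, ← pow_add]; congr 2; omega
  have hstep := energy_step v (N ^ (2 * k)) (N ^ 2) (N ^ (2 * K - (2 * k + 2)) * W)
    (by positivity) (by positivity) (by rw [← hX]; exact hv)
  rw [← hX, ← hS, ← pow_add] at hstep
  have hc : ((N ^ (2 * K) * W : ℕ) : ℝ) = U * W := by push_cast; rw [hU]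
  rw [hc] at hstep
  have hsq : (ε / (4 * q) * U) ^ 2 ≤ S ^ 2 := by
    apply pow_le_pow_left₀ (by positivity) hSge
  have h2k : 2 * (k + 1) = 2 * k + 2 := by ring
  rw [h2k]
  have hfin := hsq.trans hstep
  have : U * ((ε / (4 * q)) ^ 2 * U) ≤ U * (W * q *
      (energy v (N ^ (2 * k)) (N ^ (2 * K) * W) - energy v (N ^ (2 * k + 2)) (N ^ (2 * K) * W))) := by
    calc _ = (ε / (4 * q) * U) ^ 2 := by ring
      _ ≤ _ := hfin
      _ = _ := by ring
  exact le_of_mul_le_mul_left this hU0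

lemma energy_anti (v : List (Fin q)) (N K W k : ℕ) (hN : 2 ≤ N) (hk : k < K) :
    energy v (N ^ (2 * (k + 1))) (N ^ (2 * K) * W) ≤ energy v (N ^ (2 * k)) (N ^ (2 * K) * W) := by
  have hN0 : 0 < N := by omega
  have hX : N ^ (2 * K) * W = N ^ (2 * k) * N ^ 2 * (N ^ (2 * K - (2 * k + 2)) * W) := by
    rw [← mul_assoc, ← pow_add, ← pow_add]; congr 2; omega
  have h2k : N ^ (2 * (k + 1)) = N ^ (2 * k) * N ^ 2 := by rw [← pow_add]; congr 1
  rw [h2k, hX]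
  unfold energy
  apply Finset.sum_le_sum
  intro a _
  have := pythagoras (N ^ (2 * k)) (N ^ 2) (N ^ (2 * K - (2 * k + 2)) * W) (by positivity)
    (by positivity) (ind v a)
  have h0 : 0 ≤ ∑ t ∈ Finset.range (N ^ (2 * k) * N ^ 2 * (N ^ (2 * K - (2 * k + 2)) * W)),
    (avgp (N ^ (2 * k)) (ind v a) (t / N ^ (2 * k)) -
      avgp (N ^ (2 * k) * N ^ 2) (ind v a) (t / (N ^ (2 * k) * N ^ 2))) ^ 2 :=
    Finset.sum_nonneg fun _ _ => sq_nonneg _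
  linarith

lemma bad_count (v : List (Fin q)) (z N K W : ℕ) (ε : ℝ) (hε : 0 < ε) (hN : 2 ≤ N)
    (hz1 : 1 ≤ z) (hz : z + 1 ≤ q) (hv : v.length ≤ N ^ (2 * K) * W)
    (hNε : 4 * (q:ℝ) ^ 2 + 2 * q ^ 2 * W ≤ N * (ε / 2)) :
    (((Finset.univ : Finset (Fin K)).filter (fun k : Fin K => cost z (word q N K k) v <
      (1 - ε) * ((2 * z * q - z ^ 2 - z) * N ^ (2 * K)))).card : ℝ) ≤
      W ^ 2 * q / (ε / (4 * q)) ^ 2 := by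
  classical
  have hq0 : (0:ℝ) < q := by
    have : 0 < q := by omega
    exact_mod_cast this
  have hN0 : (0:ℝ) < N := by
    have : 0 < N := by omega
    exact_mod_cast this
  set X := N ^ (2 * K) * W with hX
  set E : ℕ → ℝ := fun k => energy v (N ^ (2 * k)) X with hE
  set A := (Finset.univ : Finset (Fin K)).filter (fun k : Fin K => cost z (word q N K k) v <
      (1 - ε) * ((2 * z * q - z ^ 2 - z) * N ^ (2 * K))) with hA
  have h1 : ∑ k ∈ A, (ε / (4 * q)) ^ 2 * (N:ℝ) ^ (2 * K) ≤
      ∑ k ∈ A, W * q * (E k - E (k + 1)) := by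
    apply Finset.sum_le_sum
    intro k hk
    exact bad_step v z N K W ε hε hN hz1 hz hv hNε k k.2 (Finset.mem_filter.1 hk).2
  have h2 : ∑ k ∈ A, (W * q * (E k - E (k + 1)) : ℝ) ≤
      ∑ k : Fin K, W * q * (E k - E (k + 1)) := by
    apply Finset.sum_le_sum_of_subset_of_nonneg (Finset.subset_univ _)
    intro k _ _
    have := energy_anti v N K W k hN k.2
    exact mul_nonneg (by positivity) (sub_nonneg.2 this)
  have h3 : ∑ k : Fin K, (W * q * (E k - E (k + 1)) : ℝ) = W * q * (E 0 - E K) := by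
    rw [← Finset.mul_sum, ← Finset.sum_range (fun k => E k - E (k+1)), Finset.sum_range_sub']
  have h4 : E 0 - E K ≤ N ^ (2 * K) * W := by
    have a1 : E 0 ≤ X := by
      have := energy_one v X
      simpa [hE] using this
    have a2 : 0 ≤ E K := energy_nonneg' _ _ _
    have a3 : (X:ℝ) = N ^ (2 * K) * W := by rw [hX]; push_cast; ring
    linarith
  have h5 : (W * q * (E 0 - E K) : ℝ) ≤ W * q * (N ^ (2 * K) * W) := by gcongr
  rw [Finset.sum_const, nsmul_eq_mul] at h1
  rw [le_div_iff₀ (by positivity)]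
  have hU : (0:ℝ) < (N:ℝ) ^ (2 * K) := by positivity
  have : (A.card * (ε / (4 * q)) ^ 2) * (N:ℝ) ^ (2 * K) ≤ (W ^ 2 * q) * (N:ℝ) ^ (2 * K) := by
    calc _ = A.card * ((ε / (4 * q)) ^ 2 * (N:ℝ) ^ (2 * K)) := by ring
      _ ≤ _ := h1
      _ ≤ _ := h2
      _ = _ := h3
      _ ≤ _ := h5
      _ = _ := by ring
  exact le_of_mul_le_mul_right this hU

end Bad

section DP
variable {α : Type*}

/-- concatenation of words -/
def enc {K : ℕ} (w : Fin K → List α) : (m : ℕ) → (Fin m → Fin K) → List α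
  | 0, _ => []
  | m + 1, c => w (c 0) ++ enc w m (Fin.tail c)

lemma enc_length {K : ℕ} (w : Fin K → List α) (B : ℕ) (hw : ∀ k, (w k).length = B) :
    ∀ (m : ℕ) (c : Fin m → Fin K), (enc w m c).length = m * B
  | 0, c => by simp [enc]
  | m + 1, c => by simp [enc, hw, enc_length w B hw m]; ring

lemma enc_inj {K : ℕ} (w : Fin K → List α) (B : ℕ) (hw : ∀ k, (w k).length = B)
    (hinj : Function.Injective w) : ∀ m : ℕ, Function.Injective (enc w m)
  | 0 => fun c c' _ => Subsingleton.elim _ _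
  | m + 1 => fun c c' h => by
    rw [enc, enc] at h
    obtain ⟨h1, h2⟩ := List.append_inj h (by rw [hw, hw])
    have h3 := enc_inj w B hw hinj m h2
    rw [← Fin.cons_self_tail c, ← Fin.cons_self_tail c', hinj h1, h3]

lemma cost_append (z g : ℕ) (hg : 0 < g) (x1 x2 y : List α) :
    ∃ h ∈ Finset.range (y.length / g + 1),
      cost z x1 (y.take ((h + 1) * g)) + cost z x2 (y.drop (h * g)) - g ≤ cost z (x1 ++ x2) y := by
  obtain ⟨i, hi, h⟩ := LCS_append x1 x2 y
  refine ⟨i / g, Finset.mem_range.2 (Nat.lt_succ_of_le (Nat.div_le_div_right hi)), ?_⟩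
  have hlow : i / g * g ≤ i := Nat.div_mul_le_self i g
  have hhigh : i ≤ (i / g + 1) * g := by
    have := Nat.lt_div_mul_add (a := i) hg
    rw [add_mul]; omega
  have l1 : LCS x1 (y.take i) ≤ LCS x1 (y.take ((i / g + 1) * g)) := by
    apply LCS_mono_right
    exact (List.take_prefix_take_left hhigh).sublist
  have l2 : LCS x2 (y.drop i) ≤ LCS x2 (y.drop (i / g * g)) := by
    apply LCS_mono_right
    exact (List.drop_suffix_drop_left _ hlow).sublist
  have l3 : (LCS (x1 ++ x2) y : ℝ) ≤ LCS x1 (y.take ((i / g + 1) * g)) +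
      LCS x2 (y.drop (i / g * g)) := by exact_mod_cast h.trans (add_le_add l1 l2)
  have l4 : ((y.take ((i / g + 1) * g)).length : ℝ) ≤ (i / g : ℕ) * g + g := by
    have : (y.take ((i / g + 1) * g)).length ≤ (i / g) * g + g := by
      rw [List.length_take, add_mul, one_mul]; exact min_le_left _ _
    exact_mod_cast this
  have l5 : ((y.drop (i / g * g)).length : ℝ) = y.length - (i / g : ℕ) * g := by
    rw [List.length_drop, Nat.cast_sub (hlow.trans hi)]; push_cast; ring
  unfold cost
  rw [List.length_append, l5]
  push_cast
  have := mul_le_mul_of_nonneg_left l3 (by positivity : (0:ℝ) ≤ 1 + 2 * z)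
  linarith

lemma dp_bound {K : ℕ} (w : Fin K → List α) (z g : ℕ) (hg : 0 < g) (lam ρ : ℝ) (hlam : 0 ≤ lam)
    (hρ : ∀ y : List α, Real.exp (lam * g) * ∑ h ∈ Finset.range (y.length / g + 1), ∑ k,
      Real.exp (-lam * cost z (w k) (y.take ((h + 1) * g))) ≤ ρ) :
    ∀ (m : ℕ) (y : List α), ∑ c : Fin m → Fin K, Real.exp (-lam * cost z (enc w m c) y) ≤ ρ ^ m := by
  intro m
  induction m with
  | zero =>
    intro y
    simp [enc]
    exact mul_nonneg hlam (cost_nonneg _ _ _)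
  | succ m ih =>
    intro y
    have hρ0 : 0 ≤ ρ := le_trans (by positivity) (hρ y)
    rw [← (Fin.consEquiv (fun _ : Fin (m+1) => Fin K)).sum_comp, Fintype.sum_prod_type]
    have step : ∀ (k : Fin K) (c : Fin m → Fin K),
        Real.exp (-lam * cost z (enc w (m+1) ((Fin.consEquiv (fun _ : Fin (m+1) => Fin K)) (k, c))) y)
        ≤ ∑ h ∈ Finset.range (y.length / g + 1), Real.exp (lam * g) *
          Real.exp (-lam * cost z (w k) (y.take ((h + 1) * g))) *
          Real.exp (-lam * cost z (enc w m c) (y.drop (h * g))) := by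
      intro k c
      have henc : enc w (m+1) ((Fin.consEquiv (fun _ : Fin (m+1) => Fin K)) (k, c)) =
        w k ++ enc w m c := by
        simp [enc, Fin.consEquiv]
      rw [henc]
      obtain ⟨h, hh, hc⟩ := cost_append z g hg (w k) (enc w m c) y
      refine le_trans ?_ (Finset.single_le_sum (f := fun h => Real.exp (lam * g) *
          Real.exp (-lam * cost z (w k) (y.take ((h + 1) * g))) *
          Real.exp (-lam * cost z (enc w m c) (y.drop (h * g)))) (fun _ _ => by positivity) hh)
      rw [← Real.exp_add, ← Real.exp_add]
      apply Real.exp_le_exp.2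
      have := mul_le_mul_of_nonneg_left hc hlam
      linarith
    calc _ ≤ ∑ k : Fin K, ∑ c : Fin m → Fin K, ∑ h ∈ Finset.range (y.length / g + 1),
          Real.exp (lam * g) *
          Real.exp (-lam * cost z (w k) (y.take ((h + 1) * g))) *
          Real.exp (-lam * cost z (enc w m c) (y.drop (h * g))) :=
          Finset.sum_le_sum fun k _ => Finset.sum_le_sum fun c _ => step k c
      _ = ∑ k : Fin K, ∑ h ∈ Finset.range (y.length / g + 1), Real.exp (lam * g) *
          Real.exp (-lam * cost z (w k) (y.take ((h + 1) * g))) *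
          ∑ c : Fin m → Fin K, Real.exp (-lam * cost z (enc w m c) (y.drop (h * g))) := by
          refine Finset.sum_congr rfl fun k _ => ?_
          rw [Finset.sum_comm]
          simp only [Finset.mul_sum]
      _ ≤ ∑ k : Fin K, ∑ h ∈ Finset.range (y.length / g + 1), Real.exp (lam * g) *
          Real.exp (-lam * cost z (w k) (y.take ((h + 1) * g))) * ρ ^ m := by
          refine Finset.sum_le_sum fun k _ => Finset.sum_le_sum fun h _ => ?_
          gcongr
          exact ih _
      _ = (Real.exp (lam * g) * ∑ h ∈ Finset.range (y.length / g + 1), ∑ k,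
          Real.exp (-lam * cost z (w k) (y.take ((h + 1) * g)))) * ρ ^ m := by
          rw [Finset.sum_comm]
          simp only [Finset.mul_sum, Finset.sum_mul]
      _ ≤ ρ * ρ ^ m := by gcongr; exact hρ y
      _ = ρ ^ (m + 1) := by ring

lemma tail_sum (f : ℕ → ℝ) (n H : ℕ) (a b x : ℝ) (ha : 0 ≤ a) (hb : 0 ≤ b) (hx : 0 ≤ x)
    (hx2 : x ≤ 1 / 2) (h1 : ∀ h < n, h < H → f h ≤ a) (h2 : ∀ h < n, f h ≤ b * x ^ h) :
    ∑ h ∈ Finset.range n, f h ≤ H * a + 2 * (b * x ^ H) := by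
  have key : ∀ h ∈ Finset.range n, f h ≤
      (if h < H then a else 0) + (if h < H then 0 else b * x ^ h) := by
    intro h hh
    have hh := Finset.mem_range.1 hh
    split_ifs with hc
    · simpa using h1 h hh hc
    · simpa using h2 h hh
  refine (Finset.sum_le_sum key).trans ?_
  have hmono : ∑ h ∈ Finset.range n, ((if h < H then a else 0) + (if h < H then 0 else b * x ^ h))
     ≤ ∑ h ∈ Finset.range (H + n), ((if h < H then a else 0) + (if h < H then 0 else b * x ^ h)) := by
    apply Finset.sum_le_sum_of_subset_of_nonneg
    · exact Finset.range_subset_range.2 (by omega)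
    · intros; split_ifs <;> positivity
  refine hmono.trans ?_
  rw [Finset.sum_range_add]
  apply add_le_add
  · rw [Finset.sum_congr rfl (g := fun _ => a)
      (fun h hh => by simp [Finset.mem_range.1 hh])]
    simp
  · have : ∀ i ∈ Finset.range n, ((if H + i < H then a else 0) +
        (if H + i < H then 0 else b * x ^ (H + i))) ≤ (b * x ^ H) * (1 / 2) ^ i := by
      intro i _
      rw [if_neg (by omega), if_neg (by omega), zero_add, pow_add, ← mul_assoc]
      gcongr
    refine (Finset.sum_le_sum this).trans ?_
    rw [← Finset.mul_sum, mul_comm 2]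
    gcongr
    exact sum_geometric_two_le n

end DP

section Main
variable {q : ℕ} [NeZero q]

lemma level_bound (z N K W : ℕ) (ε lam L0 : ℝ) (hlam : 0 ≤ lam) (hε : 0 < ε) (hN : 2 ≤ N)
    (hz1 : 1 ≤ z) (hz : z + 1 ≤ q)
    (hNε : 4 * (q:ℝ) ^ 2 + 2 * q ^ 2 * W ≤ N * (ε / 2))
    (hL0 : L0 = W ^ 2 * q / (ε / (4 * q)) ^ 2)
    (v : List (Fin q)) (hv : v.length ≤ N ^ (2 * K) * W) :
    ∑ k : Fin K, Real.exp (-lam * cost z (word q N K k) v) ≤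
      L0 + K * Real.exp (-lam * ((1 - ε) * ((2 * z * q - z ^ 2 - z) * N ^ (2 * K)))) := by
  classical
  have hb := bad_count v z N K W ε hε hN hz1 hz hv hNε
  set θ : ℝ := (1 - ε) * ((2 * z * q - z ^ 2 - z) * N ^ (2 * K)) with hθ
  have key : ∀ k : Fin K, Real.exp (-lam * cost z (word q N K k) v) ≤
      (if cost z (word q N K k) v < θ then 1 else 0) + Real.exp (-lam * θ) := by
    intro k
    split_ifs with h
    · have h1 : Real.exp (-lam * cost z (word q N K k) v) ≤ 1 := by
        rw [Real.exp_le_one_iff]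
        have := mul_nonneg hlam (cost_nonneg z (word q N K k) v)
        linarith
      have := Real.exp_pos (-lam * θ)
      linarith
    · rw [zero_add]
      apply Real.exp_le_exp.2
      have := mul_le_mul_of_nonneg_left (not_lt.1 h) hlam
      linarith
  refine (Finset.sum_le_sum fun k _ => key k).trans ?_
  rw [Finset.sum_add_distrib, Finset.sum_boole, Finset.sum_const, Finset.card_univ,
    Fintype.card_fin, nsmul_eq_mul, hL0]
  gcongr

set_option maxHeartbeats 1000000 in
lemma ball_bound (z N K C G g : ℕ) (ε μ L0 : ℝ) (hμ : 0 ≤ μ) (hε : 0 < ε) (hε1 : ε < 1)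
    (hN : 2 ≤ N) (hG : 0 < G) (hC : C = 1 + 2 * q)
    (hz1 : 1 ≤ z) (hz : z + 1 ≤ q) (hg : g * G = q * N ^ (2 * K))
    (hNε : 4 * (q:ℝ) ^ 2 + 2 * q ^ 2 * ((C * q : ℕ) : ℝ) ≤ N * (ε / 4 / 2))
    (hL0 : L0 = ((C * q : ℕ) : ℝ) ^ 2 * q / (ε / 4 / (4 * q)) ^ 2)
    (hGε : 8 ≤ ε * G) (hx : Real.exp (-(μ / G)) ≤ 1 / 2)
    (hμ2 : ((C * G : ℕ) + 2 : ℝ) * Real.exp (-(μ * (ε / 8))) ≤ 1 / 32)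
    (hK : 32 * (Real.exp (μ * (2 * q + 1)) * ((C * G : ℕ) * L0)) ≤ K)
    (m : ℕ) (y : List (Fin q)) :
    (((Finset.univ : Finset (Fin m → Fin K)).filter (fun c =>
      cost z (enc (fun k : Fin K => word q N K k) m c) y ≤
        (1 - ε / 2) * ((2 * z * q - z ^ 2 - z) / q) * (m * (q * N ^ (2 * K))))).card : ℝ) * 16 ^ m
      ≤ (K:ℝ) ^ m := by
  classical
  have hN0 : (0:ℝ) < N := by
    have : 0 < N := by omega
    exact_mod_cast this
  have hzr : (1:ℝ) ≤ z := by exact_mod_cast hz1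
  have hzq : (z:ℝ) + 1 ≤ q := by exact_mod_cast hz
  have hq0 : (0:ℝ) < q := by linarith
  have hGr : (0:ℝ) < G := by exact_mod_cast hG
  set U : ℝ := (N:ℝ) ^ (2 * K) with hU
  have hU0 : 0 < U := by positivity
  set τ : ℝ := 2 * z * q - z ^ 2 - z with hτ
  set T : ℝ := τ / q with hT
  have hτq : q ≤ τ := by nlinarith
  have hτq2 : τ ≤ 2 * q * q := by nlinarith
  have hT1 : 1 ≤ T := by rw [hT, le_div_iff₀ hq0]; linarith
  have hT2 : T ≤ 2 * q := by rw [hT, div_le_iff₀ hq0]; linarith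
  have hgr : (g:ℝ) * G = q * U := by rw [hU]; exact_mod_cast hg
  have hg0 : 0 < g := by
    rcases Nat.eq_zero_or_pos g with h | h
    · rw [h] at hgr; push_cast at hgr
      have : 0 < q * U := by positivity
      linarith
    · exact h
  set B : ℝ := q * U with hB
  have hB0 : 0 < B := by positivity
  set lam : ℝ := μ / B with hlam
  have hlam0 : 0 ≤ lam := by positivity
  have hlg : lam * g = μ / G := by
    rw [hlam, ← hgr]; 
    have : (g:ℝ) ≠ 0 := by positivity
    field_simp
  have hlB : lam * B = μ := by rw [hlam]; field_simp
  have hL00 : 0 ≤ L0 := by rw [hL0]; positivity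
  set x := Real.exp (-(μ / G)) with hxdef
  set a : ℝ := L0 + K * Real.exp (-(μ * ((1 - ε / 4) * T))) with ha
  set ρ : ℝ := Real.exp (μ / G) * ((C * G : ℕ) * a + 2 * (K * Real.exp μ * x ^ (C * G))) with hρ
  have hdp := dp_bound (fun k : Fin K => word q N K k) z g hg0 lam ρ hlam0 (by
    intro y
    rw [hlg, hρ]
    apply mul_le_mul_of_nonneg_left _ (Real.exp_pos _).le
    apply tail_sum _ _ _ _ _ _ (by positivity) (by positivity) (Real.exp_pos _).le hx
    · intro h _ hH
      have := level_bound z N K (C * q) (ε / 4) lam L0 hlam0 (by linarith) hN hz1 hz hNε hL0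
        (y.take ((h + 1) * g)) (by
          rw [List.length_take]
          refine (min_le_left _ _).trans ?_
          calc (h + 1) * g ≤ C * G * g := Nat.mul_le_mul_right _ hH
            _ = C * (g * G) := by ring
            _ = N ^ (2 * K) * (C * q) := by rw [hg]; ring)
      refine this.trans (le_of_eq ?_)
      rw [ha]
      congr 3
      change -lam * ((1 - ε / 4) * (τ * U)) = _
      rw [← hlB, hB, hT]
      field_simp
    · intro h hn
      have hcost : ∀ k : Fin K, Real.exp (-lam * cost z (word q N K k) (y.take ((h + 1) * g))) ≤
          Real.exp μ * x ^ h := by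
        intro k
        rw [hxdef, ← Real.exp_nat_mul, ← Real.exp_add]
        apply Real.exp_le_exp.2
        have c1 := cost_ge z (word q N K k) (y.take ((h + 1) * g))
        rw [word_length N K k k.2] at c1
        have c2 : (h:ℝ) * g ≤ ((y.take ((h + 1) * g)).length : ℝ) := by
          have : h * g ≤ (y.take ((h + 1) * g)).length := by
            rw [List.length_take]
            apply le_min
            · exact Nat.mul_le_mul_right _ (by omega)
            · exact (Nat.le_div_iff_mul_le hg0).1 (by omega)
          exact_mod_cast this
        push_cast at c1
        have c3 : (h:ℝ) * g - B ≤ cost z (word q N K k) (y.take ((h + 1) * g)) := by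
          rw [hB, hU]; linarith
        have c4 := mul_le_mul_of_nonneg_left c3 hlam0
        have c5 : lam * (h * g - B) = h * (μ / G) - μ := by
          rw [mul_sub, hlB, ← hlg]; ring
        linarith
      refine (Finset.sum_le_sum fun k _ => hcost k).trans (le_of_eq ?_)
      simp
      ring) m y
  set s : ℝ := (1 - ε / 2) * T with hs
  set A := (Finset.univ : Finset (Fin m → Fin K)).filter (fun c =>
      cost z (enc (fun k : Fin K => word q N K k) m c) y ≤ s * (m * B)) with hA
  have hcard : (A.card : ℝ) * Real.exp (-(μ * s * m)) ≤ ρ ^ m := by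
    refine le_trans ?_ hdp
    refine le_trans ?_ (Finset.sum_le_sum_of_subset_of_nonneg (Finset.subset_univ A)
      fun _ _ _ => (Real.exp_pos _).le)
    rw [← nsmul_eq_mul, ← Finset.sum_const]
    apply Finset.sum_le_sum
    intro c hc
    apply Real.exp_le_exp.2
    have h1 := mul_le_mul_of_nonneg_left (Finset.mem_filter.1 hc).2 hlam0
    have h2 : lam * (s * (m * B)) = μ * s * m := by rw [← hlB]; ring
    linarith
  have hs2 : s ≤ 2 * q := by rw [hs]; nlinarith
  have hxH : Real.exp μ * x ^ (C * G) = Real.exp (-(μ * (2 * q))) := by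
    rw [hxdef, ← Real.exp_nat_mul, ← Real.exp_add]
    congr 1
    rw [hC]; push_cast
    field_simp
    ring
  have hGinv : 1 / (G:ℝ) ≤ ε / 8 := by
    rw [div_le_div_iff₀ hGr (by norm_num)]; linarith
  have hG1 : 1 / (G:ℝ) ≤ 1 := by linarith
  have hμG : μ / G = μ * (1 / G) := by ring
  have e1 : Real.exp (μ * s) * Real.exp (μ / G) ≤ Real.exp (μ * (2 * q + 1)) := by
    rw [← Real.exp_add]
    apply Real.exp_le_exp.2
    rw [hμG, ← mul_add]
    exact mul_le_mul_of_nonneg_left (by linarith) hμ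
  have e2 : Real.exp (μ * s) * Real.exp (μ / G) * Real.exp (-(μ * ((1 - ε / 4) * T))) ≤
      Real.exp (-(μ * (ε / 8))) := by
    rw [← Real.exp_add, ← Real.exp_add]
    apply Real.exp_le_exp.2
    have : s + 1 / G - (1 - ε / 4) * T ≤ -(ε / 8) := by
      rw [hs]; nlinarith
    have := mul_le_mul_of_nonneg_left this hμ
    rw [hμG]; linarith
  have e3 : Real.exp (-(μ * (2 * q))) ≤ Real.exp (-(μ * ((1 - ε / 4) * T))) := by
    apply Real.exp_le_exp.2
    have : (1 - ε / 4) * T ≤ 2 * q := by nlinarith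
    have := mul_le_mul_of_nonneg_left this hμ
    linarith
  have hmain : Real.exp (μ * s) * ρ * 16 ≤ K := by
    set H : ℝ := ((C * G : ℕ) : ℝ) with hH
    have hH0 : 0 ≤ H := by positivity
    set P := Real.exp (μ * s) * Real.exp (μ / G) with hP
    have hP0 : 0 ≤ P := by positivity
    set Q := Real.exp (-(μ * ((1 - ε / 4) * T))) with hQ
    have r1 : Real.exp (μ * s) * ρ = P * (H * L0) + K * (H * (P * Q) + 2 * (P * Real.exp (-(μ * (2 * q))))) := by
      rw [hρ, ha, ← hxH]; ring
    have r2 : P * Real.exp (-(μ * (2 * q))) ≤ P * Q := mul_le_mul_of_nonneg_left e3 hP0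
    have r3 : P * (H * L0) ≤ Real.exp (μ * (2 * q + 1)) * (H * L0) :=
      mul_le_mul_of_nonneg_right e1 (by positivity)
    have r4 : H * (P * Q) + 2 * (P * Real.exp (-(μ * (2 * q)))) ≤ 1 / 32 := by
      have : (H + 2) * (P * Q) ≤ (H + 2) * Real.exp (-(μ * (ε / 8))) :=
        mul_le_mul_of_nonneg_left e2 (by positivity)
      linarith
    have r5 := mul_le_mul_of_nonneg_left r4 (Nat.cast_nonneg K : (0:ℝ) ≤ K)
    rw [r1]
    linarith
  have hρ0 : 0 ≤ ρ := by rw [hρ]; positivity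
  clear_value ρ
  calc (A.card : ℝ) * 16 ^ m
      = (A.card * Real.exp (-(μ * s * m))) * (Real.exp (μ * s * m) * 16 ^ m) := by
        have h1 : Real.exp (-(μ * s * m)) * Real.exp (μ * s * m) = 1 := by
          rw [← Real.exp_add, neg_add_cancel, Real.exp_zero]
        linear_combination (-(A.card * 16 ^ m : ℝ)) * h1
    _ ≤ ρ ^ m * (Real.exp (μ * s * m) * 16 ^ m) :=
        mul_le_mul_of_nonneg_right hcard (by positivity)
    _ = (Real.exp (μ * s) * ρ * 16) ^ m := by
        rw [mul_comm (μ * s), Real.exp_nat_mul, mul_pow, mul_pow]; ring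
    _ ≤ (K:ℝ) ^ m := by
        apply pow_le_pow_left₀ (by positivity) hmain

lemma inner_main (hq : 2 ≤ q) (ε : ℝ) (hε : 0 < ε) (hε1 : ε < 1) :
    ∃ (K B : ℕ) (w : Fin K → List (Fin q)), 4 ≤ K ∧ 0 < B ∧ (∀ k, (w k).length = B) ∧
      Function.Injective w ∧ ∀ z : ℕ, 1 ≤ z → z + 1 ≤ q → ∀ (m : ℕ) (y : List (Fin q)),
      (((Finset.univ : Finset (Fin m → Fin K)).filter (fun c =>
        cost z (enc w m c) y ≤
        (1 - ε / 2) * ((2 * z * q - z ^ 2 - z) / q) * (m * B))).card : ℝ) * 16 ^ m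
      ≤ (K:ℝ) ^ m := by
  obtain ⟨G, hG⟩ := exists_nat_gt (8 / ε)
  have hGr : (0:ℝ) < G := lt_trans (by positivity) hG
  have hG0 : 0 < G := by exact_mod_cast hGr
  have hGε : 8 ≤ ε * G := by
    rw [div_lt_iff₀ hε] at hG; linarith
  set C := 1 + 2 * q with hC
  set L0 : ℝ := ((C * q : ℕ) : ℝ) ^ 2 * q / (ε / 4 / (4 * q)) ^ 2 with hL0
  obtain ⟨N1, hN1⟩ := exists_nat_gt
    (max 2 ((4 * (q:ℝ) ^ 2 + 2 * q ^ 2 * ((C * q : ℕ) : ℝ)) / (ε / 4 / 2)))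
  obtain ⟨hN1a, hN1b⟩ := max_lt_iff.1 hN1
  have hN1a' : 2 < N1 := by exact_mod_cast hN1a
  set N := G * N1 with hN
  have hNN : N1 ≤ N := Nat.le_mul_of_pos_left _ hG0
  have hNNr : (N1 : ℝ) ≤ N := by exact_mod_cast hNN
  have hN2 : 2 ≤ N := by omega
  have hNε : 4 * (q:ℝ) ^ 2 + 2 * q ^ 2 * ((C * q : ℕ) : ℝ) ≤ N * (ε / 4 / 2) := by
    rw [div_lt_iff₀ (by positivity)] at hN1b
    refine hN1b.le.trans ?_
    gcongr
  obtain ⟨μ, hμ⟩ : ∃ μ : ℝ, 0 ≤ μ ∧ Real.exp (-(μ / G)) ≤ 1 / 2 ∧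
      ((C * G : ℕ) + 2 : ℝ) * Real.exp (-(μ * (ε / 8))) ≤ 1 / 32 := by
    have t1 : Filter.Tendsto (fun μ : ℝ => Real.exp (-(μ / G))) Filter.atTop (nhds 0) :=
      Real.tendsto_exp_neg_atTop_nhds_zero.comp (Filter.tendsto_id.atTop_div_const hGr)
    have t2 : Filter.Tendsto (fun μ : ℝ => ((C * G : ℕ) + 2 : ℝ) * Real.exp (-(μ * (ε / 8))))
        Filter.atTop (nhds 0) := by
      have := (Real.tendsto_exp_neg_atTop_nhds_zero.comp
        (Filter.tendsto_id.atTop_mul_const (by positivity : 0 < ε / 8))).const_mul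
        ((C * G : ℕ) + 2 : ℝ)
      simpa using this
    have := (Filter.eventually_ge_atTop (0:ℝ)).and
      ((t1.eventually_le_const (by norm_num : (0:ℝ) < 1 / 2)).and
      (t2.eventually_le_const (by norm_num : (0:ℝ) < 1 / 32)))
    exact this.exists
  obtain ⟨hμ0, hx, hμ2⟩ := hμ
  obtain ⟨K, hK⟩ := exists_nat_gt
    (max 4 (32 * (Real.exp (μ * (2 * q + 1)) * ((C * G : ℕ) * L0))))
  obtain ⟨hK4, hK2⟩ := max_lt_iff.1 hK
  have hK4' : 4 < K := by exact_mod_cast hK4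
  have hdvd : G ∣ N ^ (2 * K) := (Dvd.intro _ rfl : G ∣ N).trans (dvd_pow_self _ (by omega))
  obtain ⟨g0, hg0⟩ := hdvd
  refine ⟨K, q * N ^ (2 * K), fun k => word q N K k, hK4'.le, by positivity,
    fun k => word_length N K k k.2, ?_, ?_⟩
  · intro k k' h
    by_contra hne
    rcases lt_or_gt_of_ne (fun h => hne (Fin.ext h) : (k:ℕ) ≠ k') with h1 | h1
    · exact word_inj N K k k' hN2 hq h1 k'.2 h
    · exact word_inj N K k' k hN2 hq h1 k.2 h.symm
  · intro z hz1 hz m y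
    have := ball_bound z N K C G (q * g0) ε μ L0 hμ0 hε hε1 hN2 hG0 hC hz1 hz
      (by rw [hg0]; ring) hNε hL0 hGε hx hμ2 hK2.le m y
    push_cast at this ⊢
    exact this

end Main

theorem greedy_step {X ι : Type*} [Fintype X] [DecidableEq X] [Fintype ι]
    (Ball : ι → Finset X) (A b : ℝ) (hA : 0 ≤ A) (hb : 0 ≤ b)
    (hB : ∀ y, ((Ball y).card : ℝ) ≤ b * Fintype.card X) (C : Finset X)
    (hC : 2 * C.card ≤ Fintype.card X) (hX : 0 < Fintype.card X) :
    ∃ x, x ∉ C ∧ ∑ y, A ^ ((insert x C) ∩ Ball y).card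
      ≤ (∑ y, A ^ (C ∩ Ball y).card) * (1 + 2 * A * b) := by
  set Φ := ∑ y, A ^ (C ∩ Ball y).card with hΦ
  have hΦ0 : 0 ≤ Φ := Finset.sum_nonneg fun _ _ => by positivity
  have hcard : Cᶜ.card + C.card = Fintype.card X := by
    rw [Finset.card_compl]; have := Finset.card_le_univ C; omega
  have hne : Cᶜ.Nonempty := by
    rw [← Finset.card_pos]; omega
  have hterm : ∀ x ∈ Cᶜ, ∑ y, A ^ ((insert x C) ∩ Ball y).card
      ≤ ∑ y, A ^ (C ∩ Ball y).card * (1 + A * (if x ∈ Ball y then 1 else 0)) := by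
    intro x hx
    refine Finset.sum_le_sum fun y _ => ?_
    have hxC : x ∉ C := by simpa using hx
    by_cases hy : x ∈ Ball y
    · rw [Finset.insert_inter_of_mem hy, Finset.card_insert_of_notMem (by simp [hxC]), pow_succ]
      have : 0 ≤ A ^ (C ∩ Ball y).card := by positivity
      simp only [hy, if_true]
      nlinarith
    · rw [Finset.insert_inter_of_notMem hy]
      simp [hy]
  have hsum : ∑ x ∈ Cᶜ, ∑ y, A ^ ((insert x C) ∩ Ball y).card
      ≤ ∑ x ∈ Cᶜ, Φ * (1 + 2 * A * b) := by
    refine (Finset.sum_le_sum hterm).trans ?_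
    rw [Finset.sum_comm, Finset.sum_const, nsmul_eq_mul]
    have : ∀ y, ∑ x ∈ Cᶜ, A ^ (C ∩ Ball y).card * (1 + A * (if x ∈ Ball y then (1:ℝ) else 0))
        ≤ A ^ (C ∩ Ball y).card * (Cᶜ.card * (1 + 2 * A * b)) := by
      intro y
      rw [← Finset.mul_sum]
      refine mul_le_mul_of_nonneg_left ?_ (by positivity)
      rw [Finset.sum_add_distrib, ← Finset.mul_sum, Finset.sum_const, nsmul_eq_mul, mul_one,
        Finset.sum_boole]
      have h1 : ((Cᶜ.filter (fun x => x ∈ Ball y)).card : ℝ) ≤ (Ball y).card := by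
        exact_mod_cast Finset.card_le_card (fun x hx => (Finset.mem_filter.1 hx).2)
      have h2 : (Fintype.card X : ℝ) ≤ 2 * Cᶜ.card := by
        exact_mod_cast (by omega : Fintype.card X ≤ 2 * Cᶜ.card)
      have h3 : ((Cᶜ.filter (fun x => x ∈ Ball y)).card : ℝ) ≤ b * (2 * Cᶜ.card) :=
        h1.trans ((hB y).trans (mul_le_mul_of_nonneg_left h2 hb))
      have h4 := mul_le_mul_of_nonneg_left h3 hA
      linarith
    refine (Finset.sum_le_sum fun y _ => this y).trans ?_
    rw [← Finset.sum_mul]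
    apply le_of_eq
    rw [← hΦ]; clear_value Φ; ring
  obtain ⟨x, hx, hle⟩ := Finset.exists_le_of_sum_le hne hsum
  exact ⟨x, by simpa using hx, hle⟩

theorem greedy_main {X ι : Type*} [Fintype X] [DecidableEq X] [Fintype ι]
    (Ball : ι → Finset X) (m : ℕ) (hm : 1 ≤ m)
    (hB : ∀ y, ((Ball y).card : ℝ) * 8 ^ m ≤ Fintype.card X)
    (hX : 2 * 2 ^ m ≤ Fintype.card X) :
    ∃ C : Finset X, C.card = 2 ^ m ∧
      ∀ y, ((2:ℝ) ^ m) ^ (C ∩ Ball y).card ≤ 3 * Fintype.card ι := by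
  have hp : 0 < 2 ^ m := by positivity
  have hB' : ∀ y, ((Ball y).card : ℝ) ≤ (1 / 8 ^ m) * Fintype.card X := by
    intro y
    rw [one_div, inv_mul_eq_div, le_div_iff₀ (by positivity)]
    exact hB y
  have key : ∀ k, k ≤ 2 ^ m → ∃ C : Finset X, C.card = k ∧
      ∑ y, ((2:ℝ) ^ m) ^ (C ∩ Ball y).card
        ≤ Fintype.card ι * (1 + 2 * 2 ^ m * (1 / 8 ^ m)) ^ k := by
    intro k
    induction k with
    | zero => intro _; exact ⟨∅, by simp⟩
    | succ k ih =>
      intro hk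
      obtain ⟨C, hC, hΦ⟩ := ih (by omega)
      obtain ⟨x, hx, hle⟩ := greedy_step Ball ((2:ℝ) ^ m) (1 / 8 ^ m) (by positivity)
        (by positivity) hB' C (by omega) (by omega)
      refine ⟨insert x C, by rw [Finset.card_insert_of_notMem hx, hC], hle.trans ?_⟩
      rw [pow_succ, ← mul_assoc]
      exact mul_le_mul_of_nonneg_right hΦ (by positivity)
  obtain ⟨C, hC, hΦ⟩ := key _ le_rfl
  refine ⟨C, hC, fun y => ?_⟩
  have h1 : ((2:ℝ) ^ m) ^ (C ∩ Ball y).card ≤ ∑ y, ((2:ℝ) ^ m) ^ (C ∩ Ball y).card :=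
    Finset.single_le_sum (f := fun y => ((2:ℝ) ^ m) ^ (C ∩ Ball y).card)
      (fun _ _ => by positivity) (Finset.mem_univ y)
  have h2 : (1 + 2 * (2:ℝ) ^ m * (1 / 8 ^ m)) ^ (2 ^ m) ≤ 3 := by
    set t := 2 * (2:ℝ) ^ m * (1 / 8 ^ m) with ht
    have ht0 : 0 ≤ t := by positivity
    have ht1 : ((2 ^ m : ℕ) : ℝ) * t ≤ 1 := by
      have h8 : (8:ℝ) ^ m = 2 ^ m * 2 ^ m * 2 ^ m := by
        rw [← mul_pow, ← mul_pow]; norm_num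
      have h2m : (2:ℝ) ≤ 2 ^ m := by
        calc (2:ℝ) = 2 ^ 1 := by norm_num
          _ ≤ 2 ^ m := pow_le_pow_right₀ (by norm_num) hm
      rw [ht, h8]
      push_cast
      have hpos : (0:ℝ) < 2 ^ m := by positivity
      generalize (2:ℝ) ^ m = a at *
      have : a * (2 * a * (1 / (a * a * a))) = 2 / a := by field_simp
      rw [this, div_le_one hpos]
      exact h2m
    calc (1 + t) ^ (2 ^ m) ≤ (Real.exp t) ^ (2 ^ m) := by
          refine pow_le_pow_left₀ (by positivity) ?_ _
          have := Real.add_one_le_exp t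
          linarith
      _ = Real.exp (((2 ^ m : ℕ) : ℝ) * t) := (Real.exp_nat_mul _ _).symm
      _ ≤ Real.exp 1 := Real.exp_le_exp.2 ht1
      _ ≤ 3 := by have := Real.exp_one_lt_d9; linarith
  have h3 := mul_le_mul_of_nonneg_left h2 (Nat.cast_nonneg (Fintype.card ι) : (0:ℝ) ≤ _)
  linarith

theorem exists_code_list {α : Type*} (N : ℕ) : ∀ l : List α, l.length ≤ N →
    ∃ f : Fin N → Option α, (List.ofFn f).reduceOption = l := by
  induction N with
  | zero => intro l hl; exact ⟨fun _ => none, by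
      have : l = [] := List.length_eq_zero_iff.1 (by omega)
      subst this; rfl⟩
  | succ N ih =>
    intro l hl
    cases l with
    | nil =>
      obtain ⟨f, hf⟩ := ih [] (by simp)
      refine ⟨Fin.cons none f, ?_⟩
      rw [List.ofFn_succ]
      simpa using hf
    | cons a l =>
      obtain ⟨f, hf⟩ := ih l (by simpa using hl)
      refine ⟨Fin.cons (some a) f, ?_⟩
      rw [List.ofFn_succ]
      simpa using hf

theorem cost_pad {α : Type*} (z : ℕ) (x p y : List α) :
    cost z x y ≤ cost z (x ++ p) y + p.length := by
  have h : LCS (x ++ p) y ≤ LCS x y + p.length := by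
    obtain ⟨i, hi, h⟩ := LCS_append x p y
    have h1 : LCS x (y.take i) ≤ LCS x y := LCS_mono_right (List.take_sublist i y)
    have h2 := LCS_le_left p (y.drop i)
    omega
  have h' : (LCS (x ++ p) y : ℝ) ≤ LCS x y + p.length := by exact_mod_cast h
  have h'' := mul_le_mul_of_nonneg_left h' (by positivity : (0:ℝ) ≤ 1 + 2 * z)
  simp only [cost, List.length_append]
  push_cast
  linarith

/-- The threshold `T_z`. -/
noncomputable def thr (q z : ℕ) : ℝ := (2 * z * q - (z:ℝ) ^ 2 - z) / q

theorem thr_ge (q z : ℕ) (h1 : 1 ≤ z) (h2 : z + 1 ≤ q) : 1 ≤ thr q z := by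
  have hq : (0:ℝ) < q := by exact_mod_cast (by omega : 0 < q)
  have h1' : (1:ℝ) ≤ z := by exact_mod_cast h1
  have h2' : (z:ℝ) + 1 ≤ q := by exact_mod_cast h2
  rw [thr, le_div_iff₀ hq]
  nlinarith [mul_nonneg (sub_nonneg.2 h1') (sub_nonneg.2 h2')]

theorem thr_le (q z : ℕ) (h1 : 1 ≤ z) (h2 : z + 1 ≤ q) : thr q z ≤ 2 * q := by
  have hq : (0:ℝ) < q := by exact_mod_cast (by omega : 0 < q)
  have h1' : (1:ℝ) ≤ z := by exact_mod_cast h1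
  have h2' : (z:ℝ) + 1 ≤ q := by exact_mod_cast h2
  rw [thr, div_le_iff₀ hq]
  nlinarith [mul_nonneg (sub_nonneg.2 h2') hq.le]

open Classical in
theorem union_ball {q : ℕ} (ε : ℝ) (K B : ℕ) (w : Fin K → List (Fin q))
    (hball : ∀ z : ℕ, 1 ≤ z → z + 1 ≤ q → ∀ (m : ℕ) (y : List (Fin q)),
      ((Finset.univ.filter (fun c : Fin m → Fin K => cost z (enc w m c) y ≤
        (1 - ε / 2) * ((2 * z * q - (z:ℝ) ^ 2 - z) / q) * (m * B))).card : ℝ) * 16 ^ m ≤ (K:ℝ) ^ m)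
    (m : ℕ) (hm : q ≤ m) (y : List (Fin q)) :
    ((Finset.univ.filter (fun c : Fin m → Fin K => ∃ z : ℕ, 1 ≤ z ∧ z + 1 ≤ q ∧
      cost z (enc w m c) y ≤ (1 - ε / 2) * thr q z * (m * B))).card : ℝ) * 8 ^ m
      ≤ (K:ℝ) ^ m := by
  classical
  set S : ℕ → Finset (Fin m → Fin K) := fun z => Finset.univ.filter
    (fun c : Fin m → Fin K => cost z (enc w m c) y ≤ (1 - ε / 2) * thr q z * (m * B)) with hS
  have hsub : (Finset.univ.filter (fun c : Fin m → Fin K => ∃ z : ℕ, 1 ≤ z ∧ z + 1 ≤ q ∧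
      cost z (enc w m c) y ≤ (1 - ε / 2) * thr q z * (m * B))) ⊆
      (Finset.Ico 1 q).biUnion S := by
    intro c hc
    obtain ⟨z, h1, h2, h3⟩ := (Finset.mem_filter.1 hc).2
    exact Finset.mem_biUnion.2 ⟨z, Finset.mem_Ico.2 ⟨h1, by omega⟩,
      Finset.mem_filter.2 ⟨Finset.mem_univ _, h3⟩⟩
  have h1 := (Finset.card_le_card hsub).trans Finset.card_biUnion_le
  have h2 : ((Finset.univ.filter (fun c : Fin m → Fin K => ∃ z : ℕ, 1 ≤ z ∧ z + 1 ≤ q ∧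
      cost z (enc w m c) y ≤ (1 - ε / 2) * thr q z * (m * B))).card : ℝ)
      ≤ ∑ z ∈ Finset.Ico 1 q, ((S z).card : ℝ) := by exact_mod_cast h1
  have h3 : (∑ z ∈ Finset.Ico 1 q, ((S z).card : ℝ)) * 16 ^ m ≤ q * (K:ℝ) ^ m := by
    rw [Finset.sum_mul]
    calc ∑ z ∈ Finset.Ico 1 q, ((S z).card : ℝ) * 16 ^ m
        ≤ ∑ z ∈ Finset.Ico 1 q, (K:ℝ) ^ m := by
          refine Finset.sum_le_sum fun z hz => ?_
          rw [Finset.mem_Ico] at hz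
          exact hball z hz.1 (by omega) m y
      _ = ((q - 1 : ℕ) : ℝ) * (K:ℝ) ^ m := by rw [Finset.sum_const, Nat.card_Ico, nsmul_eq_mul]
      _ ≤ q * (K:ℝ) ^ m := by
          refine mul_le_mul_of_nonneg_right ?_ (by positivity)
          exact_mod_cast Nat.sub_le q 1
  have h4 : (q:ℝ) ≤ 2 ^ m := by
    exact_mod_cast hm.trans Nat.lt_two_pow_self.le
  have h16 : (16:ℝ) ^ m = 8 ^ m * 2 ^ m := by rw [← mul_pow]; norm_num
  have hp : (0:ℝ) < 2 ^ m := by positivity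
  have h5 := mul_le_mul_of_nonneg_right h2 (by positivity : (0:ℝ) ≤ 16 ^ m)
  have h6 := mul_le_mul_of_nonneg_right h4 (by positivity : (0:ℝ) ≤ (K:ℝ) ^ m)
  refine le_of_mul_le_mul_right ?_ hp
  rw [mul_assoc, ← h16]
  linarith

/-- Translation from the decoding condition to the cost bound. -/
theorem cost_of_decode {q : ℕ} (z n m B : ℕ) (ε γ δ : ℝ) (hε : 0 < ε) (hε1 : ε < 1)
    (hz : 1 ≤ z) (hzq : z + 1 ≤ q)
    (hγ0 : 0 ≤ γ) (hδ0 : 0 ≤ δ)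
    (hγδ : γ + 2 * z * δ ≤ (1 - ε) * ((2 * (q : ℝ) - 1) * z - (z : ℝ) ^ 2) / q)
    (x p y u : List (Fin q)) (hlen : (x ++ p).length = n) (hp : p.length ≤ B)
    (hn : n ≤ m * B + B) (hm : 4 / ε ≤ m)
    (hux : u.Sublist (x ++ p)) (huy : u.Sublist y)
    (h1 : (x ++ p).length - u.length ≤ ⌊δ * n⌋₊) (h2 : y.length - u.length ≤ ⌊γ * n⌋₊) :
    y.length ≤ (1 + 2 * q) * n ∧ cost z x y ≤ (1 - ε / 2) * thr q z * (m * B) := by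
  have hT1 := thr_ge q z hz hzq
  have hT2 := thr_le q z hz hzq
  have hT : (1 - ε) * ((2 * (q : ℝ) - 1) * z - (z : ℝ) ^ 2) / q = (1 - ε) * thr q z := by
    rw [thr]; ring
  rw [hT] at hγδ
  have hux' := hux.length_le
  have huy' := huy.length_le
  have hn0 : (0:ℝ) ≤ n := Nat.cast_nonneg n
  have h1' : (n:ℝ) - u.length ≤ δ * n := by
    have a := Nat.floor_le (mul_nonneg hδ0 hn0)
    have b : ((n - u.length : ℕ) : ℝ) ≤ (⌊δ * n⌋₊ : ℝ) := by exact_mod_cast hlen ▸ h1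
    rw [Nat.cast_sub (by omega)] at b
    linarith
  have h2' : (y.length:ℝ) - u.length ≤ γ * n := by
    have a := Nat.floor_le (mul_nonneg hγ0 hn0)
    have b : ((y.length - u.length : ℕ) : ℝ) ≤ (⌊γ * n⌋₊ : ℝ) := by exact_mod_cast h2
    rw [Nat.cast_sub huy'] at b
    linarith
  have hL : (u.length : ℝ) ≤ LCS (x ++ p) y := by exact_mod_cast le_LCS hux huy
  have hz0 : (0:ℝ) ≤ z := Nat.cast_nonneg z
  have hcost : cost z (x ++ p) y ≤ (1 - ε) * thr q z * n := by
    have e1 := mul_le_mul_of_nonneg_left hL (by positivity : (0:ℝ) ≤ 1 + 2 * z)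
    have e2 := mul_le_mul_of_nonneg_left h1' (by positivity : (0:ℝ) ≤ 2 * z)
    have e3 := mul_le_mul_of_nonneg_right hγδ hn0
    simp only [cost]
    rw [hlen]
    linarith
  constructor
  · have e1 := cost_ge z (x ++ p) y
    rw [hlen] at e1
    have e2 : (1 - ε) * thr q z * n ≤ 2 * q * n := by
      refine mul_le_mul_of_nonneg_right ?_ hn0
      nlinarith
    have : (y.length : ℝ) ≤ (1 + 2 * q) * n := by linarith
    exact_mod_cast this
  · have e1 := cost_pad z x p y
    have hp' : (p.length : ℝ) ≤ B := by exact_mod_cast hp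
    have hn' : (n:ℝ) ≤ m * B + B := by exact_mod_cast hn
    have hm' : 4 ≤ ε * m := by rw [div_le_iff₀ hε] at hm; linarith
    have hB0 : (0:ℝ) ≤ B := Nat.cast_nonneg B
    have e2 : (1 - ε) * thr q z * n ≤ (1 - ε) * thr q z * (m * B + B) :=
      mul_le_mul_of_nonneg_left hn' (mul_nonneg (by linarith) (by linarith))
    have e3 : (1 - ε) * thr q z * (m * B + B) + B ≤ (1 - ε / 2) * thr q z * (m * B) := by
      have f1 : (1 - ε) * thr q z + 1 ≤ ε * m / 2 * thr q z := by nlinarith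
      have f2 := mul_le_mul_of_nonneg_right f1 hB0
      nlinarith
    linarith

theorem pow_count (q B m n k : ℕ) (hn : n ≤ 2 * (m * B)) (hm : 1 ≤ m)
    (h : ((2:ℝ) ^ m) ^ k ≤ 3 * (((q + 1) ^ ((1 + 2 * q) * n) : ℕ) : ℝ)) :
    k ≤ 2 + 2 * q * (1 + 2 * q) * B := by
  have h' : (2 ^ m) ^ k ≤ 3 * (q + 1) ^ ((1 + 2 * q) * n) := by exact_mod_cast h
  have h1 : (q + 1) ^ ((1 + 2 * q) * n) ≤ (2 ^ q) ^ ((1 + 2 * q) * n) :=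
    Nat.pow_le_pow_left Nat.lt_two_pow_self _
  have h2 : 2 ^ (m * k) ≤ 2 ^ (2 + q * ((1 + 2 * q) * n)) := by
    rw [pow_add, pow_mul, pow_mul]
    omega
  have h3 := (Nat.pow_le_pow_iff_right (by norm_num : 1 < 2)).1 h2
  have h4 : q * ((1 + 2 * q) * n) ≤ q * ((1 + 2 * q) * (2 * (m * B))) := by gcongr
  have h5 : m * k ≤ m * (2 + 2 * q * (1 + 2 * q) * B) := by
    calc m * k ≤ 2 + q * ((1 + 2 * q) * n) := h3
      _ ≤ 2 * m + q * ((1 + 2 * q) * (2 * (m * B))) := by omega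
      _ = m * (2 + 2 * q * (1 + 2 * q) * B) := by ring
  exact Nat.le_of_mul_le_mul_left h5 (by omega)

theorem stmt1 :
    ∀ q : ℕ, 2 ≤ q →
    ∀ ε : ℝ, ε ∈ Set.Ioo (0 : ℝ) 1 →
      ∃ R : ℝ, 0 < R ∧ ∃ c : ℝ, 0 < c ∧ ∃ n₀ : ℕ, ∀ n : ℕ, n₀ ≤ n →
        ∃ C : Finset (List (Fin q)),
          (∀ x ∈ C, x.length = n) ∧
          (2 : ℝ) ^ (R * n) ≤ (C.card : ℝ) ∧
          ∀ γ δ : ℝ, 0 ≤ γ → 0 ≤ δ →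
            (∃ z : ℕ, 1 ≤ z ∧ z ≤ q - 1 ∧
              γ + 2 * z * δ ≤ (1 - ε) * ((2 * (q : ℝ) - 1) * z - (z : ℝ) ^ 2) / q) →
            listDecodable C ⌊δ * n⌋₊ ⌊γ * n⌋₊
              (c * (2 : ℝ) ^ (2 ^ (2 ^ logStar n))) := by
  classical
  intro q hq ε hε
  have : NeZero q := ⟨by omega⟩
  obtain ⟨K, B, w, hK, hB, hw, hwinj, hball⟩ := inner_main hq ε hε.1 hε.2
  have hBR : (0:ℝ) < B := by exact_mod_cast hB
  refine ⟨1 / (2 * B), by positivity, ((2 + 2 * q * (1 + 2 * q) * B : ℕ) : ℝ), by positivity,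
    (q + ⌈4 / ε⌉₊) * B, ?_⟩
  intro n hn
  set m := n / B with hmdef
  have hmge : q + ⌈4 / ε⌉₊ ≤ m := (Nat.le_div_iff_mul_le hB).2 hn
  have hm1 : 1 ≤ m := by omega
  have hmε : 4 / ε ≤ m := (Nat.le_ceil _).trans (by exact_mod_cast (by omega : ⌈4 / ε⌉₊ ≤ m))
  have hdm : m * B + n % B = n := by rw [mul_comm]; exact Nat.div_add_mod n B
  have hmod : n % B < B := Nat.mod_lt n hB
  have hmB : m * B ≤ n := by omega
  have hnle : n ≤ m * B + B := by omega
  have hn2 : n ≤ 2 * (m * B) := by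
    have : 1 * B ≤ m * B := Nat.mul_le_mul_right B hm1
    omega
  clear_value m
  set Ball : (Fin ((1 + 2 * q) * n) → Option (Fin q)) → Finset (Fin m → Fin K) := fun f =>
    Finset.univ.filter (fun c : Fin m → Fin K => ∃ z : ℕ, 1 ≤ z ∧ z + 1 ≤ q ∧
      cost z (enc w m c) (List.ofFn f).reduceOption ≤ (1 - ε / 2) * thr q z * (m * B)) with hBall
  have hcardX : Fintype.card (Fin m → Fin K) = K ^ m := by simp
  have hcardI : Fintype.card (Fin ((1 + 2 * q) * n) → Option (Fin q))
      = (q + 1) ^ ((1 + 2 * q) * n) := by simp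
  obtain ⟨C, hCcard, hC⟩ := greedy_main Ball m hm1
    (by
      intro f
      rw [hcardX]
      push_cast
      exact union_ball ε K B w hball m (by omega) _)
    (by
      rw [hcardX]
      calc 2 * 2 ^ m ≤ 2 ^ m * 2 ^ m := by
            refine Nat.mul_le_mul_right _ ?_
            calc 2 = 2 ^ 1 := by norm_num
              _ ≤ 2 ^ m := Nat.pow_le_pow_right (by norm_num) hm1
        _ = 4 ^ m := by rw [← mul_pow]; norm_num
        _ ≤ K ^ m := Nat.pow_le_pow_left hK m)
  rw [hcardI] at hC
  set p : List (Fin q) := List.replicate (n % B) 0 with hp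
  set F : (Fin m → Fin K) → List (Fin q) := fun c => enc w m c ++ p with hF
  have hFinj : Function.Injective F := by
    intro a b hab
    exact enc_inj w B hw hwinj m (List.append_cancel_right hab)
  have hFlen : ∀ c, (enc w m c ++ p).length = n := by
    intro c
    rw [List.length_append, enc_length w B hw m c, hp, List.length_replicate, hdm]
  refine ⟨C.image F, ?_, ?_, ?_⟩
  · intro x hx
    obtain ⟨c, _, rfl⟩ := Finset.mem_image.1 hx
    exact hFlen c
  · rw [Finset.card_image_of_injective _ hFinj, hCcard]
    push_cast
    rw [← Real.rpow_natCast 2 m]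
    refine Real.rpow_le_rpow_of_exponent_le (by norm_num) ?_
    have : (n:ℝ) ≤ 2 * (m * B) := by exact_mod_cast hn2
    rw [one_div, inv_mul_eq_div, div_le_iff₀ (by positivity)]
    linarith
  · rintro γ δ hγ hδ ⟨z, hz1, hz2, hz⟩ y
    have hone : (1:ℝ) ≤ (2 : ℝ) ^ (2 ^ (2 ^ logStar n)) := one_le_pow₀ (by norm_num)
    have hD0 : (0:ℝ) ≤ ((2 + 2 * q * (1 + 2 * q) * B : ℕ) : ℝ) := Nat.cast_nonneg _
    refine le_trans ?_ (le_mul_of_one_le_right hD0 hone)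
    refine Nat.cast_le.2 ?_
    have hdec : ∀ c : Fin m → Fin K, (∃ u : List (Fin q), u.Sublist (F c) ∧ u.Sublist y ∧
        (F c).length - u.length ≤ ⌊δ * n⌋₊ ∧ y.length - u.length ≤ ⌊γ * n⌋₊) →
        y.length ≤ (1 + 2 * q) * n ∧
          cost z (enc w m c) y ≤ (1 - ε / 2) * thr q z * (m * B) := by
      rintro c ⟨u, hu1, hu2, hu3, hu4⟩
      exact cost_of_decode z n m B ε γ δ hε.1 hε.2 hz1 (by omega) hγ hδ hz (enc w m c) p y u
        (hFlen c) (by rw [hp, List.length_replicate]; omega) hnle hmε hu1 hu2 hu3 hu4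
    by_cases hy : y.length ≤ (1 + 2 * q) * n
    · obtain ⟨f, hf⟩ := exists_code_list _ y hy
      have hsub : ({x | x ∈ C.image F ∧ ∃ u : List (Fin q), u.Sublist x ∧ u.Sublist y ∧
          x.length - u.length ≤ ⌊δ * n⌋₊ ∧ y.length - u.length ≤ ⌊γ * n⌋₊} :
            Set (List (Fin q))) ⊆ ((C ∩ Ball f).image F : Finset (List (Fin q))) := by
        rintro x ⟨hx, hu⟩
        obtain ⟨c, hc, rfl⟩ := Finset.mem_image.1 hx
        refine Finset.mem_coe.2 (Finset.mem_image.2 ⟨c, Finset.mem_inter.2 ⟨hc, ?_⟩, rfl⟩)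
        refine Finset.mem_filter.2 ⟨Finset.mem_univ _, z, hz1, by omega, ?_⟩
        rw [hf]
        exact (hdec c hu).2
      refine (Set.ncard_le_ncard hsub (Finset.finite_toSet _)).trans ?_
      rw [Set.ncard_coe_finset]
      exact Finset.card_image_le.trans (pow_count q B m n _ hn2 hm1 (hC f))
    · have hempty : ({x | x ∈ C.image F ∧ ∃ u : List (Fin q), u.Sublist x ∧ u.Sublist y ∧
          x.length - u.length ≤ ⌊δ * n⌋₊ ∧ y.length - u.length ≤ ⌊γ * n⌋₊} :
            Set (List (Fin q))) = ∅ := by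
        rw [Set.eq_empty_iff_forall_notMem]
        rintro x ⟨hx, hu⟩
        obtain ⟨c, hc, rfl⟩ := Finset.mem_image.1 hx
        exact hy (hdec c hu).1
      rw [hempty]
      simp
end

section
/- Let q ≥ 2 be an integer and let δ, γ ≥ 0 be reals satisfying δ/(1 − 1/q) + γ/(q − 1) ≥ 1. Then for every integer L ≥ 1 and every real R > 0 there exists n₀ such that for all n ≥ n₀: every code C ⊆ (Fin q)ⁿ that is list-decodable from ⌈δn⌉ deletions and ⌈γn⌉ insertions with list size L satisfies |C| < 2^(R·n). In other words, there is no family of constant rate q-ary codes list-decodable from δn deletions and γn insertions. -/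
/-- Some symbol occurs in at least a `1/q` fraction of the positions. -/
theorem exists_frequent (q : ℕ) (hq : 2 ≤ q) (l : List (Fin q)) :
    ∃ a : Fin q, l.length ≤ q * l.count a := by
  by_contra! hcon
  have hs : ∑ a : Fin q, l.count a = l.length := by
    have := Multiset.sum_count_eq_card (s := Finset.univ) (m := (l : Multiset (Fin q))) (by simp)
    simpa using this
  have h1 : ∑ a : Fin q, q * l.count a < ∑ _a : Fin q, l.length := by
    apply Finset.sum_lt_sum_of_nonempty
    · exact ⟨⟨0, by omega⟩, Finset.mem_univ _⟩
    · intro a _; exact hcon a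
  rw [← Finset.mul_sum, hs] at h1
  simp at h1

/-- Every string of length `k` embeds into `k` repetitions of the alphabet. -/
theorem sublist_universal (q : ℕ) (l : List (Fin q)) :
    l.Sublist (List.replicate l.length (List.finRange q)).flatten := by
  induction l with
  | nil => simp
  | cons a l ih =>
    have h1 : [a].Sublist (List.finRange q) := by simp
    have := h1.append ih
    simpa [List.replicate_succ] using this

theorem code_card_le (q : ℕ) (hq : 2 ≤ q) (n m c D I L : ℕ) (hm : m ≤ n)
    (hc : ∀ k, m ≤ q * k → c ≤ k) (hD : m - c ≤ D) (hI : (n - m) * q - (n - m) ≤ I)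
    (C : Finset (List (Fin q))) (hC : ∀ x ∈ C, x.length = n)
    (hl : listDecodable C D I (L : ℝ)) : C.card ≤ q * L := by
  classical
  have hsub : C ⊆ (Finset.univ : Finset (Fin q)).biUnion
      (fun a => C.filter (fun x => c ≤ (x.take m).count a)) := by
    intro x hx
    obtain ⟨a, ha⟩ := exists_frequent q hq (x.take m)
    simp only [Finset.mem_biUnion, Finset.mem_univ, true_and, Finset.mem_filter]
    refine ⟨a, hx, hc _ ?_⟩
    have := hC x hx
    rw [List.length_take] at ha
    omega
  have hb : ∀ a : Fin q, (C.filter (fun x => c ≤ (x.take m).count a)).card ≤ L := by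
    intro a
    have h1 := hl (List.replicate c a ++ (List.replicate (n - m) (List.finRange q)).flatten)
    have h2 := Nat.cast_le.mp h1
    refine le_trans ?_ h2
    rw [← Set.ncard_coe_finset]
    apply Set.ncard_le_ncard
    · intro x hx
      simp only [Finset.coe_filter, Set.mem_setOf_eq] at hx
      obtain ⟨hx, hxc⟩ := hx
      have hlen := hC x hx
      refine ⟨hx, List.replicate c a ++ x.drop m, ?_, ?_, ?_, ?_⟩
      · conv_rhs => rw [← List.take_append_drop m x]
        exact (List.replicate_sublist_iff.mpr hxc).append (List.Sublist.refl _)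
      · have := sublist_universal q (x.drop m)
        rw [List.length_drop, hlen] at this
        exact (List.Sublist.refl _).append this
      · simp [hlen]; omega
      · simp [hlen]; omega
    · exact C.finite_toSet.subset (fun x hx => hx.1)
  calc C.card ≤ _ := Finset.card_le_card hsub
    _ ≤ ∑ a : Fin q, (C.filter (fun x => c ≤ (x.take m).count a)).card := Finset.card_biUnion_le
    _ ≤ ∑ _a : Fin q, L := Finset.sum_le_sum (fun a _ => hb a)
    _ = q * L := by simp

theorem stmt2 (q : ℕ) (hq : 2 ≤ q) (δ γ : ℝ) (hδ : 0 ≤ δ) (hγ : 0 ≤ γ)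
    (h : 1 ≤ δ / (1 - 1 / (q : ℝ)) + γ / ((q : ℝ) - 1)) :
    ∀ L : ℕ, 1 ≤ L → ∀ R : ℝ, 0 < R → ∃ n₀ : ℕ, ∀ n : ℕ, n₀ ≤ n →
      ∀ C : Finset (List (Fin q)), (∀ x ∈ C, x.length = n) →
        listDecodable C ⌈δ * n⌉₊ ⌈γ * n⌉₊ (L : ℝ) →
        (C.card : ℝ) < (2 : ℝ) ^ (R * n) := by
  intro L hL R hR
  have hq' : (2 : ℝ) ≤ q := by exact_mod_cast hq
  have hq0 : (0 : ℝ) < q := by linarith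
  set p : ℝ := 1 - 1 / (q : ℝ) with hp
  have hqp : (q : ℝ) * p = q - 1 := by rw [hp]; field_simp
  have hp0 : 0 < p := by by_contra hh; nlinarith
  have hp1 : p ≤ 1 := by
    have : (0 : ℝ) ≤ 1 / q := by positivity
    linarith
  set α : ℝ := min 1 (δ / p) with hα
  have hα0 : 0 ≤ α := le_min zero_le_one (by positivity)
  have hα1 : α ≤ 1 := min_le_left _ _
  have hαδ : α * p ≤ δ := (le_div_iff₀ hp0).mp (min_le_right _ _)
  have hαγ : (1 - α) * (q - 1) ≤ γ := by
    rcases min_choice 1 (δ / p) with h1 | h1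
    · rw [hα, h1]; simpa using hγ
    · rw [hα, h1]
      rw [← le_div_iff₀ (by linarith)]
      linarith
  have ht : Filter.Tendsto (fun n : ℕ => ((2 : ℝ) ^ R) ^ n) Filter.atTop Filter.atTop :=
    tendsto_pow_atTop_atTop_of_one_lt (Real.one_lt_rpow (by norm_num) hR)
  obtain ⟨n₀, hn₀⟩ := Filter.eventually_atTop.mp (ht.eventually_gt_atTop ((q * L : ℕ) : ℝ))
  refine ⟨n₀, fun n hn C hC hl => ?_⟩
  have h1 := hn₀ n hn
  rw [Real.rpow_mul (by norm_num), Real.rpow_natCast]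
  refine lt_of_le_of_lt ?_ h1
  rw [Nat.cast_le]
  have hn0 : (0 : ℝ) ≤ n := Nat.cast_nonneg n
  have hmn : ⌈α * n⌉₊ ≤ n := Nat.ceil_le.mpr (by nlinarith)
  have hm1 : α * n ≤ (⌈α * n⌉₊ : ℝ) := Nat.le_ceil _
  have hm2 : (⌈α * n⌉₊ : ℝ) < α * n + 1 := Nat.ceil_lt_add_one (by positivity)
  generalize ⌈α * n⌉₊ = m at hmn hm1 hm2
  have hcc : (m : ℝ) / q ≤ (⌈(m : ℝ) / q⌉₊ : ℝ) := Nat.le_ceil _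
  refine code_card_le q hq n m ⌈(m : ℝ) / q⌉₊ _ _ L hmn ?_ ?_ ?_ C hC hl
  · intro k hk
    rw [Nat.ceil_le, div_le_iff₀ hq0]
    have : (m : ℝ) ≤ q * k := by exact_mod_cast hk
    linarith
  · rw [Nat.sub_le_iff_le_add]
    have h3 : (m : ℝ) < (⌈δ * n⌉₊ : ℝ) + ⌈(m : ℝ) / q⌉₊ + 1 := by
      have h4 := Nat.le_ceil (δ * n)
      have h5 : (m : ℝ) - m / q = m * p := by rw [hp]; ring
      have h6 : (m : ℝ) * p < (α * n + 1) * p := mul_lt_mul_of_pos_right hm2 hp0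
      have h7 : α * p * n ≤ δ * n := mul_le_mul_of_nonneg_right hαδ hn0
      nlinarith
    exact Nat.lt_succ_iff.mp (by exact_mod_cast h3)
  · rw [← Nat.cast_le (α := ℝ)]
    refine le_trans ?_ (Nat.le_ceil _)
    rw [Nat.cast_sub (Nat.le_mul_of_pos_right _ (by omega)), Nat.cast_mul, Nat.cast_sub hmn]
    have h7 := mul_le_mul_of_nonneg_right hαγ hn0
    nlinarith
end

section
/- Let q ≥ 2 and 1 ≤ i ≤ q be integers, and set δ = (q−i)/q and γ = i(i−1)/q. Then for every n ≥ 1 and every integer L ≥ 1, every code C ⊆ (Fin q)ⁿ that is list-decodable from ⌈δn⌉ deletions and ⌊γn⌋ insertions with list size L satisfies |C| ≤ L · q^q. (Consequently, no positive-rate family of q-ary insertion-deletion codes can be list-decoded from a δ = (q−i)/q fraction of deletions and a γ = i(i−1)/q fraction of insertions.) -/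
/-- A word of length `m` over the letters of `w` embeds in the `m`-fold repetition of `w`. -/
theorem sublist_flatten_replicate {α : Type*} (w : List α) :
    ∀ u : List α, (∀ a ∈ u, a ∈ w) →
      u.Sublist (List.replicate u.length w).flatten := by
  intro u
  induction u with
  | nil => intro _; simp
  | cons a u ih =>
    intro h
    have h1 : [a].Sublist w := by
      rw [List.singleton_sublist]; exact h a (by simp)
    have h2 := ih (fun b hb => h b (by simp [hb]))
    have h3 := h1.append h2
    simpa [List.replicate_succ] using h3

/-- The cyclic window of `i` letters starting at `s`. -/
def window (q i : ℕ) [NeZero q] (s : Fin q) : List (Fin q) :=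
  (List.range i).map (fun j => s + Fin.ofNat q j)

theorem window_count (q i : ℕ) [NeZero q] (hi : i ≤ q) (a : Fin q) :
    i ≤ (Finset.univ.filter (fun s : Fin q => a ∈ window q i s)).card := by
  have h : ((Finset.range i).image (fun j => a - Fin.ofNat q j)).card = i := by
    rw [Finset.card_image_of_injOn, Finset.card_range]
    intro j hj k hk hjk
    have hj' : j < i := by simpa using hj
    have hk' : k < i := by simpa using hk
    have h2 : Fin.ofNat q j = Fin.ofNat q k := sub_right_injective hjk
    have h3 := congrArg Fin.val h2
    simp only [Fin.val_ofNat] at h3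
    rwa [Nat.mod_eq_of_lt (by omega), Nat.mod_eq_of_lt (by omega)] at h3
  calc i = _ := h.symm
    _ ≤ _ := by
      apply Finset.card_le_card
      intro s hs
      simp only [Finset.mem_image, Finset.mem_range] at hs
      obtain ⟨j, hj, rfl⟩ := hs
      simp only [Finset.mem_filter, Finset.mem_univ, true_and, window, List.mem_map,
        List.mem_range]
      exact ⟨j, hj, by simp⟩

theorem window_sum (q i : ℕ) [NeZero q] (hi : i ≤ q) (x : List (Fin q)) :
    x.length * i ≤ ∑ s : Fin q, (x.filter (fun a => a ∈ window q i s)).length := by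
  induction x with
  | nil => simp
  | cons a x ih =>
    have h := window_count q i hi a
    rw [Finset.card_filter] at h
    have h2 : ∀ s : Fin q, ((a :: x).filter (fun a => a ∈ window q i s)).length
        = (x.filter (fun a => a ∈ window q i s)).length
          + (if a ∈ window q i s then 1 else 0) := by
      intro s
      by_cases hs : a ∈ window q i s <;> simp [List.filter_cons, hs]
    rw [Finset.sum_congr rfl (fun s _ => h2 s), Finset.sum_add_distrib, List.length_cons,
      Nat.add_mul]
    omega

theorem window_exists (q i : ℕ) [NeZero q] (hi : i ≤ q) (x : List (Fin q)) :
    ∃ s : Fin q, x.length * i / q ≤ (x.filter (fun a => a ∈ window q i s)).length := by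
  by_contra! hcon
  have h := window_sum q i hi x
  have h2 : ∑ s : Fin q, (x.filter (fun a => a ∈ window q i s)).length
      < ∑ _s : Fin q, x.length * i / q :=
    Finset.sum_lt_sum_of_nonempty ⟨0, by simp⟩ (fun s _ => hcon s)
  simp only [Finset.sum_const, Finset.card_univ, Fintype.card_fin, smul_eq_mul] at h2
  have := Nat.mul_div_le (x.length * i) q
  omega

theorem stmt3 (q i : ℕ) (hq : 2 ≤ q) (hi1 : 1 ≤ i) (hi2 : i ≤ q)
    (n L : ℕ) (hn : 1 ≤ n) (hL : 1 ≤ L)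
    (C : Finset (List (Fin q))) (hC : ∀ x ∈ C, x.length = n)
    (hdec : listDecodable C ⌈(((q : ℝ) - i) / q) * n⌉₊
      ⌊(((i : ℝ) * ((i : ℝ) - 1)) / q) * n⌋₊ (L : ℝ)) :
    C.card ≤ L * q ^ q := by
  classical
  haveI : NeZero q := ⟨by omega⟩
  set D := ⌈(((q : ℝ) - i) / q) * n⌉₊ with hD
  set I := ⌊(((i : ℝ) * ((i : ℝ) - 1)) / q) * n⌋₊ with hI
  set m := n * i / q with hm
  have hq0 : (0 : ℝ) < q := by exact_mod_cast (by omega : 0 < q)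
  have hDm : n - m ≤ D := by
    have h1 : (((q : ℝ) - i) / q) * n ≤ (D : ℝ) := Nat.le_ceil _
    have h2 : ((q : ℝ) - i) * n ≤ D * q := by
      have h3 := mul_le_mul_of_nonneg_right h1 hq0.le
      have h4 : (((q : ℝ) - i) / q) * n * q = ((q : ℝ) - i) * n := by field_simp
      linarith
    have h3 : q * n ≤ D * q + n * i := by
      have : (q : ℝ) * n ≤ D * q + n * i := by linarith
      exact_mod_cast this
    have h4 : n - D ≤ m := by
      rw [hm, Nat.le_div_iff_mul_le (by omega), Nat.sub_mul]
      rw [Nat.mul_comm q n] at h3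
      omega
    omega
  have hIm : m * i - m ≤ I := by
    apply Nat.le_floor
    have h1 : (m : ℝ) * q ≤ n * i := by exact_mod_cast Nat.div_mul_le_self (n * i) q
    have h2 : ((m * i - m : ℕ) : ℝ) = m * ((i : ℝ) - 1) := by
      rw [Nat.cast_sub (Nat.le_mul_of_pos_right m hi1)]; push_cast; ring
    have h3 : (0 : ℝ) ≤ (i : ℝ) - 1 := by
      have : (1 : ℝ) ≤ i := by exact_mod_cast hi1
      linarith
    rw [h2, div_mul_eq_mul_div, le_div_iff₀ hq0]
    nlinarith [mul_le_mul_of_nonneg_right h1 h3]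
  let y : Fin q → List (Fin q) := fun s => (List.replicate m (window q i s)).flatten
  let A : Fin q → Finset (List (Fin q)) := fun s => C.filter (fun x =>
    ∃ u : List (Fin q), u.Sublist x ∧ u.Sublist (y s) ∧
        x.length - u.length ≤ D ∧ (y s).length - u.length ≤ I)
  have hA : ∀ s, (A s).card ≤ L := by
    intro s
    have h := hdec (y s)
    have h2 : ({x | x ∈ C ∧ ∃ u : List (Fin q), u.Sublist x ∧ u.Sublist (y s) ∧
        x.length - u.length ≤ D ∧ (y s).length - u.length ≤ I} : Set (List (Fin q)))
        = (A s : Set (List (Fin q))) := by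
      ext x; simp [A]
    rw [h2, Set.ncard_coe_finset] at h
    exact_mod_cast h
  have hsub : C ⊆ Finset.univ.biUnion A := by
    intro x hx
    obtain ⟨s, hs⟩ := window_exists q i hi2 x
    rw [hC x hx, ← hm] at hs
    simp only [Finset.mem_biUnion, Finset.mem_univ, true_and, A, Finset.mem_filter]
    have hlen : ((x.filter (fun a => a ∈ window q i s)).take m).length = m := by
      rw [List.length_take]; omega
    refine ⟨s, hx, (x.filter (fun a => a ∈ window q i s)).take m, ?_, ?_, ?_, ?_⟩
    · exact (List.take_sublist _ _).trans List.filter_sublist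
    · have h := sublist_flatten_replicate (window q i s)
        ((x.filter (fun a => a ∈ window q i s)).take m) (by
          intro a ha
          have := List.mem_of_mem_take ha
          simpa using (List.mem_filter.1 this).2)
      rw [hlen] at h
      exact h
    · rw [hlen, hC x hx]; exact hDm
    · rw [hlen]
      have : (y s).length = m * i := by simp [y, window]
      rw [this]; exact hIm
  calc C.card ≤ (Finset.univ.biUnion A).card := Finset.card_le_card hsub
    _ ≤ ∑ s : Fin q, (A s).card := Finset.card_biUnion_le
    _ ≤ ∑ _s : Fin q, L := Finset.sum_le_sum (fun s _ => hA s)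
    _ = L * q := by simp [mul_comm]
    _ ≤ L * q ^ q := Nat.mul_le_mul_left _ (Nat.le_self_pow (by omega) q)
end

section
/- Let q ≥ 2 be an integer and let γ, δ ≥ 0 be reals such that for every integer z with 1 ≤ z ≤ q−1 one has γ + 2zδ ≥ ((2q−1)z − z²)/q (i.e., (γ,δ) lies outside the feasibility polygon F_q with vertices (i(i−1)/q, (q−i)/q) for i = 1,…,q and (0,0)). Then for every integer L ≥ 1 and every real R > 0 there exists n₀ such that for all n ≥ n₀: every code C ⊆ (Fin q)ⁿ that is list-decodable from ⌈δn⌉ deletions and ⌈γn⌉ insertions with list size L satisfies |C| < 2^(R·n). -/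
lemma params (q : ℕ) (hq : 2 ≤ q) (γ δ : ℝ) (hγ : 0 ≤ γ) (hδ : 0 ≤ δ)
    (h : ∀ z : ℕ, 1 ≤ z → z ≤ q - 1 →
      ((2 * (q : ℝ) - 1) * z - (z : ℝ) ^ 2) / q ≤ γ + 2 * z * δ) (n N : ℕ) (hN : q * N ≤ n) :
    ∃ i j a b : ℕ, i + 1 + j = q ∧ a + b = N ∧ a + N * j ≤ ⌈δ * n⌉₊ ∧
      a * (i * i) + b * ((i + 1) * (i + 1)) ≤ ⌈γ * n⌉₊ + (a * i + b * (i + 1)) := by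
  have hNr : (q : ℝ) * N ≤ n := by exact_mod_cast hN
  have hq0 : (0 : ℝ) < q := by positivity
  by_cases ht : (q : ℝ) - 1 ≤ q * δ
  · refine ⟨1, q - 2, N, 0, by omega, by omega, ?_, by omega⟩
    have h2 : ((N + N * (q - 2) : ℕ) : ℝ) ≤ ⌈δ * n⌉₊ := by
      refine le_trans ?_ (Nat.le_ceil _)
      push_cast [Nat.cast_sub hq]
      have h3 := mul_le_mul_of_nonneg_left hNr hδ
      have h4 := mul_le_mul_of_nonneg_left ht (Nat.cast_nonneg (α := ℝ) N)
      linarith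
    exact_mod_cast h2
  · push Not at ht
    have ht0 : 0 ≤ (q : ℝ) * δ := by positivity
    obtain ⟨j, hj⟩ : ∃ j, j = ⌊(q : ℝ) * δ⌋₊ := ⟨_, rfl⟩
    have hj1 : (j : ℝ) ≤ q * δ := hj ▸ Nat.floor_le ht0
    have hj2 : (q : ℝ) * δ < j + 1 := hj ▸ Nat.lt_floor_add_one _
    have hjq : j + 1 < q := by
      have : (j : ℝ) + 1 < q := by linarith
      exact_mod_cast this
    obtain ⟨i, hi⟩ : ∃ i, i + 1 + j = q := ⟨q - 1 - j, by omega⟩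
    have hir : (q : ℝ) = i + 1 + j := by rw [← hi]; push_cast; ring
    obtain ⟨α, hα⟩ : ∃ α, α = (q : ℝ) * δ - j := ⟨_, rfl⟩
    have hα0 : 0 ≤ α := by linarith
    have hα1 : α ≤ 1 := by linarith
    have hN0 : (0 : ℝ) ≤ N := Nat.cast_nonneg _
    have haN : ⌈α * N⌉₊ ≤ N := by
      rw [Nat.ceil_le]; nlinarith
    obtain ⟨b, hb⟩ := Nat.exists_eq_add_of_le haN
    refine ⟨i, j, ⌈α * N⌉₊, b, hi, hb.symm, ?_, ?_⟩
    · rw [← Nat.ceil_add_natCast (by positivity)]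
      apply Nat.ceil_mono
      push_cast
      have h3 := mul_le_mul_of_nonneg_left hNr hδ
      rw [hα]; linarith
    · have ha := Nat.le_ceil (α * N)
      set a := ⌈α * N⌉₊
      have hz := h i (by omega) (by omega)
      rw [div_le_iff₀ hq0] at hz
      have hz2 : (i : ℝ) ^ 2 + i - 2 * i * α ≤ q * γ := by
        rw [hα]
        have : (2 * (q : ℝ) - 1) * i - i ^ 2 = i ^ 2 + i + 2 * i * j := by rw [hir]; ring
        linarith
      have hbr : (N : ℝ) = a + b := by exact_mod_cast hb
      have h3 := mul_le_mul_of_nonneg_left hNr hγ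
      have h4 := mul_le_mul_of_nonneg_right hz2 hN0
      have h5 := mul_le_mul_of_nonneg_left ha (Nat.cast_nonneg (α := ℝ) i)
      have h6 := Nat.le_ceil (γ * n)
      have h7 : ((a * (i * i) + b * ((i + 1) * (i + 1)) : ℕ) : ℝ) ≤
          ((⌈γ * n⌉₊ + (a * i + b * (i + 1)) : ℕ) : ℝ) := by
        push_cast
        have hb' : (b : ℝ) = N - a := by linarith
        rw [hb']
        nlinarith
      exact_mod_cast h7

lemma exists_popular (q a : ℕ) (l : List (Fin q)) (hl : l.length = q * a) (j : ℕ) :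
    ∀ i, i + j = q → ∃ S : Finset (Fin q), S.card = i ∧
      i * a ≤ (l.filter (fun x => decide (x ∈ S))).length := by
  induction j with
  | zero =>
    intro i hi
    refine ⟨Finset.univ, by simp; omega, ?_⟩
    have : i = q := by omega
    subst this
    simp [hl]
  | succ j ih =>
    intro i hi
    obtain ⟨S, hS, hc⟩ := ih (i + 1) (by omega)
    have key : ∀ T : Finset (Fin q), (l.filter (fun x => decide (x ∈ T))).length
        = ∑ s ∈ T, l.count s := by
      intro T
      clear hl hc ih
      induction l with
      | nil => simp
      | cons x l ih =>
        simp only [List.count_cons, Finset.sum_add_distrib, ← ih, List.filter_cons]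
        by_cases hx : x ∈ T <;> simp [hx]
    rw [key] at hc
    obtain ⟨s, hs, hmin⟩ := Finset.exists_min_image S (fun s => l.count s)
      (Finset.card_pos.1 (by omega))
    refine ⟨S.erase s, by rw [Finset.card_erase_of_mem hs]; omega, ?_⟩
    rw [key]
    have h1 := Finset.add_sum_erase S (fun s => l.count s) hs
    have h2 : (S.erase s).card • l.count s ≤ ∑ x ∈ S.erase s, l.count x :=
      Finset.card_nsmul_le_sum _ _ _ fun x hx => hmin x (Finset.mem_of_mem_erase hx)
    rw [Finset.card_erase_of_mem hs, hS] at h2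
    simp only [Nat.add_sub_cancel, smul_eq_mul] at h2 h1
    by_contra hlt
    push Not at hlt
    have h3 : l.count s < a := by
      by_contra h'
      push Not at h'
      have := Nat.mul_le_mul_left i h'
      omega
    have : (i + 1) * a = i * a + a := by ring
    omega

lemma sublist_blocks {β : Type*} (P : List β) (l : List β) (hl : ∀ x ∈ l, x ∈ P) :
    l.Sublist (List.replicate l.length P).flatten := by
  induction l with
  | nil => simp
  | cons x l ih =>
    simp only [List.length_cons, List.replicate_succ, List.flatten_cons]
    have h1 : [x].Sublist P := List.singleton_sublist.2 (hl x (by simp))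
    exact h1.append (ih fun y hy => hl y (by simp [hy]))

noncomputable def blk {q : ℕ} (S : Finset (Fin q)) (m : ℕ) : List (Fin q) :=
  (List.replicate m S.toList).flatten

lemma exists_blk (q a i j : ℕ) (hij : i + j = q) (l : List (Fin q)) (hl : l.length = q * a) :
    ∃ S : Finset (Fin q), ∃ u : List (Fin q), u.Sublist l ∧ u.Sublist (blk S (i * a)) ∧
      u.length = i * a ∧ (blk S (i * a)).length = i * a * i := by
  obtain ⟨S, hS, hc⟩ := exists_popular q a l hl j i hij
  have hlen : ((l.filter (fun x => decide (x ∈ S))).take (i * a)).length = i * a := by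
    rw [List.length_take]; omega
  refine ⟨S, (l.filter (fun x => decide (x ∈ S))).take (i * a),
    (List.take_sublist _ _).trans List.filter_sublist, ?_, hlen, ?_⟩
  · have := sublist_blocks S.toList ((l.filter (fun x => decide (x ∈ S))).take (i * a)) (by
      intro x hx
      have := List.mem_of_mem_take hx
      simp at this
      simpa using this.2)
    rwa [hlen] at this
  · simp [blk, hS]

lemma card_bound (q : ℕ) (hq : 2 ≤ q) (γ δ : ℝ) (hγ : 0 ≤ γ) (hδ : 0 ≤ δ)
    (h : ∀ z : ℕ, 1 ≤ z → z ≤ q - 1 →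
      ((2 * (q : ℝ) - 1) * z - (z : ℝ) ^ 2) / q ≤ γ + 2 * z * δ) (L n : ℕ)
    (C : Finset (List (Fin q))) (hC : ∀ x ∈ C, x.length = n)
    (hL : listDecodable C ⌈δ * n⌉₊ ⌈γ * n⌉₊ (L : ℝ)) :
    C.card ≤ L * (q ^ q * (2 ^ q * 2 ^ q)) := by
  classical
  obtain ⟨i, j, a, b, hij, hab, hD, hI⟩ := params q hq γ δ hγ hδ h n (n / q) (Nat.mul_div_le n q)
  let center : (Fin (n % q) → Fin q) × (Finset (Fin q) × Finset (Fin q)) → List (Fin q) :=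
    fun p => List.ofFn p.1 ++ (blk p.2.1 (i * a) ++ blk p.2.2 ((i + 1) * b))
  have hn : n = n % q + (q * a + q * b) := by
    rw [← mul_add, hab]; exact (Nat.mod_add_div n q).symm
  have hex : ∀ x ∈ C, ∃ p, ∃ u : List (Fin q), u.Sublist x ∧ u.Sublist (center p) ∧
        x.length - u.length ≤ ⌈δ * n⌉₊ ∧ (center p).length - u.length ≤ ⌈γ * n⌉₊ := by
    intro x hx
    have hxn := hC x hx
    obtain ⟨w, hw⟩ : ∃ w, w = x.take (n % q) := ⟨_, rfl⟩
    obtain ⟨l1, hl1⟩ : ∃ w, w = (x.drop (n % q)).take (q * a) := ⟨_, rfl⟩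
    obtain ⟨l2, hl2⟩ : ∃ w, w = (x.drop (n % q)).drop (q * a) := ⟨_, rfl⟩
    have hx3 : x = w ++ (l1 ++ l2) := by
      rw [hw, hl1, hl2, List.take_append_drop, List.take_append_drop]
    have hwl : w.length = n % q := by rw [hw, List.length_take]; omega
    have hl1l : l1.length = q * a := by
      rw [hl1, List.length_take, List.length_drop]; omega
    have hl2l : l2.length = q * b := by
      rw [hl2, List.length_drop, List.length_drop]; omega
    obtain ⟨S, u, hu1, hu2, hu3, hu4⟩ := exists_blk q a i (j + 1) (by omega) l1 hl1l
    obtain ⟨T, v, hv1, hv2, hv3, hv4⟩ := exists_blk q b (i + 1) j (by omega) l2 hl2l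
    have hof : List.ofFn (fun k : Fin (n % q) => w.get (k.cast hwl.symm)) = w := by
      apply List.ext_get
      · simp [hwl]
      · intro k h1 h2; simp
    refine ⟨(fun k => w.get (k.cast hwl.symm), S, T), w ++ (u ++ v), ?_, ?_, ?_, ?_⟩
    · rw [hx3]; exact (List.Sublist.refl w).append (hu1.append hv1)
    · simp only [center, hof]; exact (List.Sublist.refl w).append (hu2.append hv2)
    · rw [hxn]
      simp only [List.length_append, hwl, hu3, hv3]
      have e1 : q * a + q * b = i * a + (i + 1) * b + (a + (a + b) * j) := by
        rw [← hij]; ring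
      rw [hab] at e1
      omega
    · simp only [center, hof, List.length_append, hwl, hu3, hv3, hu4, hv4]
      have e1 : i * a * i + (i + 1) * b * (i + 1) = a * (i * i) + b * ((i + 1) * (i + 1)) := by
        ring
      have e2 : a * i + b * (i + 1) = i * a + (i + 1) * b := by ring
      omega
  haveI : Nonempty (Fin q) := ⟨⟨0, by omega⟩⟩
  choose! f hf using hex
  have hfib : ∀ p ∈ C.image f, (C.filter fun x => f x = p).card ≤ L := by
    intro p _
    have h1 := hL (center p)
    have h2 : Set.ncard ({x | x ∈ C ∧ ∃ u : List (Fin q), u.Sublist x ∧ u.Sublist (center p) ∧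
        x.length - u.length ≤ ⌈δ * n⌉₊ ∧ (center p).length - u.length ≤ ⌈γ * n⌉₊}) ≤ L := by
      exact_mod_cast h1
    refine le_trans ?_ h2
    rw [← Set.ncard_coe_finset]
    apply Set.ncard_le_ncard
    · intro x hx
      simp only [Finset.coe_filter, Set.mem_setOf_eq] at hx
      exact ⟨hx.1, hx.2 ▸ hf x hx.1⟩
    · exact C.finite_toSet.subset fun x hx => hx.1
  have h1 := Finset.card_le_mul_card_image C L hfib
  refine h1.trans (Nat.mul_le_mul_left _ ?_)
  refine (Finset.card_le_univ _).trans ?_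
  simp only [Fintype.card_prod, Fintype.card_finset, Fintype.card_fin, Fintype.card_fun]
  gcongr
  · omega
  · exact (Nat.mod_lt _ (by omega)).le

theorem stmt4 (q : ℕ) (hq : 2 ≤ q) (γ δ : ℝ) (hγ : 0 ≤ γ) (hδ : 0 ≤ δ)
    (h : ∀ z : ℕ, 1 ≤ z → z ≤ q - 1 →
      ((2 * (q : ℝ) - 1) * z - (z : ℝ) ^ 2) / q ≤ γ + 2 * z * δ) :
    ∀ L : ℕ, 1 ≤ L → ∀ R : ℝ, 0 < R → ∃ n₀ : ℕ, ∀ n : ℕ, n₀ ≤ n →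
      ∀ C : Finset (List (Fin q)), (∀ x ∈ C, x.length = n) →
        listDecodable C ⌈δ * n⌉₊ ⌈γ * n⌉₊ (L : ℝ) →
        (C.card : ℝ) < (2 : ℝ) ^ (R * n) := by
  intro L _ R hR
  obtain ⟨n₀, hn₀⟩ := pow_unbounded_of_one_lt ((L * (q ^ q * (2 ^ q * 2 ^ q)) : ℕ) : ℝ)
    (Real.one_lt_rpow one_lt_two hR)
  refine ⟨n₀, fun n hn C hC hL => ?_⟩
  have h1 : (C.card : ℝ) ≤ ((L * (q ^ q * (2 ^ q * 2 ^ q)) : ℕ) : ℝ) := by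
    exact_mod_cast card_bound q hq γ δ hγ hδ h L n C hC hL
  refine h1.trans_lt (hn₀.trans_le ?_)
  rw [Real.rpow_mul zero_le_two, Real.rpow_natCast]
  exact pow_le_pow_right₀ (Real.one_lt_rpow one_lt_two hR).le hn
end
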